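/- Let U be a connected open set in ℂ^m and suppose F_1 : B^m(0,r_1) → U and F_2 : B^m(0,r_2) → U are injective holomorphic maps with F_1(B^m(0,r_1)) ∩ F_2(B^m(0,r_2)) = ∅. Let 0 < s < 1. Then there exists an injective holomorphic map F_0 : B^m(0,1) → U such that F_0(B^m(0,1)) ⊇ F_1(B^m(0, s·r_1)) ∪ F_2(B^m(0, s·r_2/32)). -/

import Mathlib

open Metric

/-!
The image of `F₁` is deformed inside `U`, keeping a prescribed compact part of it covered, until it
comes close to the image of `F₂`, and then the two balls are glued.

*Gluing.* Let `F`, `G` be injective and holomorphic near the closed unit ball, with disjoint images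
of it, and let `[p, q]` be a shortest segment between these images, contained in an open set `W`
with both images. Then a single injective holomorphic ball in `W` covers the `F`- and `G`-images of
any smaller ball (`glue_of_dist`). Since `[p, q]` is shortest, `p` and `q` come from unit vectors and
`q - p` points out of the two balls (`contact`). After unitary changes of variables the balls are
`B(-e, 1)` and `B(e, 1)`, touching at the origin, with maps `FL`, `FR`. Replace these by entire
approximants `EL j`, `ER j` (partial sums of the homogeneous expansion, `exists_entire_approx`), and
interpolate: `glue = (1 - χ) EL + χ ER`, where `χ z = 1 / (1 + exp (-N ⟪e, z⟫))` is the complex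
logistic function. For `N` large this is close to `FL` on the left half-space and to `FR` on the
right one, and it maps the real line through the contact point close to `[p, q]`. Its differential
on that line is `(1 - t) A + t B + N t (1 - t) ⟪e, ·⟫ d` up to small errors, with `A = dFL(0)`,
`B = dFR(0)`, `d = q - p`. It is injective, uniformly in `t` and `N`, as soon as `B` is precomposed
with a generic rotation fixing `e` (`exists_rotation_transverse`); the outward direction of `d` takes
care of the ends. Hence the interpolated map is injective near the compact set `core e ρ`, which
consists of the closed balls of radius `ρ < 1` about `± e` and of the segment joining them
(`glue_balls`). Finally the unit ball embeds holomorphically in any neighbourhood of `core e ρ`,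
almost filling both balls, through an explicit dumbbell map (`exists_dumbbell`): in the direction
`e` it is a logarithm with small coefficient plus the sum of two automorphisms of the ball moving
the origin towards `± e`.

Two facts from several complex variables enter. Injective holomorphic maps in equal dimensions are
local biholomorphisms (Osgood, `fderiv_injective`); the proof is by induction on the dimension,
slicing by a coordinate of the map where the differential is nonzero. And injective maps close to
`F` on a ball cover the image of any smaller ball (`eventually_cover`).

*Connectedness.* Let `C = F₂(B̄(t))`, `V = U \ C`, and `K` the compact part of the image of `F₁` to be
covered. The set `Reach V K` of points lying together with `K` in a single holomorphic ball in `V`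
is open, and it is relatively closed in `V`, because a ball coming close to `x ∈ V` can be glued to a
tiny round ball about `x` (`closure_reach_inter`). If its closure missed `C` it would be all of the
connected set `U`, which is absurd as it misses `C`. So some ball in `V` containing `K` comes
arbitrarily close to `C`, and one more gluing, inside `U`, completes the proof (`main`).
-/

namespace BallGlue
open Set Filter Topology MeasureTheory
open scoped Real

/-! ### Cauchy estimates and smoothness of holomorphic maps in several variables -/

section Holo
variable {E F : Type*} [NormedAddCommGroup E] [NormedSpace ℂ E]
  [NormedAddCommGroup F] [NormedSpace ℂ F]

theorem norm_fderiv_le_of_bound {f : E → F} {c : E} {R M : ℝ} (hR : 0 < R)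
    (hf : DifferentiableOn ℂ f (ball c R)) (hM : ∀ z ∈ ball c R, ‖f z‖ ≤ M) :
    ‖fderiv ℂ f c‖ ≤ 2 * M / R := by
  refine Complex.norm_fderiv_le_div_of_mapsTo_ball hf (fun z hz => ?_) hR
  rw [mem_closedBall, dist_eq_norm]
  have h1 := hM z hz
  have h2 := hM c (mem_ball_self hR)
  linarith [norm_sub_le (f z) (f c)]

/-- The derivative of a bounded holomorphic map is Lipschitz at the centre of a ball, by two
applications of the Cauchy estimate. -/
theorem norm_fderiv_sub_le {f : E → F} {c z : E} {R M : ℝ} (hR : 0 < R)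
    (hf : DifferentiableOn ℂ f (ball c R)) (hM : ∀ z ∈ ball c R, ‖f z‖ ≤ M)
    (hz : z ∈ ball c (R / 4)) :
    ‖fderiv ℂ f z - fderiv ℂ f c‖ ≤ 32 * M / R ^ 2 * ‖z - c‖ := by
  have hz' : ‖z - c‖ < R / 4 := by simpa [dist_eq_norm] using hz
  have hlip : ∀ x ∈ ball c (R / 2), ‖fderiv ℂ f x‖ ≤ 4 * M / R := by
    intro x hx
    have hsub : ball x (R / 2) ⊆ ball c R := by
      refine ball_subset_ball' ?_
      rw [mem_ball] at hx; linarith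
    have := norm_fderiv_le_of_bound (half_pos hR) (hf.mono hsub) (fun z hz => hM z (hsub hz))
    refine this.trans (le_of_eq ?_)
    field_simp; ring
  have hd : ∀ x ∈ ball c R, DifferentiableAt ℂ f x := fun x hx =>
    hf.differentiableAt (isOpen_ball.mem_nhds hx)
  have hdiff : ∀ ζ ∈ ball c (R / 4), ‖f (ζ + (z - c)) - f ζ‖ ≤ 4 * M / R * ‖z - c‖ := by
    intro ζ hζ
    have hζ' : ‖ζ - c‖ < R / 4 := by simpa [dist_eq_norm] using hζ
    have := (convex_ball c (R / 2)).norm_image_sub_le_of_norm_fderiv_le (𝕜 := ℂ)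
      (f := f) (C := 4 * M / R) (x := ζ) (y := ζ + (z - c))
      (fun x hx => hd x (ball_subset_ball (by linarith) hx)) hlip
      (by rw [mem_ball, dist_eq_norm]; linarith)
      (by
        rw [mem_ball, dist_eq_norm]
        have : ζ + (z - c) - c = (ζ - c) + (z - c) := by abel
        rw [this]
        linarith [norm_add_le (ζ - c) (z - c)])
    simpa using this
  have hmem : ∀ ζ ∈ ball c (R / 4), ζ + (z - c) ∈ ball c R := by
    intro ζ hζ
    have hζ' : ‖ζ - c‖ < R / 4 := by simpa [dist_eq_norm] using hζ
    rw [mem_ball, dist_eq_norm]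
    have : ζ + (z - c) - c = (ζ - c) + (z - c) := by abel
    rw [this]
    linarith [norm_add_le (ζ - c) (z - c)]
  have hdg : DifferentiableOn ℂ (fun ζ => f (ζ + (z - c)) - f ζ) (ball c (R / 4)) := by
    refine DifferentiableOn.sub ?_ (hf.mono (ball_subset_ball (by linarith)))
    exact hf.comp (by fun_prop) hmem
  have key := norm_fderiv_le_of_bound (by positivity) hdg hdiff
  have hc : c ∈ ball c (R / 4) := mem_ball_self (by positivity)
  have e : fderiv ℂ (fun ζ => f (ζ + (z - c)) - f ζ) c = fderiv ℂ f z - fderiv ℂ f c := by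
    rw [fderiv_fun_sub]
    · rw [fderiv_comp_add_right]; simp
    · have h1 := hd _ (hmem c hc)
      exact DifferentiableAt.comp (f := fun ζ => ζ + (z - c)) c h1 (by fun_prop)
    · exact hd c (mem_ball_self hR)
  rw [e] at key
  refine key.trans (le_of_eq ?_)
  field_simp; ring

theorem continuousOn_fderiv {f : E → F} {Ω : Set E} (hΩ : IsOpen Ω)
    (hf : DifferentiableOn ℂ f Ω) : ContinuousOn (fderiv ℂ f) Ω := by
  intro c hc
  refine ContinuousAt.continuousWithinAt ?_
  have h1 : ∀ᶠ z in 𝓝 c, ‖f z‖ < ‖f c‖ + 1 :=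
    (hf.differentiableAt (hΩ.mem_nhds hc)).continuousAt.norm.eventually_lt_const (by linarith)
  obtain ⟨R, hR, hb⟩ := Metric.eventually_nhds_iff_ball.1 (h1.and (hΩ.mem_nhds hc))
  refine tendsto_iff_norm_sub_tendsto_zero.2 ?_
  refine squeeze_zero' (Eventually.of_forall fun _ => norm_nonneg _)
    (g := fun z => 32 * (‖f c‖ + 1) / R ^ 2 * ‖z - c‖) ?_ ?_
  · filter_upwards [ball_mem_nhds c (show 0 < R / 4 by positivity)] with z hz
    exact norm_fderiv_sub_le hR (hf.mono fun z hz => (hb z hz).2) (fun z hz => (hb z hz).1.le) hz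
  · have : Continuous fun z => 32 * (‖f c‖ + 1) / R ^ 2 * ‖z - c‖ := by fun_prop
    simpa using this.tendsto c

theorem contDiffOn_one {f : E → F} {Ω : Set E} (hΩ : IsOpen Ω)
    (hf : DifferentiableOn ℂ f Ω) : ContDiffOn ℂ 1 f Ω := by
  have := (contDiffOn_succ_iff_fderiv_of_isOpen (𝕜 := ℂ) (n := 0) (f := f) hΩ).2
    ⟨hf, by simp, contDiffOn_zero.2 (continuousOn_fderiv hΩ hf)⟩
  simpa using this

theorem contDiffAt_one {f : E → F} {Ω : Set E} (hΩ : IsOpen Ω)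
    (hf : DifferentiableOn ℂ f Ω) {z : E} (hz : z ∈ Ω) : ContDiffAt ℂ 1 f z :=
  (contDiffOn_one hΩ hf).contDiffAt (hΩ.mem_nhds hz)

/-- Differentiation under the integral sign: averages of a holomorphic map over a compact family
of affine reparametrizations are holomorphic. -/
theorem differentiableAt_paramIntegral [CompleteSpace F] {f : E → F} {Ω : Set E} (hΩ : IsOpen Ω)
    (hf : DifferentiableOn ℂ f Ω) {k α : ℝ → ℂ} {β : ℝ → E} (hk : Continuous k)
    (hα : Continuous α) (hβ : Continuous β) {a b : ℝ} {z₀ : E} (h : ∀ θ, α θ • z₀ + β θ ∈ Ω) :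
    DifferentiableAt ℂ (fun z => ∫ θ in a..b, k θ • f (α θ • z + β θ)) z₀ := by
  have hfd := continuousOn_fderiv hΩ hf
  have hcont0 : Continuous fun θ => fderiv ℂ f (α θ • z₀ + β θ) := by
    rw [← continuousOn_univ]
    exact hfd.comp (by fun_prop) (fun θ _ => h θ)
  obtain ⟨C, hC⟩ := isCompact_uIcc (a := a) (b := b) |>.exists_bound_of_continuousOn
    hcont0.continuousOn
  have hev : ∀ᶠ z in 𝓝 z₀, ∀ θ ∈ uIcc a b, α θ • z + β θ ∈ Ω ∧
      ‖fderiv ℂ f (α θ • z + β θ)‖ < C + 1 := by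
    refine isCompact_uIcc.eventually_forall_of_forall_eventually fun θ hθ => ?_
    have hc : Continuous fun p : E × ℝ => α p.2 • p.1 + β p.2 := by fun_prop
    have hΩ' := hΩ.mem_nhds (h θ)
    refine ((hc.tendsto (z₀, θ)).eventually hΩ').and ?_
    have h2 : ContinuousAt (fun p : E × ℝ => ‖fderiv ℂ f (α p.2 • p.1 + β p.2)‖) (z₀, θ) := by
      refine ContinuousAt.norm ?_
      exact ContinuousAt.comp (f := fun p : E × ℝ => α p.2 • p.1 + β p.2)
        (hfd.continuousAt hΩ') hc.continuousAt
    exact h2.eventually_lt_const (lt_of_le_of_lt (hC θ hθ) (by linarith))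
  obtain ⟨K, hK⟩ := isCompact_uIcc (a := a) (b := b) |>.exists_bound_of_continuousOn
    (hk.mul hα).continuousOn
  have hsub : uIoc a b ⊆ uIcc a b := uIoc_subset_uIcc
  have hmeas : ∀ z, (∀ θ ∈ uIcc a b, α θ • z + β θ ∈ Ω) →
      IntervalIntegrable (fun θ => k θ • f (α θ • z + β θ)) volume a b := by
    intro z hz
    refine ContinuousOn.intervalIntegrable ?_
    exact hk.continuousOn.smul (hf.continuousOn.comp (by fun_prop) hz)
  refine (intervalIntegral.hasFDerivAt_integral_of_dominated_of_fderiv_le (𝕜 := ℂ)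
    (s := {z | ∀ θ ∈ uIcc a b, α θ • z + β θ ∈ Ω ∧ ‖fderiv ℂ f (α θ • z + β θ)‖ < C + 1})
    (F' := fun z θ => (k θ * α θ) • fderiv ℂ f (α θ • z + β θ))
    (bound := fun _ => K * (C + 1)) hev ?_ ?_ ?_ ?_ ?_ ?_).differentiableAt
  · filter_upwards [hev] with z hz
    exact (intervalIntegrable_iff.1 (hmeas z fun θ hθ => (hz θ hθ).1)).aestronglyMeasurable
  · exact hmeas z₀ fun θ _ => h θ
  · exact (intervalIntegrable_iff.1
      ((hk.mul hα).smul hcont0).continuousOn.intervalIntegrable).aestronglyMeasurable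
  · refine Eventually.of_forall fun θ hθ z hz => ?_
    rw [norm_smul]
    have h1 := hK θ (hsub hθ)
    have h2 := (hz θ (hsub hθ)).2
    have h3 : 0 ≤ K := (norm_nonneg _).trans h1
    exact mul_le_mul h1 h2.le (norm_nonneg _) h3
  · exact intervalIntegrable_const
  · refine Eventually.of_forall fun θ hθ z hz => ?_
    have h1 := (hf.differentiableAt (hΩ.mem_nhds (hz θ (hsub hθ)).1)).hasFDerivAt
    have h2 : HasFDerivAt (fun z : E => α θ • z + β θ) (α θ • ContinuousLinearMap.id ℂ E) z :=
      ((hasFDerivAt_id z).const_smul (α θ)).add_const _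
    refine ((h1.comp z h2).const_smul (k θ)).congr_fderiv ?_
    ext v; simp [mul_smul]

theorem differentiableAt_circleIntegral [CompleteSpace F] {f : E → F} {Ω : Set E} (hΩ : IsOpen Ω)
    (hf : DifferentiableOn ℂ f Ω) {k α : ℂ → ℂ} {β : ℂ → E} {r : ℝ}
    (hk : ContinuousOn k (sphere 0 r))
    (hr : 0 ≤ r)
    (hα : Continuous α) (hβ : Continuous β) {z₀ : E}
    (h : ∀ ζ ∈ sphere (0 : ℂ) r, α ζ • z₀ + β ζ ∈ Ω) :
    DifferentiableAt ℂ (fun z => ∮ ζ in C(0, r), k ζ • f (α ζ • z + β ζ)) z₀ := by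
  have hc := continuous_circleMap 0 r
  have hm : ∀ θ, circleMap 0 r θ ∈ sphere (0 : ℂ) r := circleMap_mem_sphere 0 hr
  have := differentiableAt_paramIntegral hΩ hf (a := 0) (b := 2 * π) (z₀ := z₀)
    (k := fun θ => deriv (circleMap 0 r) θ * k (circleMap 0 r θ))
    (α := fun θ => α (circleMap 0 r θ)) (β := fun θ => β (circleMap 0 r θ))
    (by
      refine Continuous.mul ?_ (hk.comp_continuous hc hm)
      rw [show deriv (circleMap 0 r) = fun θ => circleMap 0 r θ * Complex.I from
        funext fun θ => by simp [deriv_circleMap]]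
      fun_prop) (by fun_prop) (by fun_prop) (fun θ => h _ (hm θ))
  simpa only [circleIntegral, mul_smul] using this

theorem differentiableOn_fderiv_apply [CompleteSpace F] {f : E → F} {Ω : Set E} (hΩ : IsOpen Ω)
    (hf : DifferentiableOn ℂ f Ω) (v : E) : DifferentiableOn ℂ (fun z => fderiv ℂ f z v) Ω := by
  intro z₀ hz₀
  refine DifferentiableAt.differentiableWithinAt ?_
  have hc : Continuous fun p : E × ℂ => p.1 + p.2 • v := by fun_prop
  have hev : ∀ᶠ p in 𝓝 (z₀, (0 : ℂ)), p.1 + p.2 • v ∈ Ω :=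
    (hc.tendsto (z₀, 0)).eventually (hΩ.mem_nhds (by simpa using hz₀))
  rw [nhds_prod_eq] at hev
  obtain ⟨P, hP, Q, hQ, hPQ⟩ := eventually_prod_iff.1 hev
  obtain ⟨ε, hε, hQ'⟩ := Metric.eventually_nhds_iff_ball.1 hQ
  set r := ε / 2 with hr
  have hr0 : 0 < r := by positivity
  have hcb : closedBall (0 : ℂ) r ⊆ ball 0 ε := closedBall_subset_ball (by linarith)
  have main : DifferentiableAt ℂ (fun z => (2 * π * Complex.I : ℂ)⁻¹ • ∮ ζ in C(0, r),
      ((ζ - 0) ^ 2)⁻¹ • f ((1 : ℂ) • z + ζ • v)) z₀ := by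
    refine DifferentiableAt.const_smul ?_ _
    refine differentiableAt_circleIntegral hΩ hf (k := fun ζ => ((ζ - 0) ^ 2)⁻¹)
      (α := fun _ => 1) (β := fun ζ => ζ • v) ?_ hr0.le (by fun_prop) (by fun_prop) ?_
    · refine ContinuousOn.inv₀ (by fun_prop) fun x hx => ?_
      have : x ≠ 0 := by rintro rfl; simp at hx; linarith
      simpa using this
    · intro ζ hζ
      rw [one_smul]
      exact hPQ hP.self_of_nhds (hQ' _ (hcb (sphere_subset_closedBall hζ)))
  refine main.congr_of_eventuallyEq ?_
  filter_upwards [hP] with z hz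
  have hd : ∀ ζ ∈ ball (0 : ℂ) ε, HasFDerivAt f (fderiv ℂ f (z + ζ • v)) (z + ζ • v) := fun ζ hζ =>
    (hf.differentiableAt (hΩ.mem_nhds (hPQ hz (hQ' ζ hζ)))).hasFDerivAt
  have hl : ∀ ζ : ℂ, HasDerivAt (fun ζ : ℂ => z + ζ • v) v ζ := fun ζ => by
    simpa using ((hasDerivAt_id ζ).smul_const v).const_add z
  have hg : DifferentiableOn ℂ (fun ζ : ℂ => f (z + ζ • v)) (ball 0 ε) := fun ζ hζ =>
    ((hd ζ hζ).comp_hasDerivAt ζ (hl ζ)).differentiableAt.differentiableWithinAt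
  have := Complex.two_pi_I_inv_smul_circleIntegral_sub_sq_inv_smul_of_differentiable isOpen_ball
    hcb hg (mem_ball_self hr0)
  simp only [one_smul]
  rw [this]
  have h0 := (hd 0 (mem_ball_self hε)).comp_hasDerivAt 0 (hl 0)
  rw [zero_smul, add_zero] at h0
  exact h0.deriv.symm

end Holo

/-! ### Approximation by entire maps -/

section Approx
variable {E F : Type*} [NormedAddCommGroup E] [NormedSpace ℂ E] [FiniteDimensional ℂ E]
  [NormedAddCommGroup F] [NormedSpace ℂ F] [CompleteSpace F]

theorem contDiffOn_nat {f : E → F} {Ω : Set E} (hΩ : IsOpen Ω)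
    (hf : DifferentiableOn ℂ f Ω) (n : ℕ) : ContDiffOn ℂ n f Ω := by
  induction n generalizing f with
  | zero => simpa using hf.continuousOn
  | succ n ih =>
    have := (contDiffOn_succ_iff_fderiv_of_isOpen (𝕜 := ℂ) (n := n) (f := f) hΩ).2
      ⟨hf, fun h => by simp at h, contDiffOn_clm_apply.2
        fun v => ih (differentiableOn_fderiv_apply hΩ hf v)⟩
    exact_mod_cast this

/-- The homogeneous component of degree `k` in the Taylor expansion of `f` at the origin. -/
noncomputable def taylorTerm (f : E → F) (k : ℕ) (z : E) : F :=
  ((k.factorial : ℂ)⁻¹) • iteratedFDeriv ℂ k f 0 (fun _ => z)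

theorem differentiable_taylorTerm (f : E → F) (k : ℕ) : Differentiable ℂ (taylorTerm f k) := by
  unfold taylorTerm
  refine Differentiable.const_smul ?_ _
  have h1 : Differentiable ℂ (fun m : Fin k → E => iteratedFDeriv ℂ k f 0 m) := fun m =>
    ((iteratedFDeriv ℂ k f 0).hasFDerivAt m).differentiableAt
  exact h1.comp (f := fun (z : E) (_ : Fin k) => z) (by fun_prop)

theorem iteratedDeriv_ray {f : E → F} {R : ℝ} (hR : 0 < R)
    (hf : DifferentiableOn ℂ f (ball 0 R)) (k : ℕ) (z : E) :
    iteratedDeriv k (fun ζ : ℂ => f (ζ • z)) 0 = iteratedFDeriv ℂ k f 0 (fun _ => z) := by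
  set g : ℂ →L[ℂ] E := ContinuousLinearMap.toSpanSingleton ℂ z with hg
  have hpre : IsOpen (g ⁻¹' ball 0 R) := isOpen_ball.preimage g.continuous
  have h0 : g 0 ∈ ball (0 : E) R := by simpa using hR
  have := g.iteratedFDerivWithin_comp_right (contDiffOn_nat isOpen_ball hf k)
    isOpen_ball.uniqueDiffOn hpre.uniqueDiffOn h0 le_rfl
  rw [iteratedFDerivWithin_of_isOpen k hpre h0, iteratedFDerivWithin_of_isOpen k isOpen_ball h0]
    at this
  rw [iteratedDeriv_eq_iteratedFDeriv]
  have h2 : (fun ζ : ℂ => f (ζ • z)) = f ∘ g := by ext ζ; simp [hg]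
  rw [h2, this]
  simp [hg]

/-- A holomorphic map on a ball is, locally uniformly, a limit of entire maps: the partial sums
of its expansion into homogeneous polynomials. -/
theorem exists_entire_approx {f : E → F} {R : ℝ} (hR : 0 < R)
    (hf : DifferentiableOn ℂ f (ball 0 R)) :
    ∃ P : ℕ → E → F, (∀ n, Differentiable ℂ (P n)) ∧
      ∀ r < R, TendstoUniformlyOn P f atTop (closedBall 0 r) := by
  refine ⟨fun n z => ∑ k ∈ Finset.range n, taylorTerm f k z, fun n => ?_, fun r₀ hr₀ => ?_⟩
  · exact Differentiable.fun_sum fun k _ => differentiable_taylorTerm f k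
  obtain ⟨r, hr, hrR⟩ := exists_between (max_lt hr₀ hR)
  obtain ⟨r', hr', hr'R⟩ := exists_between hrR
  have hrpos : 0 < r := lt_of_le_of_lt (le_max_right _ _) hr
  have hr0r : r₀ < r := lt_of_le_of_lt (le_max_left _ _) hr
  have : ProperSpace E := FiniteDimensional.proper ℂ E
  obtain ⟨M, hM⟩ := (isCompact_closedBall (0 : E) r').exists_bound_of_continuousOn
    (hf.continuousOn.mono (closedBall_subset_ball hr'R))
  set q := r' / r with hq
  have hq1 : 1 < q := by rw [hq, one_lt_div hrpos]; exact hr'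
  have hmem : ∀ z ∈ closedBall (0 : E) r, ∀ ζ ∈ closedBall (0 : ℂ) q, ζ • z ∈ closedBall (0 : E) r' := by
    intro z hz ζ hζ
    simp only [mem_closedBall, dist_zero_right] at *
    rw [norm_smul]
    calc ‖ζ‖ * ‖z‖ ≤ q * r := mul_le_mul hζ hz (norm_nonneg _) (by linarith)
      _ = r' := by rw [hq]; field_simp
  have hdiff : ∀ z ∈ closedBall (0 : E) r,
      DifferentiableOn ℂ (fun ζ : ℂ => f (ζ • z)) (closedBall 0 q) := by
    intro z hz
    exact hf.comp (by fun_prop) fun ζ hζ => closedBall_subset_ball hr'R (hmem z hz ζ hζ)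
  have hterm : ∀ k, ∀ z ∈ closedBall (0 : E) r, ‖taylorTerm f k z‖ ≤ M * q⁻¹ ^ k := by
    intro k z hz
    have hcl : DiffContOnCl ℂ (fun ζ : ℂ => f (ζ • z)) (ball 0 q) :=
      ((hdiff z hz).diffContOnCl_ball (le_refl _))
    have := Complex.norm_iteratedDeriv_le_of_forall_mem_sphere_norm_le k (by linarith) hcl
      (C := M) (fun ζ hζ => hM _ (hmem z hz ζ (sphere_subset_closedBall hζ)))
    rw [iteratedDeriv_ray hR hf] at this
    rw [taylorTerm, norm_smul, norm_inv, Complex.norm_natCast]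
    have hk : (0 : ℝ) < k.factorial := by exact_mod_cast k.factorial_pos
    rw [inv_mul_le_iff₀ hk]
    refine this.trans (le_of_eq ?_)
    rw [inv_pow]; field_simp
  have hsum : ∀ z ∈ closedBall (0 : E) r, ∑' k, taylorTerm f k z = f z := by
    intro z hz
    have := Complex.taylorSeries_eq_on_ball ((hdiff z hz).mono ball_subset_closedBall)
      (z := 1) (by simpa using hq1)
    simp only [sub_zero, one_pow, one_smul, iteratedDeriv_ray hR hf] at this
    exact this
  have hu : Summable fun k : ℕ => M * q⁻¹ ^ k :=
    (summable_geometric_of_lt_one (by positivity) (inv_lt_one_of_one_lt₀ hq1)).mul_left M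
  exact ((tendstoUniformlyOn_tsum_nat hu fun k z hz => hterm k z hz).congr_right hsum).mono
    (closedBall_subset_closedBall hr0r.le)

end Approx

/-! ### Critical points in one variable and straightening -/

/-- An injective holomorphic function of one variable has nonvanishing derivative: near a critical
point it is the `k`-th power of a local coordinate with `k ≥ 2`, up to an additive constant. -/
theorem deriv_ne_zero_of_injOn {f : ℂ → ℂ} {a : ℂ} {U : Set ℂ} (hU : U ∈ 𝓝 a)
    (hf : DifferentiableOn ℂ f U) (hinj : InjOn f U) : deriv f a ≠ 0 := by
  intro h0
  have hfa : AnalyticAt ℂ f a := hf.analyticAt hU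
  have hga : AnalyticAt ℂ (fun z => f z - f a) a := hfa.sub analyticAt_const
  have hne : analyticOrderAt (fun z => f z - f a) a ≠ ⊤ := by
    intro htop
    rw [analyticOrderAt_eq_top] at htop
    have h2 : ∀ᶠ z in 𝓝 a, z = a := by
      filter_upwards [htop, hU] with z hz hzU
      exact hinj hzU (mem_of_mem_nhds hU) (sub_eq_zero.1 hz)
    have h3 : ({a} : Set ℂ) ∈ 𝓝 a := by filter_upwards [h2] with z hz using hz
    exact not_isOpen_singleton a (by
      rw [isOpen_iff_mem_nhds]; intro x hx; rw [mem_singleton_iff] at hx; subst hx; exact h3)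
  obtain ⟨g, hg, hg0, hfg⟩ := (hga.analyticOrderAt_ne_top).1 hne
  set k := analyticOrderNatAt (fun z => f z - f a) a with hk
  simp only [smul_eq_mul] at hfg
  have hk0 : k ≠ 0 := by
    intro hk0
    have := hfg.self_of_nhds
    simp [hk0] at this
    exact hg0 this.symm
  have hk1 : k ≠ 1 := by
    intro hk1
    rw [hk1] at hfg
    have h1 : HasDerivAt (fun z => (z - a) ^ 1 * g z) (g a) a := by
      have := ((hasDerivAt_id a).sub_const a).fun_mul hg.differentiableAt.hasDerivAt
      simpa using this
    have h2 : HasDerivAt (fun z => f z - f a) (deriv f a) a :=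
      hfa.differentiableAt.hasDerivAt.sub_const _
    have := (h2.congr_of_eventuallyEq hfg.symm).unique h1
    rw [h0] at this
    exact hg0 this.symm
  obtain ⟨c, hc⟩ : ∃ c : ℂ, c ^ k = g a := IsAlgClosed.exists_pow_nat_eq _ (Nat.pos_of_ne_zero hk0)
  have hc0 : c ≠ 0 := by rintro rfl; rw [zero_pow hk0] at hc; exact hg0 hc.symm
  set u : ℂ → ℂ := fun z => c * (g z / g a) ^ ((k : ℂ)⁻¹) with hu
  set s : ℂ → ℂ := fun z => (z - a) * u z with hs
  have hua : AnalyticAt ℂ u a := by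
    refine analyticAt_const.mul (AnalyticAt.cpow (hg.div analyticAt_const hg0) analyticAt_const ?_)
    simp [hg0]
  have hu_a : u a = c := by simp [hu, hg0]
  have hsa : AnalyticAt ℂ s a := (analyticAt_id.sub analyticAt_const).mul hua
  have hs' : HasStrictDerivAt s c a := by
    have : HasDerivAt s c a := by
      have := ((hasDerivAt_id a).sub_const a).fun_mul hua.differentiableAt.hasDerivAt
      simpa [hu_a] using this
    have h4 := hsa.hasStrictDerivAt
    rwa [this.deriv] at h4
  have hsk : ∀ᶠ z in 𝓝 a, f z - f a = s z ^ k := by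
    filter_upwards [hfg] with z hz
    rw [hz, hs]
    simp only [hu]
    rw [mul_pow, mul_pow, hc, ← Complex.cpow_nat_mul, mul_inv_cancel₀ (by exact_mod_cast hk0),
      Complex.cpow_one]
    field_simp
  have hs0 : s a = 0 := by simp [hs]
  have hr := hs'.eventually_right_inverse hc0
  set σ := hs'.localInverse s c a hc0 with hσ
  rw [hs0] at hr
  have hσ0 : σ 0 = a := by
    have := HasStrictFDerivAt.localInverse_apply_image (hs'.hasStrictFDerivAt_equiv hc0)
    rw [hs0] at this; exact this
  have hσc : ContinuousAt σ 0 := by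
    have := (hs'.to_localInverse hc0).hasDerivAt.continuousAt
    rw [hs0] at this; exact this
  have hev : ∀ᶠ y in 𝓝 (0 : ℂ), s (σ y) = y ∧ f (σ y) - f a = y ^ k ∧ σ y ∈ U := by
    have h5 : Tendsto σ (𝓝 0) (𝓝 a) := by have := hσc.tendsto; rwa [hσ0] at this
    filter_upwards [hr, h5.eventually hsk, h5.eventually hU] with y h1 h2 h3
    refine ⟨h1, ?_, h3⟩
    rw [h2, h1]
  obtain ⟨ε, hε, hb⟩ := Metric.eventually_nhds_iff_ball.1 hev
  have hω := Complex.isPrimitiveRoot_exp k hk0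
  set ω := Complex.exp (2 * π * Complex.I / k) with hωd
  have hωn : ‖ω‖ = 1 := hω.norm'_eq_one hk0
  set δ : ℂ := ((ε / 2 : ℝ) : ℂ) with hδ
  have hδn : ‖δ‖ = ε / 2 := by rw [hδ, Complex.norm_real, Real.norm_of_nonneg (by positivity)]
  have hδ0 : δ ≠ 0 := by rw [← norm_pos_iff, hδn]; positivity
  obtain ⟨a1, a2, a3⟩ := hb δ (by simp [hδn]; linarith)
  obtain ⟨b1, b2, b3⟩ := hb (ω * δ) (by simp [hδn, hωn]; linarith)
  have heq : f (σ δ) = f (σ (ω * δ)) := by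
    have : f (σ (ω * δ)) - f a = f (σ δ) - f a := by
      rw [a2, b2, mul_pow, hω.pow_eq_one, one_mul]
    exact (sub_left_injective this).symm
  have := hinj a3 b3 heq
  rw [this, b1] at a1
  have hω1 : ω = 1 := by
    have : (ω - 1) * δ = 0 := by rw [sub_mul, a1, one_mul, sub_self]
    rcases mul_eq_zero.1 this with h | h
    · exact sub_eq_zero.1 h
    · exact absurd h hδ0
  exact hω.ne_one (by omega) hω1

section Straighten
variable {E : Type*} [NormedAddCommGroup E] [NormedSpace ℂ E] [CompleteSpace E]

/-- Where its differential does not vanish, a holomorphic function becomes affine in suitable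
local coordinates `Λ` tangent to the identity. -/
theorem exists_straightening {g : E → ℂ} {Ω : Set E} (hΩ : IsOpen Ω)
    (hg : DifferentiableOn ℂ g Ω) {q : E} (hq : q ∈ Ω) (h : fderiv ℂ g q ≠ 0) :
    ∃ Λ : E → E, ∃ V : Set E, IsOpen V ∧ 0 ∈ V ∧ DifferentiableOn ℂ Λ V ∧ InjOn Λ V ∧
      MapsTo Λ V Ω ∧ Λ 0 = q ∧ HasFDerivAt Λ (ContinuousLinearMap.id ℂ E) 0 ∧
      ∀ x ∈ V, g (Λ x) = g q + fderiv ℂ g q x := by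
  set ℓ := fderiv ℂ g q with hℓ
  obtain ⟨v₀, hv₀⟩ : ∃ v, ℓ v ≠ 0 := by
    by_contra! hcon; exact h (ContinuousLinearMap.ext hcon)
  set v := (ℓ v₀)⁻¹ • v₀ with hv
  have hℓv : ℓ v = 1 := by simp [hv, hv₀]
  set Θ : E → E := fun z => z + (g z - ℓ z) • v with hΘ
  have hΘd : DifferentiableOn ℂ Θ Ω := by
    refine differentiableOn_id.add ((hg.sub ?_).smul_const v)
    exact ℓ.differentiable.differentiableOn
  have hΘc : ContDiffAt ℂ 1 Θ q := contDiffAt_one hΩ hΘd hq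
  have hΘ' : HasFDerivAt Θ ((ContinuousLinearEquiv.refl ℂ E : E ≃L[ℂ] E) : E →L[ℂ] E) q := by
    have h1 : HasFDerivAt g ℓ q := (hg.differentiableAt (hΩ.mem_nhds hq)).hasFDerivAt
    have := (hasFDerivAt_id q).add ((h1.sub ℓ.hasFDerivAt).smul_const v)
    refine this.congr_fderiv ?_
    ext x; simp
  have hn : (1 : WithTop ℕ∞) ≠ 0 := one_ne_zero
  set e := hΘc.toOpenPartialHomeomorph Θ hΘ' hn with he
  have hqs : q ∈ e.source := hΘc.mem_toOpenPartialHomeomorph_source hΘ' hn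
  have heΘ : ∀ x, e x = Θ x := fun x => by
    rw [he, hΘc.toOpenPartialHomeomorph_coe hΘ' hn]
  have hinv : ContDiffAt ℂ 1 e.symm (Θ q) := hΘc.to_localInverse hΘ' hn
  have hΘt : Θ q ∈ e.target := by rw [← heΘ]; exact e.map_source hqs
  have hsq : e.symm (Θ q) = q := by rw [← heΘ]; exact e.left_inv hqs
  have hsd : HasFDerivAt e.symm (ContinuousLinearMap.id ℂ E) (Θ q) := by
    have := e.hasFDerivAt_symm (f' := ContinuousLinearEquiv.refl ℂ E) (a := Θ q) hΘt (by
      rw [hsq]; exact hΘ'.congr_of_eventuallyEq (Eventually.of_forall heΘ))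
    exact this
  have hev : ∀ᶠ y in 𝓝 (Θ q), y ∈ e.target ∧ DifferentiableAt ℂ e.symm y ∧ e.symm y ∈ Ω := by
    refine Filter.Eventually.and (e.open_target.mem_nhds hΘt) (Filter.Eventually.and ?_ ?_)
    · filter_upwards [hinv.eventually (by simp)] with y hy
      exact hy.differentiableAt one_ne_zero
    · exact hsd.continuousAt.eventually (by rw [hsq]; exact hΩ.mem_nhds hq)
  obtain ⟨r, hr, hb⟩ := Metric.eventually_nhds_iff_ball.1 hev
  have hsh : ∀ x ∈ ball (0 : E) r, x + Θ q ∈ ball (Θ q) r := fun x hx => by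
    simpa [dist_eq_norm] using hx
  refine ⟨fun x => e.symm (x + Θ q), ball 0 r, isOpen_ball, mem_ball_self hr, ?_, ?_, ?_, ?_, ?_,
    ?_⟩
  · intro x hx
    refine DifferentiableAt.differentiableWithinAt ?_
    exact DifferentiableAt.comp (f := fun x => x + Θ q) x (hb _ (hsh x hx)).2.1 (by fun_prop)
  · intro x hx y hy hxy
    have := e.symm.injOn (hb _ (hsh x hx)).1 (hb _ (hsh y hy)).1 hxy
    exact add_right_cancel this
  · exact fun x hx => (hb _ (hsh x hx)).2.2
  · simpa using hsq
  · have h2 : HasFDerivAt (fun x : E => x + Θ q) (ContinuousLinearMap.id ℂ E) 0 :=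
      (hasFDerivAt_id (0 : E)).add_const _
    have h1 : HasFDerivAt e.symm (ContinuousLinearMap.id ℂ E) (0 + Θ q) := by rwa [zero_add]
    exact h1.comp (0 : E) h2
  · intro x hx
    have hx' := e.right_inv (hb _ (hsh x hx)).1
    rw [heΘ] at hx'
    have hℓΘ : ∀ z, ℓ (Θ z) = g z := fun z => by simp [hΘ, hℓv]
    have := congrArg ℓ hx'
    rw [hℓΘ, map_add, hℓΘ] at this
    simp only
    rw [this, add_comm]

end Straighten

/-! ### Osgood's theorem: slicing and persistence of singular points -/

/-- Osgood's theorem in dimension `n`: injective holomorphic maps between `n`-dimensional spaces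
have injective differentials. -/
def OsgoodProp.{u, v} (n : ℕ) : Prop :=
  ∀ (E : Type u) (E' : Type v) [NormedAddCommGroup E] [NormedSpace ℂ E] [FiniteDimensional ℂ E]
    [NormedAddCommGroup E'] [NormedSpace ℂ E'] [FiniteDimensional ℂ E'],
    Module.finrank ℂ E = n → Module.finrank ℂ E' = n → ∀ (Ω : Set E) (f : E → E'), IsOpen Ω →
      DifferentiableOn ℂ f Ω → InjOn f Ω → ∀ a ∈ Ω, Function.Injective (fderiv ℂ f a)

universe u v

section Osgood
variable {E : Type u} {E' : Type v} [NormedAddCommGroup E] [NormedSpace ℂ E]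
  [FiniteDimensional ℂ E] [NormedAddCommGroup E'] [NormedSpace ℂ E'] [FiniteDimensional ℂ E']

/-- Slicing: where the differential is nonzero, one coordinate of `f` can be used as a coordinate
of the source, and the fibres of that coordinate have one dimension less. -/
theorem fderiv_injective_of_ne_zero {n : ℕ} (ih : OsgoodProp.{u, v} n)
    (hE : Module.finrank ℂ E = n + 1) (hE' : Module.finrank ℂ E' = n + 1) {Ω : Set E} {f : E → E'}
    (hΩ : IsOpen Ω) (hf : DifferentiableOn ℂ f Ω) (hinj : InjOn f Ω) {a : E} (ha : a ∈ Ω)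
    (h : fderiv ℂ f a ≠ 0) : Function.Injective (fderiv ℂ f a) := by
  have : CompleteSpace E := FiniteDimensional.complete ℂ E
  obtain ⟨w, hw⟩ : ∃ w, fderiv ℂ f a w ≠ 0 := by
    by_contra! hcon; exact h (ContinuousLinearMap.ext hcon)
  obtain ⟨l, hl⟩ := SeparatingDual.exists_ne_zero (R := ℂ) hw
  have hfa := hf.differentiableAt (hΩ.mem_nhds ha)
  have hgd : fderiv ℂ (fun z => l (f z)) a = l.comp (fderiv ℂ f a) :=
    (l.hasFDerivAt.comp a hfa.hasFDerivAt).fderiv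
  have hg0 : fderiv ℂ (fun z => l (f z)) a ≠ 0 := by
    rw [hgd]; intro h0; exact hl (by simpa using DFunLike.congr_fun h0 w)
  obtain ⟨Λ, V, hV, h0V, hΛd, hΛi, hΛm, hΛ0, hΛ', hΛg⟩ := exists_straightening hΩ
    (g := fun z => l (f z)) (l.differentiable.comp_differentiableOn hf) ha hg0
  rw [hgd] at hΛg hg0
  set ℓ := l.comp (fderiv ℂ f a) with hℓ
  have hl0 : l ≠ 0 := by rintro rfl; simp at hl
  obtain ⟨P, hP⟩ : ∃ P : E' →L[ℂ] l.ker, ∀ x : l.ker, P x = x :=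
    Submodule.ClosedComplemented.of_finiteDimensional l.ker
  set H : ℓ.ker → l.ker := fun u => P (f (Λ u) - f a) with hH
  have hVk : IsOpen {u : ℓ.ker | (u : E) ∈ V} := hV.preimage continuous_subtype_val
  have hsub : ∀ u : ℓ.ker, (u : E) ∈ V → f (Λ u) - f a ∈ l.ker := by
    intro u hu
    have h1 := hΛg u hu
    have h2 : ℓ (u : E) = 0 := u.2
    rw [h2, add_zero] at h1
    change l (f (Λ u) - f a) = 0
    rw [map_sub, h1, sub_self]
  have hHd : DifferentiableOn ℂ H {u : ℓ.ker | (u : E) ∈ V} := by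
    refine P.differentiable.comp_differentiableOn (DifferentiableOn.sub_const ?_ _)
    refine hf.comp (hΛd.comp ?_ fun u hu => hu) fun u hu => hΛm hu
    exact ℓ.ker.subtypeL.differentiable.differentiableOn
  have hHi : InjOn H {u : ℓ.ker | (u : E) ∈ V} := by
    intro u hu u' hu' huu
    have e1 := hP ⟨_, hsub u hu⟩
    have e2 := hP ⟨_, hsub u' hu'⟩
    simp only [hH] at huu
    rw [e1, e2] at huu
    have : f (Λ u) = f (Λ u') := by
      have := congrArg Subtype.val huu
      exact sub_left_injective this
    exact Subtype.ext (hΛi hu hu' (hinj (hΛm hu) (hΛm hu') this))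
  have d1 : Module.finrank ℂ ℓ.ker = n := by
    have := Module.Dual.finrank_ker_add_one_of_ne_zero (f := (ℓ : E →ₗ[ℂ] ℂ))
      (by intro h0; exact hg0 (ContinuousLinearMap.coe_inj.1 h0))
    rw [hE] at this
    exact Nat.succ_injective this
  have d2 : Module.finrank ℂ l.ker = n := by
    have := Module.Dual.finrank_ker_add_one_of_ne_zero (f := (l : E' →ₗ[ℂ] ℂ))
      (by intro h0; exact hl0 (ContinuousLinearMap.coe_inj.1 h0))
    rw [hE'] at this
    exact Nat.succ_injective this
  have hHinj := ih ℓ.ker l.ker d1 d2 _ H hVk hHd hHi 0 (by simpa using h0V)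
  have hH' : HasFDerivAt H (P.comp ((fderiv ℂ f a).comp ℓ.ker.subtypeL)) 0 := by
    have e1 : HasFDerivAt f (fderiv ℂ f a) (Λ 0) := by rw [hΛ0]; exact hfa.hasFDerivAt
    have e2 : HasFDerivAt (fun x => f (Λ x) - f a) (fderiv ℂ f a) (0 : E) := by
      have := (e1.comp (0 : E) hΛ').sub_const (f a)
      exact this
    have e3 : HasFDerivAt (fun x => f (Λ x) - f a) (fderiv ℂ f a)
      (ℓ.ker.subtypeL 0) := by simpa using e2
    exact P.hasFDerivAt.comp (0 : ℓ.ker) (e3.comp (0 : ℓ.ker) ℓ.ker.subtypeL.hasFDerivAt)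
  rw [hH'.fderiv] at hHinj
  rw [injective_iff_map_eq_zero]
  intro x hx
  have hxk : x ∈ ℓ.ker := by
    change l (fderiv ℂ f a x) = 0
    rw [hx, map_zero]
  have := hHinj (a₁ := ⟨x, hxk⟩) (a₂ := 0) (by simp [hx])
  exact congrArg Subtype.val this

theorem isInvertible_of_injective (hE : Module.finrank ℂ E = Module.finrank ℂ E') {A : E →L[ℂ] E'}
    (hA : Function.Injective A) : A.IsInvertible := by
  refine ⟨(LinearEquiv.ofInjectiveOfFinrankEq (A : E →ₗ[ℂ] E') hA hE).toContinuousLinearEquiv, ?_⟩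
  ext x; rfl

theorem differentiableOn_fderiv {F : Type*} [NormedAddCommGroup F] [NormedSpace ℂ F]
    [CompleteSpace F] {f : E → F} {Ω : Set E} (hΩ : IsOpen Ω)
    (hf : DifferentiableOn ℂ f Ω) : DifferentiableOn ℂ (fderiv ℂ f) Ω := by
  have := contDiffOn_nat hΩ hf 2
  exact (this.fderiv_of_isOpen (m := 1) hΩ (by norm_num)).differentiableOn (by norm_num)

/-- The rank of a holomorphic family of operators cannot drop only at isolated points of a line:
if the differential vanishes at `q` but is injective on a circle around `q` in a line, then it is
singular somewhere on each nearby parallel disc. This is the maximum principle for the inverse. -/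
theorem eventually_exists_singular [Nontrivial E] (hE : Module.finrank ℂ E = Module.finrank ℂ E')
    {Ω : Set E} {f : E → E'} (hΩ : IsOpen Ω) (hf : DifferentiableOn ℂ f Ω) {q v : E} {δ : ℝ}
    (hδ : 0 < δ) (hqΩ : ∀ ζ ∈ closedBall (0 : ℂ) δ, q + ζ • v ∈ Ω) (hq : fderiv ℂ f q = 0)
    (hcirc : ∀ ζ ∈ sphere (0 : ℂ) δ, Function.Injective (fderiv ℂ f (q + ζ • v))) :
    ∀ᶠ z in 𝓝 q, ∃ ζ ∈ closedBall (0 : ℂ) δ, ¬ Function.Injective (fderiv ℂ f (z + ζ • v)) := by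
  have : CompleteSpace E := FiniteDimensional.complete ℂ E
  have hcs : IsCompact (sphere (0 : ℂ) δ) := isCompact_sphere 0 δ
  have hdf := differentiableOn_fderiv hΩ hf
  have hinvat : ∀ x ∈ Ω, Function.Injective (fderiv ℂ f x) →
      DifferentiableAt ℂ (fun y => ContinuousLinearMap.inverse (fderiv ℂ f y)) x := by
    intro x hx hi
    have h1 := (isInvertible_of_injective hE hi).contDiffAt_map_inverse (n := 1)
    exact (h1.differentiableAt one_ne_zero).comp x (hdf.differentiableAt (hΩ.mem_nhds hx))
  have hcq : ContinuousOn (fun ζ : ℂ => ContinuousLinearMap.inverse (fderiv ℂ f (q + ζ • v)))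
      (sphere 0 δ) := by
    intro ζ hζ
    have h1 := (hinvat _ (hqΩ ζ (sphere_subset_closedBall hζ)) (hcirc ζ hζ)).continuousAt
    refine ContinuousAt.continuousWithinAt ?_
    exact ContinuousAt.comp (f := fun ζ : ℂ => q + ζ • v) h1 (by fun_prop)
  obtain ⟨C, hC⟩ := hcs.exists_bound_of_continuousOn hcq
  have hcl : Continuous fun p : E × ℂ => p.1 + p.2 • v := by fun_prop
  have ev1 : ∀ᶠ z in 𝓝 q, ∀ ζ ∈ sphere (0 : ℂ) δ,
      ‖ContinuousLinearMap.inverse (fderiv ℂ f (z + ζ • v))‖ < |C| + 1 := by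
    refine hcs.eventually_forall_of_forall_eventually fun ζ hζ => ?_
    have h1 := (hinvat _ (hqΩ ζ (sphere_subset_closedBall hζ)) (hcirc ζ hζ)).continuousAt
    have h2 : ContinuousAt (fun p : E × ℂ =>
        ‖ContinuousLinearMap.inverse (fderiv ℂ f (p.1 + p.2 • v))‖) (q, ζ) :=
      (ContinuousAt.comp (x := (q, ζ)) (f := fun p : E × ℂ => p.1 + p.2 • v)
        (g := fun y => ContinuousLinearMap.inverse (fderiv ℂ f y)) h1 hcl.continuousAt).norm
    exact h2.eventually_lt_const ((hC ζ hζ).trans_lt (by linarith [le_abs_self C]))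
  have ev2 : ∀ᶠ z in 𝓝 q, ∀ ζ ∈ closedBall (0 : ℂ) δ, z + ζ • v ∈ Ω := by
    refine (isCompact_closedBall _ _).eventually_forall_of_forall_eventually fun ζ hζ => ?_
    exact hcl.continuousAt.eventually (hΩ.mem_nhds (hqΩ ζ hζ))
  have hqΩ0 : q ∈ Ω := by simpa using hqΩ 0 (by simp [hδ.le])
  have ev3 : ∀ᶠ z in 𝓝 q, (|C| + 1) * ‖fderiv ℂ f z‖ < 1 := by
    have h1 := ((hdf.differentiableAt (hΩ.mem_nhds hqΩ0)).continuousAt.norm).const_mul (|C| + 1)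
    refine h1.eventually_lt_const ?_
    simp [hq]
  filter_upwards [ev1, ev2, ev3] with z h1 h2 h3
  by_contra! hcon
  obtain ⟨x₀, hx₀⟩ := exists_ne (0 : E)
  set y := fderiv ℂ f z x₀ with hy
  set h : ℂ → E := fun ζ => ContinuousLinearMap.inverse (fderiv ℂ f (z + ζ • v)) y with hh
  have hd : DifferentiableOn ℂ h (closedBall 0 δ) := by
    intro ζ hζ
    have h4 := hinvat _ (h2 ζ hζ) (hcon ζ hζ)
    have h5 : DifferentiableAt ℂ (fun ζ : ℂ => ContinuousLinearMap.inverse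
        (fderiv ℂ f (z + ζ • v))) ζ :=
      DifferentiableAt.comp (f := fun ζ : ℂ => z + ζ • v) ζ h4 (by fun_prop)
    exact (h5.clm_apply (differentiableAt_const y)).differentiableWithinAt
  have hmax := Complex.norm_le_of_forall_mem_frontier_norm_le (U := ball (0 : ℂ) δ) (f := h)
    isBounded_ball (hd.diffContOnCl_ball le_rfl) (C := (|C| + 1) * ‖y‖) (by
      intro ζ hζ
      rw [frontier_ball _ hδ.ne'] at hζ
      exact (ContinuousLinearMap.le_opNorm _ _).trans
        (mul_le_mul_of_nonneg_right (h1 ζ hζ).le (norm_nonneg _)))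
    (z := 0) (subset_closure (mem_ball_self hδ))
  have hh0 : h 0 = x₀ := by
    have hi : Function.Injective (fderiv ℂ f z) := by simpa using hcon 0 (by simp [hδ.le])
    obtain ⟨M, hM⟩ := isInvertible_of_injective hE hi
    simp only [hh, zero_smul, add_zero, hy, ← hM]
    simp
  rw [hh0] at hmax
  have h6 : ‖y‖ ≤ ‖fderiv ℂ f z‖ * ‖x₀‖ := ContinuousLinearMap.le_opNorm _ _
  have h7 : 0 < ‖x₀‖ := norm_pos_iff.2 hx₀
  have : ‖x₀‖ < ‖x₀‖ := calc
    ‖x₀‖ ≤ (|C| + 1) * ‖y‖ := hmax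
    _ ≤ (|C| + 1) * (‖fderiv ℂ f z‖ * ‖x₀‖) := by gcongr
    _ = (|C| + 1) * ‖fderiv ℂ f z‖ * ‖x₀‖ := by ring
    _ < 1 * ‖x₀‖ := by gcongr
    _ = ‖x₀‖ := one_mul _
  exact lt_irrefl _ this

end Osgood

/-! ### Osgood's theorem: the induction -/

section Osgood
variable {E : Type u} {E' : Type v} [NormedAddCommGroup E] [NormedSpace ℂ E]
  [FiniteDimensional ℂ E] [NormedAddCommGroup E'] [NormedSpace ℂ E'] [FiniteDimensional ℂ E']

/-- If the differential of `f` is everywhere zero or injective and `g` vanishes wherever it is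
zero, then near a point where `dg ≠ 0` the singular set is the whole hypersurface `g = 0`. -/
theorem eventually_fderiv_eq_zero [Nontrivial E] (hE : Module.finrank ℂ E = Module.finrank ℂ E')
    {Ω : Set E} {f : E → E'} {g : E → ℂ} (hΩ : IsOpen Ω) (hf : DifferentiableOn ℂ f Ω)
    (hg : DifferentiableOn ℂ g Ω) {q v : E} (hq : q ∈ Ω) (hfq : fderiv ℂ f q = 0)
    (halt : ∀ x ∈ Ω, fderiv ℂ f x ≠ 0 → Function.Injective (fderiv ℂ f x))
    (hfg : ∀ x ∈ Ω, fderiv ℂ f x = 0 → g x = 0) (hgv : fderiv ℂ g q v ≠ 0) :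
    ∀ᶠ z in 𝓝 q, g z = 0 → fderiv ℂ f z = 0 := by
  set c := fderiv ℂ g q v with hc
  have hcpos : 0 < ‖c‖ := norm_pos_iff.2 hgv
  have hcont : ContinuousAt (fun x => ‖fderiv ℂ g x v - c‖) q :=
    (((differentiableOn_fderiv_apply hΩ hg v).differentiableAt
      (hΩ.mem_nhds hq)).continuousAt.sub continuousAt_const).norm
  have hev : ∀ᶠ x in 𝓝 q, ‖fderiv ℂ g x v - c‖ < ‖c‖ / 2 ∧ x ∈ Ω :=
    (hcont.eventually_lt_const (by simpa [← hc] using hgv)).and (hΩ.mem_nhds hq)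
  obtain ⟨ρ, hρ, hb⟩ := Metric.eventually_nhds_iff_ball.1 hev
  obtain ⟨δ, hδ, hδv⟩ : ∃ δ : ℝ, 0 < δ ∧ δ * ‖v‖ < ρ / 2 := by
    refine ⟨ρ / (4 * (‖v‖ + 1)), by positivity, ?_⟩
    rw [div_mul_eq_mul_div, div_lt_iff₀ (by positivity)]
    nlinarith [norm_nonneg v]
  have hmem : ∀ z ∈ ball q (ρ / 2), ∀ ζ ∈ closedBall (0 : ℂ) δ, z + ζ • v ∈ ball q ρ := by
    intro z hz ζ hζ
    rw [mem_ball, dist_eq_norm] at hz ⊢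
    rw [mem_closedBall, dist_zero_right] at hζ
    have h1 : z + ζ • v - q = (z - q) + ζ • v := by abel
    have h2 : ‖ζ • v‖ ≤ δ * ‖v‖ := by
      rw [norm_smul]; exact mul_le_mul_of_nonneg_right hζ (norm_nonneg _)
    rw [h1]
    linarith [norm_add_le (z - q) (ζ • v)]
  have hinj : ∀ z ∈ ball q (ρ / 2), g z = 0 → ∀ ζ ∈ closedBall (0 : ℂ) δ, g (z + ζ • v) = 0 →
      ζ = 0 := by
    intro z hz hgz ζ hζ hgζ
    have hder : ∀ x ∈ closedBall (0 : ℂ) δ, HasDerivWithinAt (fun ζ : ℂ => g (z + ζ • v) - ζ * c)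
        (fderiv ℂ g (z + x • v) v - c) (closedBall 0 δ) x := by
      intro x hx
      have h1 := (hg.differentiableAt (hΩ.mem_nhds (hb _ (hmem z hz x hx)).2)).hasFDerivAt
      have h2 : HasDerivAt (fun ζ : ℂ => z + ζ • v) v x := by
        simpa using ((hasDerivAt_id x).smul_const v).const_add z
      have h3 : HasDerivAt (fun ζ : ℂ => ζ * c) c x := by
        simpa using (hasDerivAt_id x).mul_const c
      exact ((h1.comp_hasDerivAt x h2).sub h3).hasDerivWithinAt
    have := (convex_closedBall (0 : ℂ) δ).norm_image_sub_le_of_norm_hasDerivWithin_le hder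
      (fun x hx => (hb _ (hmem z hz x hx)).1.le) (mem_closedBall_self hδ.le) hζ
    simp only [hgζ, zero_smul, add_zero, hgz, zero_mul, sub_zero, zero_sub, norm_neg,
      norm_mul] at this
    by_contra hne
    have hp := norm_pos_iff.2 hne
    nlinarith
  have hqb : q ∈ ball q (ρ / 2) := mem_ball_self (by positivity)
  have hsing := eventually_exists_singular hE hΩ hf hδ
    (fun ζ hζ => (hb _ (hmem q hqb ζ hζ)).2) hfq (v := v) (by
      intro ζ hζ
      have hζ' := sphere_subset_closedBall hζ
      refine halt _ (hb _ (hmem q hqb ζ hζ')).2 fun h0 => ?_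
      have := hinj q hqb (hfg q hq hfq) ζ hζ' (hfg _ (hb _ (hmem q hqb ζ hζ')).2 h0)
      rw [this] at hζ
      simp at hζ
      linarith)
  filter_upwards [hsing, ball_mem_nhds q (show 0 < ρ / 2 by positivity)] with z hz hzb hgz
  obtain ⟨ζ, hζ, hni⟩ := hz
  have hzΩ := (hb _ (hmem z hzb ζ hζ)).2
  have h0 : fderiv ℂ f (z + ζ • v) = 0 := by
    by_contra hne; exact hni (halt _ hzΩ hne)
  have := hinj z hzb hgz ζ hζ (hfg _ hzΩ h0)
  simpa [this] using h0

/-- Iterated derivatives of `k` in the direction `v`. -/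
noncomputable def dirDeriv (k : E → ℂ) (v : E) : ℕ → E → ℂ
  | 0 => k
  | i + 1 => fun z => fderiv ℂ (dirDeriv k v i) z v

theorem differentiableOn_dirDeriv {k : E → ℂ} {Ω : Set E} (hΩ : IsOpen Ω)
    (hk : DifferentiableOn ℂ k Ω) (v : E) (i : ℕ) : DifferentiableOn ℂ (dirDeriv k v i) Ω := by
  induction i with
  | zero => exact hk
  | succ i ih => exact differentiableOn_fderiv_apply hΩ ih v

theorem exists_dirDeriv_ne_zero {k : E → ℂ} {a b : E} {R : ℝ} (hb : b ∈ ball a R)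
    (hk : DifferentiableOn ℂ k (ball a R)) (hkb : k b ≠ 0) :
    ∃ N, dirDeriv k (b - a) N a ≠ 0 := by
  by_contra! hcon
  set v := b - a with hv
  set φ : ℂ → ℂ := fun ζ => k (a + ζ • v) with hφ
  set D : Set ℂ := {ζ | a + ζ • v ∈ ball a R} with hD
  have hDo : IsOpen D := isOpen_ball.preimage (by fun_prop)
  have hline : ∀ ζ : ℂ, HasDerivAt (fun ζ : ℂ => a + ζ • v) v ζ := fun ζ => by
    simpa using ((hasDerivAt_id ζ).smul_const v).const_add a
  have hit : ∀ i, ∀ ζ ∈ D, iteratedDeriv i φ ζ = dirDeriv k v i (a + ζ • v) := by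
    intro i
    induction i with
    | zero => intro ζ _; simp [hφ, dirDeriv]
    | succ i ih =>
      intro ζ hζ
      rw [iteratedDeriv_succ]
      have h1 : iteratedDeriv i φ =ᶠ[𝓝 ζ] fun ζ => dirDeriv k v i (a + ζ • v) :=
        Filter.eventuallyEq_of_mem (hDo.mem_nhds hζ) ih
      rw [h1.deriv_eq]
      have h2 := ((differentiableOn_dirDeriv isOpen_ball hk v i).differentiableAt
        (isOpen_ball.mem_nhds hζ)).hasFDerivAt
      exact (h2.comp_hasDerivAt ζ (hline ζ)).deriv
  have hvR : ‖v‖ < R := by simpa [hv, dist_eq_norm] using hb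
  obtain ⟨s, hs1, hsR⟩ : ∃ s : ℝ, 1 < s ∧ s * ‖v‖ ≤ R := by
    have hR : 0 < R := (norm_nonneg _).trans_lt hvR
    rcases eq_or_lt_of_le (norm_nonneg v) with h0 | h0
    · exact ⟨2, by norm_num, by rw [← h0]; linarith⟩
    · exact ⟨R / ‖v‖, by rwa [one_lt_div h0], by rw [div_mul_cancel₀ _ h0.ne']⟩
  have hsub : ball (0 : ℂ) s ⊆ D := by
    intro ζ hζ
    simp only [mem_ball, dist_zero_right] at hζ
    simp only [hD, mem_ofPred_eq, mem_ball, dist_eq_norm, add_sub_cancel_left, norm_smul]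
    rcases eq_or_lt_of_le (norm_nonneg v) with h0 | h0
    · rw [← h0, mul_zero]; exact (norm_nonneg _).trans_lt hvR
    · nlinarith
  have hφd : DifferentiableOn ℂ φ (ball 0 s) :=
    hk.comp (by fun_prop) fun ζ hζ => hsub hζ
  have := Complex.taylorSeries_eq_on_ball hφd (z := 1) (by simpa using hs1)
  have h0 : (0 : ℂ) ∈ D := hsub (mem_ball_self (by linarith))
  have hz : ∀ n, iteratedDeriv n φ 0 = 0 := fun n => by
    rw [hit n 0 h0, zero_smul, add_zero, hcon n]
  simp only [hz, smul_zero, tsum_zero] at this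
  apply hkb
  rw [this]
  simp [hφ, hv]

/-- The inductive step. By slicing, the differential is zero wherever it is singular. Iterated
directional derivatives of a component of the differential yield, near a suitable singular point, a
function that vanishes on the singular set and has nonzero differential, so the singular set is a
smooth hypersurface there; `f` is constant on it, contradicting injectivity. -/
theorem osgoodProp_succ {n : ℕ} (hn : n ≠ 0) (ih : OsgoodProp.{u, v} n) :
    OsgoodProp.{u, v} (n + 1) := by
  intro E E' _ _ _ _ _ _ hE hE' Ω f hΩ hf hinj a ha
  by_contra hni
  have halt : ∀ x ∈ Ω, fderiv ℂ f x ≠ 0 → Function.Injective (fderiv ℂ f x) := fun x hx h0 =>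
    fderiv_injective_of_ne_zero ih hE hE' hΩ hf hinj hx h0
  have hfa : fderiv ℂ f a = 0 := by by_contra h0; exact hni (halt a ha h0)
  have : Nontrivial E := Module.nontrivial_of_finrank_pos (R := ℂ) (by omega)
  have : CompleteSpace E := FiniteDimensional.complete ℂ E
  obtain ⟨R, hR, hball⟩ := Metric.isOpen_iff.1 hΩ a ha
  -- the differential is not identically zero near `a`, since `f` is not constant there
  obtain ⟨b, hb, hfb⟩ : ∃ b ∈ ball a R, fderiv ℂ f b ≠ 0 := by
    by_contra! hcon
    obtain ⟨x₀, hx₀⟩ := exists_ne (0 : E)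
    have hx1 : a + ((R / 2 / ‖x₀‖ : ℝ) : ℂ) • x₀ ∈ ball a R := by
      have := norm_pos_iff.2 hx₀
      rw [mem_ball, dist_eq_norm, add_sub_cancel_left, norm_smul, Complex.norm_real,
        Real.norm_of_nonneg (by positivity), div_mul_cancel₀ _ this.ne']
      linarith
    have hc := isOpen_ball.is_const_of_fderiv_eq_zero (𝕜 := ℂ) (convex_ball a R).isPreconnected
      (hf.mono hball) (fun x hx => hcon x hx) hx1 (mem_ball_self hR)
    have := hinj (hball hx1) ha hc
    have h2 : ((R / 2 / ‖x₀‖ : ℝ) : ℂ) • x₀ = 0 := by simpa using this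
    rw [smul_eq_zero] at h2
    rcases h2 with h2 | h2
    · have := norm_pos_iff.2 hx₀
      have h3 : R / 2 / ‖x₀‖ = 0 := by exact_mod_cast h2
      have h4 : 0 < R / 2 / ‖x₀‖ := by positivity
      linarith
    · exact hx₀ h2
  obtain ⟨w, hw⟩ : ∃ w, fderiv ℂ f b w ≠ 0 := by
    by_contra! hcon; exact hfb (ContinuousLinearMap.ext hcon)
  obtain ⟨l, hl⟩ := SeparatingDual.exists_ne_zero (R := ℂ) hw
  set k : E → ℂ := fun z => l (fderiv ℂ f z w) with hk
  have hkd : DifferentiableOn ℂ k Ω :=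
    l.differentiable.comp_differentiableOn (differentiableOn_fderiv_apply hΩ hf w)
  set v := b - a with hv
  obtain ⟨N, hN⟩ := exists_dirDeriv_ne_zero hb (hkd.mono hball) hl
  classical
  have hex : ∃ j, ¬ ∀ᶠ z in 𝓝 a, fderiv ℂ f z = 0 → dirDeriv k v j z = 0 :=
    ⟨N, fun h => hN (h.self_of_nhds hfa)⟩
  set j := Nat.find hex with hj
  have hjs := Nat.find_spec hex
  have hj0 : j ≠ 0 := by
    intro h0
    rw [← hj, h0] at hjs
    exact hjs (Eventually.of_forall fun z hz => by simp [dirDeriv, hk, hz])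
  obtain ⟨i, hi⟩ := Nat.exists_eq_succ_of_ne_zero hj0
  have hprev : ∀ᶠ z in 𝓝 a, fderiv ℂ f z = 0 → dirDeriv k v i z = 0 := by
    have := Nat.find_min hex (m := i) (by omega)
    rwa [not_not] at this
  rw [← hj, hi] at hjs
  set g := dirDeriv k v i with hg
  obtain ⟨R₁, hR₁, hb₁⟩ := Metric.eventually_nhds_iff_ball.1 (hprev.and (hΩ.mem_nhds ha))
  obtain ⟨q, hq, hfq, hgq⟩ : ∃ q ∈ ball a R₁, fderiv ℂ f q = 0 ∧ fderiv ℂ g q v ≠ 0 := by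
    by_contra! hcon
    exact hjs (by filter_upwards [ball_mem_nhds a hR₁] with z hz hz0 using hcon z hz hz0)
  have hsubΩ : ball a R₁ ⊆ Ω := fun z hz => (hb₁ z hz).2
  have hgd : DifferentiableOn ℂ g (ball a R₁) :=
    (differentiableOn_dirDeriv hΩ hkd v i).mono hsubΩ
  have hloc := eventually_fderiv_eq_zero (hE.trans hE'.symm) isOpen_ball (hf.mono hsubΩ) hgd hq hfq
    (fun x hx => halt x (hsubΩ hx)) (fun x hx => (hb₁ x hx).1) hgq
  have hgq0 : g q = 0 := (hb₁ q hq).1 hfq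
  have hℓ0 : fderiv ℂ g q ≠ 0 := by intro h0; rw [h0] at hgq; simp at hgq
  obtain ⟨Λ, V, hV, h0V, hΛd, hΛi, hΛm, hΛ0, -, hΛg⟩ :=
    exists_straightening isOpen_ball hgd hq hℓ0
  set ℓ := fderiv ℂ g q with hℓ
  have hΛc : ContinuousAt Λ 0 := (hΛd.differentiableAt (hV.mem_nhds h0V)).continuousAt
  have hev2 : ∀ᶠ x in 𝓝 (0 : E), x ∈ V ∧ (g (Λ x) = 0 → fderiv ℂ f (Λ x) = 0) := by
    refine Filter.Eventually.and (hV.mem_nhds h0V) ?_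
    exact hΛc.eventually (by rw [hΛ0]; exact hloc)
  obtain ⟨r, hr, hbr⟩ := Metric.eventually_nhds_iff_ball.1 hev2
  -- `f ∘ Λ` is constant on the hyperplane `ker ℓ` near the origin
  have hdk : Module.finrank ℂ ℓ.ker = n := by
    have := Module.Dual.finrank_ker_add_one_of_ne_zero (f := (ℓ : E →ₗ[ℂ] ℂ))
      (by intro h0; exact hℓ0 (ContinuousLinearMap.coe_inj.1 h0))
    rw [hE] at this
    exact Nat.succ_injective this
  have : Nontrivial ℓ.ker := Module.nontrivial_of_finrank_pos (R := ℂ) (by omega)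
  obtain ⟨x₀, hx₀⟩ := exists_ne (0 : ℓ.ker)
  have hx₀p := norm_pos_iff.2 hx₀
  set x₁ : ℓ.ker := ((r / 2 / ‖x₀‖ : ℝ) : ℂ) • x₀ with hx₁
  have hx₁n : ‖x₁‖ = r / 2 := by
    rw [hx₁, norm_smul, Complex.norm_real,
        Real.norm_of_nonneg (by positivity), div_mul_cancel₀ _ hx₀p.ne']
  have hmemb : ∀ u : ℓ.ker, u ∈ ball (0 : ℓ.ker) r → (u : E) ∈ ball (0 : E) r := fun u hu => by
    simpa using hu
  set H : ℓ.ker → E' := fun u => f (Λ u) with hH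
  have hHd : ∀ u ∈ ball (0 : ℓ.ker) r, HasFDerivAt H (0 : ℓ.ker →L[ℂ] E') u := by
    intro u hu
    have huV := (hbr _ (hmemb u hu)).1
    have h1 : g (Λ u) = 0 := by
      rw [hΛg u huV, hgq0, zero_add]; exact u.2
    have h2 := (hbr _ (hmemb u hu)).2 h1
    have h3 := (hf.differentiableAt (hΩ.mem_nhds (hsubΩ (hΛm huV)))).hasFDerivAt
    have h4 := (hΛd.differentiableAt (hV.mem_nhds huV)).hasFDerivAt
    have h5 := (h3.comp (u : E) h4).comp u ℓ.ker.subtypeL.hasFDerivAt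
    rw [h2] at h5
    simpa using! h5
  have hx₁b : x₁ ∈ ball (0 : ℓ.ker) r := by rw [mem_ball, dist_zero_right, hx₁n]; linarith
  have h0b : (0 : ℓ.ker) ∈ ball (0 : ℓ.ker) r := mem_ball_self hr
  have hc := isOpen_ball.is_const_of_fderiv_eq_zero (𝕜 := ℂ)
      (convex_ball (0 : ℓ.ker) r).isPreconnected
      (fun u hu => (hHd u hu).differentiableAt.differentiableWithinAt)
      (fun x hx => (hHd x hx).fderiv) hx₁b h0b
  have hV1 := (hbr _ (hmemb _ hx₁b)).1
  have hV0 := (hbr _ (hmemb _ h0b)).1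
  have h1 := hΛi hV1 hV0 (hinj (hsubΩ (hΛm hV1)) (hsubΩ (hΛm hV0)) hc)
  have h2 : x₁ = 0 := Subtype.ext h1
  rw [h2, norm_zero] at hx₁n
  linarith

theorem osgoodProp_one : OsgoodProp.{u, v} 1 := by
  intro E E' _ _ _ _ _ _ hE hE' Ω f hΩ hf hinj a ha
  obtain ⟨l, hl⟩ : ∃ l : StrongDual ℂ E', Function.Injective l := by
    have e := (LinearEquiv.ofFinrankEq (R := ℂ) E' ℂ (by rw [hE', Module.finrank_self])).toContinuousLinearEquiv
    exact ⟨e, e.injective⟩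
  rw [injective_iff_map_eq_zero]
  intro b hb
  by_contra hb0
  set D : Set ℂ := {ζ | a + ζ • b ∈ Ω} with hD
  have hDo : IsOpen D := hΩ.preimage (by fun_prop)
  have h0D : (0 : ℂ) ∈ D := by simpa [hD] using ha
  have hline : ∀ ζ : ℂ, HasDerivAt (fun ζ : ℂ => a + ζ • b) b ζ := fun ζ => by
    simpa using ((hasDerivAt_id ζ).smul_const b).const_add a
  refine deriv_ne_zero_of_injOn (f := fun ζ => l (f (a + ζ • b))) (hDo.mem_nhds h0D) ?_ ?_ ?_
  · exact l.differentiable.comp_differentiableOn (hf.comp (by fun_prop) fun ζ hζ => hζ)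
  · intro x hx y hy hxy
    have h1 := hinj hx hy (hl hxy)
    have h2 : x • b = y • b := add_left_cancel h1
    exact smul_left_injective ℂ hb0 h2
  · have h1 : HasFDerivAt f (fderiv ℂ f a) (a + (0 : ℂ) • b) := by
      rw [zero_smul, add_zero]
      exact (hf.differentiableAt (hΩ.mem_nhds ha)).hasFDerivAt
    have h2 := l.hasFDerivAt.comp_hasDerivAt (0 : ℂ) (h1.comp_hasDerivAt (0 : ℂ) (hline 0))
    rw [hb, map_zero] at h2
    exact h2.deriv

theorem osgoodProp (n : ℕ) : OsgoodProp.{u, v} n := by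
  rcases n with _ | n
  · intro E E' _ _ _ _ _ _ hE hE' Ω f hΩ hf hinj a ha
    have := Module.finrank_zero_iff.1 hE
    exact Function.injective_of_subsingleton _
  · induction n with
    | zero => exact osgoodProp_one
    | succ n ih => exact osgoodProp_succ (by omega) ih

/-- **Osgood's theorem**. -/
theorem fderiv_injective (hE : Module.finrank ℂ E = Module.finrank ℂ E') {Ω : Set E} {f : E → E'}
    (hΩ : IsOpen Ω) (hf : DifferentiableOn ℂ f Ω) (hinj : InjOn f Ω) {a : E} (ha : a ∈ Ω) :
    Function.Injective (fderiv ℂ f a) :=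
  osgoodProp _ E E' rfl hE.symm Ω f hΩ hf hinj a ha

theorem fderiv_isInvertible (hE : Module.finrank ℂ E = Module.finrank ℂ E') {Ω : Set E}
    {f : E → E'} (hΩ : IsOpen Ω) (hf : DifferentiableOn ℂ f Ω) (hinj : InjOn f Ω) {a : E}
    (ha : a ∈ Ω) : ∃ A : E ≃L[ℂ] E', HasStrictFDerivAt f (A : E →L[ℂ] E') a := by
  obtain ⟨A, hA⟩ := isInvertible_of_injective hE (fderiv_injective hE hΩ hf hinj ha)
  refine ⟨A, ?_⟩
  rw [hA]
  exact (contDiffAt_one hΩ hf ha).hasStrictFDerivAt one_ne_zero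

theorem isOpen_image (hE : Module.finrank ℂ E = Module.finrank ℂ E') {Ω : Set E}
    {f : E → E'} (hΩ : IsOpen Ω) (hf : DifferentiableOn ℂ f Ω) (hinj : InjOn f Ω) :
    IsOpen (f '' Ω) := by
  have : CompleteSpace E := FiniteDimensional.complete ℂ E
  rw [isOpen_iff_mem_nhds]
  rintro _ ⟨a, ha, rfl⟩
  obtain ⟨A, hA⟩ := fderiv_isInvertible hE hΩ hf hinj ha
  rw [← hA.map_nhds_eq_of_equiv]
  exact image_mem_map (hΩ.mem_nhds ha)

end Osgood

/-! ### Covering under perturbation -/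

section Cover
variable {E E' : Type*} [NormedAddCommGroup E] [NormedSpace ℂ E]
  [FiniteDimensional ℂ E] [NormedAddCommGroup E'] [NormedSpace ℂ E'] [FiniteDimensional ℂ E']

/-- Injective holomorphic maps close to `F` on a ball cover the image under `F` of any smaller
ball: the image of the small ball is connected, and avoids the image of the sphere under the
perturbed map. -/
theorem eventually_cover (hE : Module.finrank ℂ E = Module.finrank ℂ E') {ι : Type*}
    {l : Filter ι} {G : ι → E → E'} {F : E → E'} {c : E} {ρ' ρ R : ℝ} (hρ : ρ' < ρ) (hR : ρ < R)
    (hF : DifferentiableOn ℂ F (ball c R)) (hFi : InjOn F (ball c R))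
    (hG : ∀ᶠ i in l, DifferentiableOn ℂ (G i) (ball c R) ∧ InjOn (G i) (ball c R))
    (hGF : TendstoUniformlyOn G F l (closedBall c ρ)) :
    ∀ᶠ i in l, F '' closedBall c ρ' ⊆ G i '' ball c ρ := by
  rcases le_or_gt ρ 0 with h0 | h0
  · refine Eventually.of_forall fun i => ?_
    rw [closedBall_eq_empty.2 (by linarith), image_empty]
    exact empty_subset _
  wlog hρ' : 0 < ρ' generalizing ρ'
  · filter_upwards [this (ρ' := ρ / 2) (by linarith) (by linarith)] with i hi
    exact (image_mono (closedBall_subset_closedBall (by linarith [not_lt.1 hρ']))).trans hi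
  have hsubR : closedBall c ρ ⊆ ball c R := closedBall_subset_ball hR
  have hsub' : closedBall c ρ' ⊆ ball c R := (closedBall_subset_closedBall hρ.le).trans hsubR
  have hdisj : Disjoint (F '' closedBall c ρ') (F '' sphere c ρ) := by
    rw [Set.disjoint_left]
    rintro _ ⟨x, hx, rfl⟩ ⟨y, hy, hxy⟩
    have hyx := hFi (hsubR (sphere_subset_closedBall hy)) (hsub' hx) hxy
    rw [hyx, mem_sphere] at hy
    rw [mem_closedBall] at hx
    linarith
  have hc1 : IsCompact (F '' closedBall c ρ') :=
    (isCompact_closedBall c ρ').image_of_continuousOn (hF.continuousOn.mono hsub')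
  have hc2 : IsCompact (F '' sphere c ρ) :=
    (isCompact_sphere c ρ).image_of_continuousOn
      (hF.continuousOn.mono (sphere_subset_closedBall.trans hsubR))
  obtain ⟨δ, hδ, hdδ⟩ := hdisj.exists_thickenings hc1 hc2.isClosed
  have hopen : IsOpen (F '' ball c ρ') :=
    isOpen_image hE isOpen_ball (hF.mono (ball_subset_ball (by linarith)))
      (hFi.mono (ball_subset_ball (by linarith)))
  have hcen : Tendsto (fun i => G i c) l (𝓝 (F c)) :=
    hGF.tendsto_at (mem_closedBall_self h0.le)
  have hev := hcen.eventually (hopen.mem_nhds (mem_image_of_mem F (mem_ball_self hρ')))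
  filter_upwards [hG, Metric.tendstoUniformlyOn_iff.1 hGF δ hδ, hev] with i hGi hdist hci
  have hcont : ContinuousOn (G i) (closedBall c ρ) := hGi.1.continuousOn.mono hsubR
  have hU1 : IsOpen (G i '' ball c ρ) :=
    isOpen_image hE isOpen_ball (hGi.1.mono (ball_subset_ball hR.le))
      (hGi.2.mono (ball_subset_ball hR.le))
  have hU2 : IsOpen (G i '' closedBall c ρ)ᶜ :=
    ((isCompact_closedBall c ρ).image_of_continuousOn hcont).isClosed.isOpen_compl
  refine IsPreconnected.subset_left_of_subset_union hU1 hU2 ?_ ?_ ?_ ?_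
  · exact disjoint_compl_right.mono_left (image_mono ball_subset_closedBall)
  · rintro x hx
    by_cases hxG : x ∈ G i '' closedBall c ρ
    · left
      obtain ⟨y, hy, rfl⟩ := hxG
      rcases (mem_closedBall.1 hy).lt_or_eq with h | h
      · exact mem_image_of_mem _ h
      · exfalso
        refine Set.disjoint_left.1 hdδ (self_subset_thickening hδ _ hx) ?_
        rw [mem_thickening_iff]
        exact ⟨F y, mem_image_of_mem _ h, by rw [dist_comm]; exact hdist y hy⟩
    · exact Or.inr hxG
  · exact ⟨G i c, image_mono ball_subset_closedBall hci, mem_image_of_mem _ (mem_ball_self h0)⟩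
  · exact ((convex_closedBall c ρ').isPreconnected).image _ (hF.continuousOn.mono hsub')

end Cover

/-- A holomorphic function whose derivative has positive real part is injective on convex sets. -/
theorem injOn_of_re_deriv_pos {S : Set ℂ} (hS : Convex ℝ S) {f f' : ℂ → ℂ}
    (hf : ∀ z ∈ S, HasDerivAt f (f' z) z) (hpos : ∀ z ∈ S, 0 < (f' z).re) : InjOn f S := by
  intro x hx y hy hxy
  by_contra hne
  have hd : y - x ≠ 0 := sub_ne_zero.2 (Ne.symm hne)
  have hmem : ∀ t ∈ Icc (0 : ℝ) 1, x + (t : ℂ) * (y - x) ∈ S := by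
    intro t ht
    have := hS.add_smul_sub_mem hx hy ht
    simpa using this
  have hder : ∀ t ∈ Icc (0 : ℝ) 1, HasDerivAt
      (fun t : ℝ => (f (x + (t : ℂ) * (y - x)) * (starRingEnd ℂ) (y - x)).re)
      ((f' (x + (t : ℂ) * (y - x)) * (y - x) * (starRingEnd ℂ) (y - x)).re) t := by
    intro t ht
    have h1 : HasDerivAt (fun t : ℂ => x + t * (y - x)) (y - x) (t : ℂ) := by
      simpa using ((hasDerivAt_id (t : ℂ)).mul_const (y - x)).const_add x
    have h2 := ((hf _ (hmem t ht)).comp (t : ℂ) h1).mul_const ((starRingEnd ℂ) (y - x))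
    exact h2.real_of_complex
  obtain ⟨t, ht, h⟩ := exists_hasDerivAt_eq_slope _ _ (zero_lt_one' ℝ)
    (fun t ht => (hder t ht).continuousAt.continuousWithinAt)
    (fun t ht => hder t (Ioo_subset_Icc_self ht))
  have hz : (f' (x + (t : ℂ) * (y - x)) * (y - x) * (starRingEnd ℂ) (y - x)).re = 0 := by
    rw [h]; simp [hxy]
  rw [mul_assoc, Complex.mul_conj, Complex.re_mul_ofReal] at hz
  have h3 := hpos _ (hmem t (Ioo_subset_Icc_self ht))
  have h4 : 0 < Complex.normSq (y - x) := Complex.normSq_pos.2 hd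
  nlinarith [mul_pos h3 h4]

/-- In the logarithmic coordinate, the profile of the dumbbell map is injective. -/
theorem injOn_profile {ε C : ℝ} (hε : 0 < ε) (hC : 0 < C) :
    InjOn (fun ζ : ℂ => ε * ζ + C * Complex.sinh ζ) {ζ | |ζ.im| < π / 2} := by
  have hconv : Convex ℝ {ζ : ℂ | |ζ.im| < π / 2} := by
    have : {ζ : ℂ | |ζ.im| < π / 2} = Complex.imLm ⁻¹' (Ioo (-(π / 2)) (π / 2)) := by
      ext ζ; simp [abs_lt]
    rw [this]
    exact (convex_Ioo _ _).linear_preimage _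
  refine injOn_of_re_deriv_pos (f' := fun ζ => ε + C * Complex.cosh ζ) hconv ?_ ?_
  · intro z _
    simpa using ((hasDerivAt_id z).const_mul (ε : ℂ)).fun_add ((Complex.hasDerivAt_sinh z).const_mul (C : ℂ))
  · intro z hz
    have hz' := abs_lt.1 (show |z.im| < π / 2 by simpa using hz)
    have hre : (Complex.cosh z).re = Real.cosh z.re * Real.cos z.im := by
      conv_lhs => rw [← Complex.re_add_im z, Complex.cosh_add, Complex.cosh_mul_I, Complex.sinh_mul_I]
      simp [← Complex.ofReal_cosh, ← Complex.ofReal_cos, ← Complex.ofReal_sinh, ← Complex.ofReal_sin]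
    have h1 : 0 < Real.cosh z.re * Real.cos z.im :=
      mul_pos (Real.cosh_pos _) (Real.cos_pos_of_mem_Ioo ⟨hz'.1, hz'.2⟩)
    simp only [Complex.add_re, Complex.ofReal_re, Complex.re_ofReal_mul, hre]
    nlinarith [mul_pos hC h1]

/-! ### Automorphisms of the ball -/

theorem sqrt_sq_cast {a : ℝ} (ha : |a| < 1) : (√(1 - a ^ 2) : ℂ) ^ 2 = 1 - (a : ℂ) ^ 2 := by
  have : 0 ≤ 1 - a ^ 2 := by nlinarith [abs_nonneg a, sq_abs a]
  rw [← Complex.ofReal_pow, Real.sq_sqrt this]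
  push_cast
  rfl

section Aut
variable {E : Type*} [NormedAddCommGroup E] [InnerProductSpace ℂ E]

/-- The component of `z` orthogonal to `e` (for a unit vector `e`). -/
noncomputable def perp (e z : E) : E := z - inner ℂ e z • e

/-- The automorphism of the unit ball moving the origin to `a • e`. -/
noncomputable def aut (e : E) (a : ℝ) (z : E) : E :=
  (1 + a * inner ℂ e z)⁻¹ • ((inner ℂ e z + a) • e + (√(1 - a ^ 2) : ℂ) • perp e z)

variable {e : E}

theorem inner_self_unit (he : ‖e‖ = 1) : inner ℂ e e = 1 := by
  rw [inner_self_eq_norm_sq_to_K, he]; simp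

theorem inner_perp (he : ‖e‖ = 1) (z : E) : inner ℂ e (perp e z) = 0 := by
  rw [perp, inner_sub_right, inner_smul_right, inner_self_unit he, mul_one, sub_self]

theorem inner_add_perp (he : ‖e‖ = 1) (x y : ℂ) (z : E) : inner ℂ e (x • e + y • perp e z) = x := by
  rw [inner_add_right, inner_smul_right, inner_smul_right, inner_perp he, inner_self_unit he]
  ring

theorem perp_add_perp (he : ‖e‖ = 1) (x y : ℂ) (z : E) : perp e (x • e + y • perp e z) = y • perp e z := by
  rw [perp, inner_add_perp he]; abel

theorem norm_sq_add_perp (he : ‖e‖ = 1) (x y : ℂ) (z : E) :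
    ‖x • e + y • perp e z‖ ^ 2 = ‖x‖ ^ 2 + ‖y‖ ^ 2 * ‖perp e z‖ ^ 2 := by
  have h : inner ℂ (x • e) (y • perp e z) = 0 := by
    rw [inner_smul_left, inner_smul_right, inner_perp he]; ring
  have := norm_add_sq_eq_norm_sq_add_norm_sq_of_inner_eq_zero (𝕜 := ℂ) _ _ h
  rw [norm_smul, norm_smul, he] at this
  nlinarith [this]

theorem norm_sq_perp (he : ‖e‖ = 1) (z : E) : ‖z‖ ^ 2 = ‖inner ℂ e z‖ ^ 2 + ‖perp e z‖ ^ 2 := by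
  have h := norm_sq_add_perp he (inner ℂ e z) 1 z
  rw [one_smul, perp, add_sub_cancel] at h
  simpa [perp] using h

theorem norm_inner_le (he : ‖e‖ = 1) (z : E) : ‖inner ℂ e z‖ ≤ ‖z‖ := by
  simpa [he] using norm_inner_le_norm (𝕜 := ℂ) e z

theorem re_one_add_pos (he : ‖e‖ = 1) {a : ℝ} (ha : |a| < 1) {z : E} (hz : ‖z‖ ≤ 1) :
    0 < (1 + a * inner ℂ e z).re := by
  have h1 : |(inner ℂ e z).re| ≤ 1 :=
    (Complex.abs_re_le_norm _).trans ((norm_inner_le he z).trans hz)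
  have h2 : |a * (inner ℂ e z).re| < 1 := by
    rw [abs_mul]
    nlinarith [abs_nonneg a, abs_nonneg (inner ℂ e z).re]
  rw [Complex.add_re, Complex.one_re, Complex.re_ofReal_mul]
  linarith [(abs_lt.1 h2).1]

theorem one_add_ne_zero (he : ‖e‖ = 1) {a : ℝ} (ha : |a| < 1) {z : E} (hz : ‖z‖ ≤ 1) :
    1 + a * inner ℂ e z ≠ 0 := fun h => by
  have := re_one_add_pos he ha hz
  rw [h] at this
  simp at this

theorem inner_aut (he : ‖e‖ = 1) (a : ℝ) (z : E) :
    inner ℂ e (aut e a z) = (inner ℂ e z + a) / (1 + a * inner ℂ e z) := by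
  rw [aut, inner_smul_right, inner_add_perp he, div_eq_mul_inv, mul_comm]

theorem perp_aut (he : ‖e‖ = 1) (a : ℝ) (z : E) :
    perp e (aut e a z) = ((√(1 - a ^ 2) : ℂ) / (1 + a * inner ℂ e z)) • perp e z := by
  rw [aut, smul_add, smul_smul, smul_smul, perp_add_perp he, div_eq_mul_inv, mul_comm]

theorem aut_mem_ball (he : ‖e‖ = 1) {a : ℝ} (ha : |a| < 1) {z : E} (hz : ‖z‖ < 1) : ‖aut e a z‖ < 1 := by
  have hne := one_add_ne_zero he ha hz.le
  have ha2 : 0 < 1 - a ^ 2 := by nlinarith [abs_nonneg a, sq_abs a]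
  have h1 : ‖aut e a z‖ ^ 2 * ‖1 + a * inner ℂ e z‖ ^ 2
      = ‖inner ℂ e z + a‖ ^ 2 + (1 - a ^ 2) * ‖perp e z‖ ^ 2 := by
    rw [aut, norm_smul, mul_pow, norm_sq_add_perp he, Complex.norm_real, Real.norm_eq_abs, sq_abs,
      Real.sq_sqrt ha2.le, norm_inv, inv_pow]
    field_simp [norm_ne_zero_iff.2 hne]
  have h2 := norm_sq_perp he z
  have hpos : 0 < ‖1 + a * inner ℂ e z‖ ^ 2 := by positivity
  have h3 : ‖1 + a * inner ℂ e z‖ ^ 2 - ‖inner ℂ e z + a‖ ^ 2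
      = (1 - a ^ 2) * (1 - ‖inner ℂ e z‖ ^ 2) := by
    rw [Complex.sq_norm, Complex.sq_norm, Complex.sq_norm, Complex.normSq_apply,
      Complex.normSq_apply, Complex.normSq_apply]
    simp
    ring
  have h4 : ‖z‖ ^ 2 < 1 := by nlinarith [norm_nonneg z]
  have h5 : ‖aut e a z‖ ^ 2 * ‖1 + a * inner ℂ e z‖ ^ 2 < ‖1 + a * inner ℂ e z‖ ^ 2 := by
    nlinarith [mul_pos ha2 (sub_pos.2 h4)]
  have h6 : ‖aut e a z‖ ^ 2 < 1 := by
    by_contra hcon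
    nlinarith [not_lt.1 hcon]
  nlinarith [norm_nonneg (aut e a z)]

theorem aut_neg_aut (he : ‖e‖ = 1) {a : ℝ} (ha : |a| < 1) {z : E} (hz : ‖z‖ ≤ 1) :
    aut e (-a) (aut e a z) = z := by
  have hne := one_add_ne_zero he ha hz
  have ha2 : (1 - a ^ 2 : ℂ) ≠ 0 := by
    have : 0 < 1 - a ^ 2 := by nlinarith [abs_nonneg a, sq_abs a]
    exact_mod_cast this.ne'
  have hs := sqrt_sq_cast ha
  have key : 1 + (-a : ℂ) * ((inner ℂ e z + a) / (1 + a * inner ℂ e z))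
      = (1 - a ^ 2) / (1 + a * inner ℂ e z) := by
    field_simp
    ring
  rw [aut, inner_aut he, perp_aut he]
  push_cast
  rw [key, neg_sq, smul_add, smul_smul, smul_smul, smul_smul]
  have h1 : ((1 - (a : ℂ) ^ 2) / (1 + a * inner ℂ e z))⁻¹ *
      ((inner ℂ e z + a) / (1 + a * inner ℂ e z) + -a) = inner ℂ e z := by
    field_simp
    ring
  have h2 : ((1 - (a : ℂ) ^ 2) / (1 + a * inner ℂ e z))⁻¹ *
      ((√(1 - a ^ 2) : ℂ) * ((√(1 - a ^ 2) : ℂ) / (1 + a * inner ℂ e z))) = 1 := by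
    field_simp
    rw [hs]
  rw [h1, mul_assoc, h2, one_smul, perp]
  abel

theorem differentiableOn_aut (he : ‖e‖ = 1) {a : ℝ} (ha : |a| < 1) :
    DifferentiableOn ℂ (aut e a) (ball 0 1) := by
  have hi : Differentiable ℂ (fun z : E => inner ℂ e z) := (innerSL ℂ e).differentiable
  have hp : Differentiable ℂ (perp e) := differentiable_id.sub (hi.smul_const e)
  intro z hz
  have hne := one_add_ne_zero he ha (mem_ball_zero_iff.1 hz).le
  refine DifferentiableAt.differentiableWithinAt ?_
  refine DifferentiableAt.fun_smul ?_ ?_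
  · exact (((hi z).const_mul _).const_add _).inv hne
  · exact (((hi z).add_const _).smul_const e).add ((hp z).const_smul _)

end Aut

/-! ### The dumbbell map -/

section Dumb
variable {E : Type*} [NormedAddCommGroup E] [InnerProductSpace ℂ E]

/-- The coefficient of the logarithm in the dumbbell map. -/
noncomputable def neck (ρ a : ℝ) : ℝ := (1 - ρ) / (-Real.log (1 - a))

/-- The dumbbell map: for `a` close to `1` it sends the unit ball into a small neighbourhood of the
union of two balls of radius `ρ` centred at `± e` and of the segment joining them. -/
noncomputable def dumb (e : E) (ρ a : ℝ) (z : E) : E :=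
  (neck ρ a * (Complex.log (1 + a * inner ℂ e z) - Complex.log (1 - a * inner ℂ e z))
      + 2 * ρ * (1 - a ^ 2) * inner ℂ e z / (1 - a ^ 2 * inner ℂ e z ^ 2)) • e
    + (2 * ρ * (√(1 - a ^ 2) : ℂ) / (1 - a ^ 2 * inner ℂ e z ^ 2)) • perp e z

theorem dumb_neg (e : E) (ρ a : ℝ) (z : E) : dumb e ρ a (-z) = -dumb e ρ a z := by
  have hp : perp e (-z) = -perp e z := by simp only [perp, inner_neg_right, neg_smul]; abel
  rw [dumb, dumb, hp, inner_neg_right, neg_add, ← neg_smul, smul_neg, neg_sq]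
  congr 2
  ring_nf

theorem neck_pos {ρ a : ℝ} (hρ1 : ρ < 1) (ha0 : 0 < a) (ha1 : a < 1) : 0 < neck ρ a :=
  div_pos (by linarith) (neg_pos.2 (Real.log_neg (by linarith) (by linarith)))

variable {e : E}

theorem re_one_sub_pos (he : ‖e‖ = 1) {a : ℝ} (ha : |a| < 1) {z : E} (hz : ‖z‖ ≤ 1) :
    0 < (1 - a * inner ℂ e z).re := by
  have := re_one_add_pos he (a := -a) (by rwa [abs_neg]) hz
  simpa [sub_eq_add_neg] using this

theorem differentiableOn_dumb (he : ‖e‖ = 1) {ρ a : ℝ} (ha : |a| < 1) :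
    DifferentiableOn ℂ (dumb e ρ a) (ball 0 1) := by
  have hi : Differentiable ℂ (fun z : E => inner ℂ e z) := (innerSL ℂ e).differentiable
  have hp : Differentiable ℂ (perp e) := differentiable_id.sub (hi.smul_const e)
  intro z hz
  have hz1 := (mem_ball_zero_iff.1 hz).le
  have h1 := re_one_add_pos he ha hz1
  have h2 := re_one_sub_pos he ha hz1
  have hne : (1 : ℂ) - a ^ 2 * inner ℂ e z ^ 2 ≠ 0 := by
    have : (1 : ℂ) - a ^ 2 * inner ℂ e z ^ 2 = (1 + a * inner ℂ e z) * (1 - a * inner ℂ e z) := by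
      ring
    rw [this]
    exact mul_ne_zero (fun h => by rw [h] at h1; simp at h1) (fun h => by rw [h] at h2; simp at h2)
  have hden : DifferentiableAt ℂ (fun z : E => (1 : ℂ) - a ^ 2 * inner ℂ e z ^ 2) z :=
    (((hi z).pow 2).const_mul _).const_sub _
  have hinvd := hden.inv hne
  refine DifferentiableAt.differentiableWithinAt ?_
  refine DifferentiableAt.add (DifferentiableAt.smul_const (DifferentiableAt.add ?_ ?_) e)
    (DifferentiableAt.fun_smul ?_ (hp z))
  · refine DifferentiableAt.const_mul (DifferentiableAt.sub ?_ ?_) _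
    · exact (((hi z).const_mul _).const_add _).clog (Or.inl h1)
    · exact (((hi z).const_mul _).const_sub _).clog (Or.inl h2)
  · simp only [div_eq_mul_inv]
    exact ((hi z).const_mul _).mul hinvd
  · simp only [div_eq_mul_inv]
    exact hinvd.const_mul _

/-- The `e`-component of the dumbbell map depends only on `⟪e, z⟫`, through the one-variable profile
in the logarithmic coordinate, and the orthogonal component is multiplied by a nonvanishing function
of `⟪e, z⟫`. -/
theorem injOn_dumb (he : ‖e‖ = 1) {ρ a : ℝ} (hρ0 : 0 < ρ) (hρ1 : ρ < 1) (ha0 : 0 < a) (ha1 : a < 1) :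
    InjOn (dumb e ρ a) (ball 0 1) := by
  have ha : |a| < 1 := by rwa [abs_of_pos ha0]
  have ha2 : 0 < 1 - a ^ 2 := by nlinarith
  have haC : (a : ℂ) ≠ 0 := by exact_mod_cast ha0.ne'
  -- the logarithmic coordinate of a point of the disc
  set Z : E → ℂ := fun z => Complex.log (1 + a * inner ℂ e z) - Complex.log (1 - a * inner ℂ e z)
    with hZ
  have hfac : ∀ z : E, (1 : ℂ) - a ^ 2 * inner ℂ e z ^ 2
      = (1 + a * inner ℂ e z) * (1 - a * inner ℂ e z) := fun z => by ring
  have hne1 : ∀ z ∈ ball (0 : E) 1, 1 + a * inner ℂ e z ≠ 0 := fun z hz =>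
    one_add_ne_zero he ha (mem_ball_zero_iff.1 hz).le
  have hne2 : ∀ z ∈ ball (0 : E) 1, 1 - a * inner ℂ e z ≠ 0 := fun z hz h => by
    have := re_one_sub_pos he ha (mem_ball_zero_iff.1 hz).le
    rw [h] at this; simp at this
  have hexp : ∀ z ∈ ball (0 : E) 1,
      Complex.exp (Z z) = (1 + a * inner ℂ e z) / (1 - a * inner ℂ e z) := fun z hz => by
    rw [hZ, Complex.exp_sub, Complex.exp_log (hne1 z hz), Complex.exp_log (hne2 z hz)]
  have hsinh : ∀ z ∈ ball (0 : E) 1,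
      Complex.sinh (Z z) = 2 * a * inner ℂ e z / (1 - a ^ 2 * inner ℂ e z ^ 2) := fun z hz => by
    have h1 := hne1 z hz
    have h2 := hne2 z hz
    rw [Complex.sinh, Complex.exp_neg, hexp z hz, hfac]
    field_simp
    ring
  have hstrip : ∀ z ∈ ball (0 : E) 1, Z z ∈ {ζ : ℂ | |ζ.im| < π / 2} := fun z hz => by
    have hz1 := (mem_ball_zero_iff.1 hz).le
    have h1 := re_one_add_pos he ha hz1
    have h2 := re_one_sub_pos he ha hz1
    have e1 := Complex.abs_arg_lt_pi_div_two_iff.2 (Or.inl h1)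
    have e2 := Complex.abs_arg_lt_pi_div_two_iff.2 (Or.inl h2)
    have him : (Z z).im = Complex.arg (1 + a * inner ℂ e z) - Complex.arg (1 - a * inner ℂ e z) := by
      simp [hZ, Complex.log_im]
    have hlt : |(Z z).im| < π := by
      rw [him, abs_lt]
      rw [abs_lt] at e1 e2
      constructor <;> linarith [e1.1, e1.2, e2.1, e2.2]
    have hre : 0 < (Complex.exp (Z z)).re := by
      rw [hexp z hz, div_eq_mul_inv, Complex.inv_def, ← mul_assoc, Complex.re_mul_ofReal]
      refine mul_pos ?_ (inv_pos.2 (Complex.normSq_pos.2 (hne2 z hz)))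
      have h5 : ‖inner ℂ e z‖ < 1 := (norm_inner_le he z).trans_lt (mem_ball_zero_iff.1 hz)
      have h6 : (inner ℂ e z).re ^ 2 + (inner ℂ e z).im ^ 2 < 1 := by
        have := Complex.sq_norm (inner ℂ e z)
        rw [Complex.normSq_apply] at this
        nlinarith [norm_nonneg (inner ℂ e z)]
      revert h6
      generalize inner ℂ e z = x
      intro h6
      simp
      nlinarith [mul_pos ha0 ha0]
    rw [Complex.exp_re] at hre
    have hcos : 0 < Real.cos (Z z).im := by
      by_contra hc
      nlinarith [Real.exp_pos (Z z).re, not_lt.1 hc]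
    show |(Z z).im| < π / 2
    by_contra hc
    rw [not_lt] at hc
    have := Real.cos_nonpos_of_pi_div_two_le_of_le hc (by linarith [Real.pi_pos])
    rw [Real.cos_abs] at this
    linarith
  have hC : 0 < ρ * (1 - a ^ 2) / a := by positivity
  intro x hx y hy hxy
  have hdec : ∀ z ∈ ball (0 : E) 1, inner ℂ e (dumb e ρ a z)
      = (fun ζ : ℂ => (neck ρ a : ℂ) * ζ + ((ρ * (1 - a ^ 2) / a : ℝ) : ℂ) * Complex.sinh ζ) (Z z) := by
    intro z hz
    have h1 := hne1 z hz
    have h2 := hne2 z hz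
    simp only []
    rw [dumb, inner_add_perp he, hsinh z hz, hfac]
    push_cast
    simp only [hZ]
    field_simp
  have h1 : inner ℂ e x = inner ℂ e y := by
    have h2 := congrArg (inner ℂ e) hxy
    rw [hdec x hx, hdec y hy] at h2
    have h3 := congrArg Complex.exp
      (injOn_profile (neck_pos hρ1 ha0 ha1) hC (hstrip x hx) (hstrip y hy) h2)
    rw [hexp x hx, hexp y hy, div_eq_div_iff (hne2 x hx) (hne2 y hy)] at h3
    have h4 : (2 * a : ℂ) * (inner ℂ e x - inner ℂ e y) = 0 := by linear_combination h3
    have h5 : (2 * a : ℂ) ≠ 0 := mul_ne_zero two_ne_zero haC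
    exact sub_eq_zero.1 ((mul_eq_zero.1 h4).resolve_left h5)
  have h2 := congrArg (perp e) hxy
  rw [dumb, dumb, perp_add_perp he, perp_add_perp he, h1] at h2
  have hk : (2 * ρ * (√(1 - a ^ 2) : ℂ) / (1 - a ^ 2 * inner ℂ e y ^ 2)) ≠ 0 := by
    rw [hfac]
    have : (√(1 - a ^ 2) : ℂ) ≠ 0 := by exact_mod_cast (Real.sqrt_pos.2 ha2).ne'
    have hρ' : (ρ : ℂ) ≠ 0 := by exact_mod_cast hρ0.ne'
    exact div_ne_zero (by simp [this, hρ']) (mul_ne_zero (hne1 y hy) (hne2 y hy))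
  have h3 := smul_right_injective E hk h2
  rw [perp, perp, h1] at h3
  exact sub_left_injective h3

end Dumb

/-! ### The limit of the dumbbell map -/

/-- Bounded functions converge along ultrafilters. -/
theorem exists_tendsto_of_bounded {ι X : Type*} [NormedAddCommGroup X] [ProperSpace X]
    (U : Ultrafilter ι) {g : ι → X} {C : ℝ} (hg : ∀ᶠ i in (U : Filter ι), ‖g i‖ ≤ C) :
    ∃ x, Tendsto g U (𝓝 x) := by
  obtain ⟨x, _, hx⟩ := (isCompact_closedBall (0 : X) C).ultrafilter_le_nhds (U.map g) (by
    rw [le_principal_iff]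
    refine Ultrafilter.mem_map.2 ?_
    filter_upwards [hg] with i hi
    simpa using hi)
  exact ⟨x, hx⟩

theorem tendsto_neck {ι : Type*} {l : Filter ι} {a : ι → ℝ} (ρ : ℝ) (ha : Tendsto a l (𝓝[<] 1)) :
    Tendsto (fun i => neck ρ (a i)) l (𝓝 0) := by
  have h1 : Tendsto (fun x : ℝ => 1 - x) (𝓝[<] 1) (𝓝[>] 0) := by
    refine tendsto_nhdsWithin_iff.2 ⟨?_, ?_⟩
    · have : Tendsto (fun x : ℝ => 1 - x) (𝓝 1) (𝓝 (1 - 1)) :=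
        Continuous.tendsto (by fun_prop) 1
      rw [sub_self] at this
      exact this.mono_left nhdsWithin_le_nhds
    · filter_upwards [self_mem_nhdsWithin] with x hx
      exact sub_pos.2 (mem_Iio.1 hx)
  have h2 := tendsto_neg_atBot_atTop.comp (Real.tendsto_log_nhdsGT_zero.comp (h1.comp ha))
  exact h2.const_div_atTop (1 - ρ)

/-- The error in the neck due to the argument of the logarithm is negligible. -/
theorem tendsto_neck_log {ι : Type*} {l : Filter ι} {a : ι → ℝ} (ρ : ℝ)
    (ha : Tendsto a l (𝓝[<] 1)) (x : ι → ℂ) :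
    Tendsto (fun i => (neck ρ (a i) : ℂ) * Complex.log (x i)
      - ((neck ρ (a i) * Real.log ‖x i‖ : ℝ) : ℂ)) l (𝓝 0) := by
  have h0 : Tendsto (fun i => (neck ρ (a i) : ℂ)) l (𝓝 0) := by
    simpa using (tendsto_neck ρ ha).ofReal
  have h1 : Tendsto (fun i => (neck ρ (a i) : ℂ) * ((Complex.arg (x i) : ℂ) * Complex.I)) l
      (𝓝 0) := by
    refine h0.zero_mul_isBoundedUnder_le ⟨π, ?_⟩
    simp only [eventually_map]
    refine Eventually.of_forall fun i => ?_
    simpa using Complex.abs_arg_le_pi (x i)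
  refine h1.congr fun i => ?_
  rw [Complex.log]
  push_cast
  ring

theorem tendsto_cayley_one {ι : Type*} {l : Filter ι} {a : ι → ℝ} (ha : Tendsto a l (𝓝 1))
    {x : ι → ℂ} {x₀ : ℂ} (hx : Tendsto x l (𝓝 x₀)) (hx₀ : x₀ ≠ -1) :
    Tendsto (fun i => (x i + a i) / (1 + a i * x i)) l (𝓝 1) := by
  have haC : Tendsto (fun i => (a i : ℂ)) l (𝓝 1) := by
    simpa using ha.ofReal
  have hne : (1 : ℂ) + 1 * x₀ ≠ 0 := fun h => hx₀ (by linear_combination h)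
  have := (hx.add haC).div ((tendsto_const_nhds (x := (1 : ℂ))).add (haC.mul hx)) hne
  rw [one_mul, add_comm x₀, div_self (by simpa using hne)] at this
  exact this

section Dumb
variable {E : Type*} [NormedAddCommGroup E] [InnerProductSpace ℂ E]

/-- The limit shape: two closed balls joined by a segment. -/
def core (e : E) (ρ : ℝ) : Set E :=
  closedBall (-e) ρ ∪ closedBall e ρ ∪ (fun x : ℝ => (x : ℂ) • e) '' Icc (-(1 - ρ)) (1 - ρ)

theorem neg_mem_core {e : E} {ρ : ℝ} {z : E} (hz : z ∈ core e ρ) : -z ∈ core e ρ := by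
  rcases hz with (h | h) | ⟨x, hx, rfl⟩
  · left; right
    rw [mem_closedBall, dist_eq_norm] at h ⊢
    rw [← norm_neg]; rwa [show -(-z - e) = z - -e by abel]
  · left; left
    rw [mem_closedBall, dist_eq_norm] at h ⊢
    rw [← norm_neg]; rwa [show -(-z - -e) = z - e by abel]
  · right
    refine ⟨-x, ⟨by linarith [hx.2], by linarith [hx.1]⟩, by simp⟩

theorem isCompact_core [FiniteDimensional ℂ E] (e : E) (ρ : ℝ) : IsCompact (core e ρ) := by
  have := FiniteDimensional.proper ℂ E
  refine ((isCompact_closedBall _ _).union (isCompact_closedBall _ _)).union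
    (isCompact_Icc.image ?_)
  fun_prop

variable {e : E}

/-- The dumbbell map in terms of `w = aut (-a) z`. -/
theorem dumb_eq (he : ‖e‖ = 1) (ρ : ℝ) {a : ℝ} (ha : |a| < 1) {z : E} (hz : ‖z‖ ≤ 1) :
    dumb e ρ a z = ((neck ρ a : ℂ) * Complex.log (1 + a * inner ℂ e z)
      - neck ρ a * Complex.log (1 - a * inner ℂ e z)
      + ρ * ((inner ℂ e z + a) / (1 + a * inner ℂ e z)) + ρ * inner ℂ e (aut e (-a) z)) • e
      + (2 * ρ / (1 + a * inner ℂ e z)) • perp e (aut e (-a) z) := by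
  have h1 := one_add_ne_zero he ha hz
  have h2 : 1 - a * inner ℂ e z ≠ 0 := fun h => by
    have := re_one_sub_pos he ha hz
    rw [h] at this; simp at this
  rw [dumb, inner_aut he, perp_aut he, smul_smul]
  have hfac : (1 : ℂ) - a ^ 2 * inner ℂ e z ^ 2
      = (1 + a * inner ℂ e z) * (1 - a * inner ℂ e z) := by ring
  rw [hfac]
  push_cast
  have h3 : (1 : ℂ) + -a * inner ℂ e z = 1 - a * inner ℂ e z := by ring
  rw [neg_sq, h3]
  congr 2
  · field_simp
    ring
  · field_simp

/-- In the coordinate `w = aut (-a) z` centred at `a • e`, the dumbbell map tends to the affine map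
onto the ball of radius `ρ` about `e`. -/
theorem tendsto_dumb (he : ‖e‖ = 1) {ι : Type*} {l : Filter ι} {a : ι → ℝ} (ρ : ℝ)
    (ha : Tendsto a l (𝓝[<] 1)) {z : ι → E} (hz : ∀ᶠ i in l, ‖z i‖ < 1) {w : E}
    (hw : Tendsto (fun i => aut e (-a i) (z i)) l (𝓝 w)) (hw1 : inner ℂ e w ≠ -1) :
    Tendsto (fun i => dumb e ρ (a i) (z i)) l (𝓝 (e + (ρ : ℂ) • w)) := by
  have ha' : Tendsto a l (𝓝 1) := ha.mono_right nhdsWithin_le_nhds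
  have haC : Tendsto (fun i => (a i : ℂ)) l (𝓝 1) := by
    simpa using ha'.ofReal
  have hab : ∀ᶠ i in l, 0 < a i ∧ a i < 1 := by
    refine Filter.Eventually.and (ha'.eventually (lt_mem_nhds zero_lt_one)) ?_
    exact ha.eventually self_mem_nhdsWithin
  set W : ι → E := fun i => aut e (-a i) (z i) with hW
  have hi : Continuous (fun z : E => inner ℂ e z) := (innerSL ℂ e).continuous
  have hp : Continuous (perp e) := continuous_id.sub (hi.smul continuous_const)
  have hW1 : Tendsto (fun i => inner ℂ e (W i)) l (𝓝 (inner ℂ e w)) := (hi.tendsto w).comp hw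
  have hWp : Tendsto (fun i => perp e (W i)) l (𝓝 (perp e w)) := (hp.tendsto w).comp hw
  have hzW : ∀ᶠ i in l, inner ℂ e (z i) = (inner ℂ e (W i) + a i) / (1 + a i * inner ℂ e (W i)) := by
    filter_upwards [hab, hz] with i hi hzi
    have habs : |-a i| < 1 := by rw [abs_neg, abs_of_pos hi.1]; exact hi.2
    have := aut_neg_aut he habs hzi.le
    rw [neg_neg] at this
    rw [← inner_aut he, hW, this]
  have hz1 : Tendsto (fun i => inner ℂ e (z i)) l (𝓝 1) :=
    (tendsto_cayley_one ha' hW1 hw1).congr' (hzW.mono fun i h => h.symm)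
  have hM : Tendsto (fun i => (inner ℂ e (z i) + a i) / (1 + a i * inner ℂ e (z i))) l (𝓝 1) :=
    tendsto_cayley_one ha' hz1 (by norm_num)
  have hden : Tendsto (fun i => 1 + (a i : ℂ) * inner ℂ e (z i)) l (𝓝 (1 + 1 * 1)) :=
    tendsto_const_nhds.add (haC.mul hz1)
  have hk : Tendsto (fun i => 2 * (ρ : ℂ) / (1 + a i * inner ℂ e (z i))) l (𝓝 ρ) := by
    have := (tendsto_const_nhds (x := 2 * (ρ : ℂ))).div hden (by norm_num)
    rw [show 2 * (ρ : ℂ) / (1 + 1 * 1) = ρ by ring] at this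
    exact this
  have hn0 : Tendsto (fun i => (neck ρ (a i) : ℂ)) l (𝓝 0) := by
    simpa using (tendsto_neck ρ ha).ofReal
  have hL1 : Tendsto (fun i => (neck ρ (a i) : ℂ) * Complex.log (1 + a i * inner ℂ e (z i))) l
      (𝓝 0) := by
    have h2 := hden.clog (by left; norm_num)
    simpa using hn0.mul h2
  have hL2 : Tendsto (fun i => (neck ρ (a i) : ℂ) * Complex.log (1 - a i * inner ℂ e (z i))) l
      (𝓝 (-(1 - ρ))) := by
    have h1 := tendsto_neck_log ρ ha (fun i => 1 - a i * inner ℂ e (z i))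
    have h2 : Tendsto (fun i => neck ρ (a i) * Real.log ‖1 - a i * inner ℂ e (z i)‖) l
        (𝓝 (-(1 - ρ))) := by
      have hne : (1 : ℂ) + 1 * inner ℂ e w ≠ 0 := fun h => hw1 (by linear_combination h)
      have h3 : Tendsto (fun i => Real.log ‖1 + (a i : ℂ) * inner ℂ e (W i)‖) l
          (𝓝 (Real.log ‖(1 : ℂ) + 1 * inner ℂ e w‖)) :=
        (tendsto_const_nhds.add (haC.mul hW1)).norm.log (norm_ne_zero_iff.2 hne)
      have h4 : Tendsto (fun i => Real.log (1 + a i)) l (𝓝 (Real.log (1 + 1))) :=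
        (ha'.const_add 1).log (by norm_num)
      have h5 := (tendsto_neck ρ ha).mul (h4.sub h3)
      have h6 := h5.const_add (-(1 - ρ))
      rw [zero_mul, add_zero] at h6
      refine h6.congr' ?_
      filter_upwards [hab, hz, hzW] with i hi hzi hzWi
      have habs : |a i| < 1 := by rw [abs_of_pos hi.1]; exact hi.2
      have habs' : |-a i| < 1 := by rwa [abs_neg]
      have hWi : ‖W i‖ < 1 := aut_mem_ball he habs' hzi
      have hneW := one_add_ne_zero he habs hWi.le
      have h7 : 1 - a i * inner ℂ e (z i)
          = (1 - a i : ℝ) * (1 + a i : ℝ) / (1 + a i * inner ℂ e (W i)) := by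
        rw [hzWi]
        push_cast
        field_simp
        ring
      have p1 : 0 < 1 - a i := by linarith [hi.2]
      have p2 : 0 < 1 + a i := by linarith [hi.1]
      rw [h7, norm_div, norm_mul, Complex.norm_real, Complex.norm_real, Real.norm_of_nonneg p1.le,
        Real.norm_of_nonneg p2.le, Real.log_div (by positivity) (norm_ne_zero_iff.2 hneW),
        Real.log_mul p1.ne' p2.ne', neck]
      have : Real.log (1 - a i) ≠ 0 := (Real.log_neg p1 (by linarith [hi.1])).ne
      field_simp
      ring
    have h3 := h1.add ((Complex.continuous_ofReal.tendsto _).comp h2)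
    simp only [Function.comp_def, sub_add_cancel, zero_add] at h3
    simpa using h3
  have hfin := ((((hL1.sub hL2).add (hM.const_mul (ρ : ℂ))).add
    (hW1.const_mul (ρ : ℂ))).smul_const e).add (hk.smul hWp)
  have hval : (0 - -(1 - (ρ : ℂ)) + ρ * 1 + ρ * inner ℂ e w) • e + (ρ : ℂ) • perp e w
      = e + (ρ : ℂ) • w := by
    rw [perp]
    module
  rw [hval] at hfin
  refine hfin.congr' ?_
  filter_upwards [hab, hz] with i hi hzi
  rw [dumb_eq he ρ (by rw [abs_of_pos hi.1]; exact hi.2) hzi.le]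

end Dumb

/-! ### The dumbbell model -/

/-- Continuous convergence on a compact set is uniform. -/
theorem tendstoUniformlyOn_of_tendsto {ι X Y : Type*} [TopologicalSpace X] [UniformSpace Y]
    {l : Filter ι} {G : ι → X → Y} {f : X → Y} {K : Set X} (hK : IsCompact K)
    (hf : ContinuousOn f K)
    (h : ∀ x ∈ K, Tendsto (fun p : ι × X => G p.1 p.2) (l ×ˢ 𝓝[K] x) (𝓝 (f x))) :
    TendstoUniformlyOn G f l K := by
  rw [← tendstoLocallyUniformlyOn_iff_tendstoUniformlyOn_of_compact hK,
    tendstoLocallyUniformlyOn_iff_forall_tendsto]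
  intro x hx
  have h1 : Tendsto (fun p : ι × X => f p.2) (l ×ˢ 𝓝[K] x) (𝓝 (f x)) :=
    (hf x hx).tendsto.comp tendsto_snd
  exact (h1.prodMk_nhds (h x hx)).mono_right (nhds_le_uniformity _)

section Dumb
variable {E : Type*} [NormedAddCommGroup E] [InnerProductSpace ℂ E] [FiniteDimensional ℂ E]
variable {e : E}

/-- By the symmetry `dumb_neg` it suffices to control one half of the ball. A sequence of points in it
subconverges in the coordinate `aut (-a) z`; the limit of their images lies in the ball around `e`
or, in the degenerate case `⟪e, w⟫ = -1`, on the segment. -/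
theorem eventually_dumb_half (he : ‖e‖ = 1) {ρ : ℝ} (hρ0 : 0 < ρ) (hρ1 : ρ < 1) {O : Set E} (hO : IsOpen O)
    (hcore : core e ρ ⊆ O) :
    ∀ᶠ a in 𝓝[<] (1 : ℝ), ∀ z : E, ‖z‖ < 1 → 0 ≤ (inner ℂ e z).re → dumb e ρ a z ∈ O := by
  have := FiniteDimensional.proper ℂ E
  by_contra hcon
  rw [not_eventually] at hcon
  set Q : Set (ℝ × E) := {p | ‖p.2‖ < 1 ∧ 0 ≤ (inner ℂ e p.2).re ∧ dumb e ρ p.1 p.2 ∉ O} with hQ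
  have hfr : ∃ᶠ p in comap (Prod.fst : ℝ × E → ℝ) (𝓝[<] (1 : ℝ)), p ∈ Q := by
    rw [frequently_comap]
    refine hcon.mono fun a ha => ?_
    push Not at ha
    obtain ⟨z, h1, h2, h3⟩ := ha
    exact ⟨(a, z), rfl, h1, h2, h3⟩
  have hne := frequently_mem_iff_neBot.1 hfr
  set U : Ultrafilter (ℝ × E) := Ultrafilter.of (comap (Prod.fst : ℝ × E → ℝ) (𝓝[<] (1 : ℝ)) ⊓ 𝓟 Q)
  have hU : (U : Filter (ℝ × E)) ≤ comap (Prod.fst : ℝ × E → ℝ) (𝓝[<] (1 : ℝ)) ⊓ 𝓟 Q :=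
    Ultrafilter.of_le _
  have ha : Tendsto (Prod.fst : ℝ × E → ℝ) U (𝓝[<] 1) :=
    tendsto_comap.mono_left (hU.trans inf_le_left)
  have hUQ : ∀ᶠ p in (U : Filter (ℝ × E)), p ∈ Q := le_principal_iff.1 (hU.trans inf_le_right)
  have ha' : Tendsto (Prod.fst : ℝ × E → ℝ) U (𝓝 1) := ha.mono_right nhdsWithin_le_nhds
  have hab : ∀ᶠ p in (U : Filter (ℝ × E)), 0 < p.1 ∧ p.1 < 1 :=
    Filter.Eventually.and (ha'.eventually (lt_mem_nhds zero_lt_one))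
      (ha.eventually self_mem_nhdsWithin)
  have habs : ∀ᶠ p in (U : Filter (ℝ × E)), |p.1| < 1 := by
    filter_upwards [hab] with p hp
    rw [abs_of_pos hp.1]; exact hp.2
  have hclosed : ∀ y : E, Tendsto (fun p : ℝ × E => dumb e ρ p.1 p.2) U (𝓝 y) → y ∈ O → False := by
    intro y hy hyO
    obtain ⟨p, h1, h2⟩ := (Filter.Eventually.and (hy.eventually (hO.mem_nhds hyO)) hUQ).exists
    exact h2.2.2 h1
  set W : ℝ × E → E := fun p => aut e (-p.1) p.2 with hW
  have hWb : ∀ᶠ p in (U : Filter (ℝ × E)), ‖W p‖ < 1 := by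
    filter_upwards [habs, hUQ] with p hp hpQ
    exact aut_mem_ball he (by rwa [abs_neg]) hpQ.1
  obtain ⟨w, hw⟩ := exists_tendsto_of_bounded U (hWb.mono fun p hp => hp.le)
  have hw1 : ‖w‖ ≤ 1 := le_of_tendsto hw.norm (hWb.mono fun p hp => hp.le)
  by_cases hcase : inner ℂ e w = -1
  swap
  · refine hclosed _ (tendsto_dumb he ρ ha (hUQ.mono fun p hp => hp.1) hw hcase) (hcore ?_)
    left; right
    rw [mem_closedBall, dist_eq_norm, add_sub_cancel_left, norm_smul, Complex.norm_real,
      Real.norm_of_nonneg hρ0.le]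
    nlinarith
  -- here the limit lies on the segment
  have hpw : perp e w = 0 := by
    have h1 := norm_sq_perp he w
    rw [hcase, norm_neg, norm_one] at h1
    have : ‖perp e w‖ ^ 2 ≤ 0 := by nlinarith [norm_nonneg w]
    exact norm_eq_zero.1 (by nlinarith [norm_nonneg (perp e w)])
  have hi : Continuous (fun z : E => inner ℂ e z) := (innerSL ℂ e).continuous
  have hp : Continuous (perp e) := continuous_id.sub (hi.smul continuous_const)
  have hW1 : Tendsto (fun p => inner ℂ e (W p)) U (𝓝 (-1)) := by
    have := (hi.tendsto w).comp hw
    rwa [hcase] at this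
  have hWp : Tendsto (fun p => perp e (W p)) U (𝓝 0) := by
    have := (hp.tendsto w).comp hw
    rwa [hpw] at this
  have hx1 : ∀ᶠ p in (U : Filter (ℝ × E)), ‖inner ℂ e p.2‖ < 1 := by
    filter_upwards [hUQ] with p hp
    exact (norm_inner_le he _).trans_lt hp.1
  have hden1 : ∀ᶠ p in (U : Filter (ℝ × E)), 1 ≤ ‖1 + (p.1 : ℂ) * inner ℂ e p.2‖ := by
    filter_upwards [hUQ, hab] with p hp hap
    refine le_trans ?_ (Complex.re_le_norm _)
    rw [Complex.add_re, Complex.one_re, Complex.re_ofReal_mul]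
    nlinarith [hp.2.1, hap.1]
  have hnx : ∀ᶠ p in (U : Filter (ℝ × E)), ‖(p.1 : ℂ) * inner ℂ e p.2‖ ≤ p.1 := by
    filter_upwards [hx1, hab] with p hp hap
    rw [norm_mul, Complex.norm_real, Real.norm_of_nonneg hap.1.le]
    nlinarith [hap.1]
  have hn0 := tendsto_neck ρ ha
  have hn0C : Tendsto (fun p : ℝ × E => (neck ρ p.1 : ℂ)) U (𝓝 0) := by simpa using hn0.ofReal
  have hL1 : Tendsto (fun p : ℝ × E => (neck ρ p.1 : ℂ) * Complex.log (1 + p.1 * inner ℂ e p.2)) U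
      (𝓝 0) := by
    have h1 := tendsto_neck_log ρ ha (fun p : ℝ × E => 1 + p.1 * inner ℂ e p.2)
    have h2 : Tendsto (fun p : ℝ × E => neck ρ p.1 * Real.log ‖1 + (p.1 : ℂ) * inner ℂ e p.2‖) U
        (𝓝 0) := by
      refine hn0.zero_mul_isBoundedUnder_le ⟨Real.log 2, ?_⟩
      simp only [eventually_map]
      filter_upwards [hden1, hnx, hab] with p hp hpx hap
      have h3 : ‖1 + (p.1 : ℂ) * inner ℂ e p.2‖ ≤ 2 := by
        refine (norm_add_le _ _).trans ?_
        rw [norm_one]; linarith [hap.2]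
      simp only [Function.comp_apply, Real.norm_of_nonneg (Real.log_nonneg hp)]
      exact Real.log_le_log (by linarith) h3
    simpa using h1.add h2.ofReal
  have hlam : ∀ᶠ p in (U : Filter (ℝ × E)),
      -(neck ρ p.1 * Real.log ‖1 - (p.1 : ℂ) * inner ℂ e p.2‖) ∈
        Icc (-(neck ρ p.1 * Real.log 2)) (1 - ρ) := by
    filter_upwards [hnx, hab] with p hpx hap
    have hnp := neck_pos hρ1 hap.1 hap.2
    have p1 : 0 < 1 - p.1 := by linarith [hap.2]
    have h3 : ‖1 - (p.1 : ℂ) * inner ℂ e p.2‖ ≤ 2 := by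
      refine (norm_sub_le _ _).trans ?_
      rw [norm_one]; linarith [hap.2]
    have h4 : 1 - p.1 ≤ ‖1 - (p.1 : ℂ) * inner ℂ e p.2‖ := by
      have := norm_sub_norm_le (1 : ℂ) ((p.1 : ℂ) * inner ℂ e p.2)
      rw [norm_one] at this; linarith
    have h5 := Real.log_le_log p1 h4
    have h6 := Real.log_le_log (by linarith) h3
    have h7 : neck ρ p.1 * Real.log (1 - p.1) = -(1 - ρ) := by
      have : Real.log (1 - p.1) ≠ 0 := (Real.log_neg p1 (by linarith [hap.1])).ne
      rw [neck]; field_simp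
    constructor
    · nlinarith
    · nlinarith
  obtain ⟨lam, hl⟩ := exists_tendsto_of_bounded (C := 1 - ρ + Real.log 2) U
    (g := fun p : ℝ × E => -(neck ρ p.1 * Real.log ‖1 - (p.1 : ℂ) * inner ℂ e p.2‖)) (by
      filter_upwards [hlam, hab, hn0.eventually (gt_mem_nhds zero_lt_one)] with p hp hap hn
      have hl2 : 0 < Real.log 2 := Real.log_pos (by norm_num)
      rw [Real.norm_eq_abs, abs_le]
      constructor
      · nlinarith [hp.1]
      · linarith [hp.2])
  have hl0 : 0 ≤ lam := by
    have h1 : Tendsto (fun p : ℝ × E => -(neck ρ p.1 * Real.log 2)) U (𝓝 0) := by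
      simpa using (hn0.mul_const (Real.log 2)).neg
    exact le_of_tendsto_of_tendsto h1 hl (hlam.mono fun p hp => hp.1)
  have hl1 : lam ≤ 1 - ρ := le_of_tendsto hl (hlam.mono fun p hp => hp.2)
  have hL2 : Tendsto (fun p : ℝ × E => (neck ρ p.1 : ℂ) * Complex.log (1 - p.1 * inner ℂ e p.2)) U
      (𝓝 (-lam)) := by
    have h1 := tendsto_neck_log ρ ha (fun p : ℝ × E => 1 - p.1 * inner ℂ e p.2)
    have h2 := h1.sub hl.ofReal
    simpa using h2
  have hM : Tendsto (fun p : ℝ × E => (inner ℂ e p.2 + p.1) / (1 + p.1 * inner ℂ e p.2)) U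
      (𝓝 1) := by
    rw [tendsto_iff_norm_sub_tendsto_zero]
    have h1 : Tendsto (fun p : ℝ × E => 2 * (1 - p.1)) U (𝓝 0) := by
      simpa using (ha'.const_sub 1).const_mul 2
    refine squeeze_zero' (Eventually.of_forall fun p => norm_nonneg _) ?_ h1
    filter_upwards [hden1, hab, hx1] with p hp hap hpx
    have hne : 1 + (p.1 : ℂ) * inner ℂ e p.2 ≠ 0 := norm_pos_iff.1 (by linarith)
    have h2 : (inner ℂ e p.2 + p.1) / (1 + p.1 * inner ℂ e p.2) - 1
        = (inner ℂ e p.2 - 1) * ((1 - p.1 : ℝ) : ℂ) / (1 + p.1 * inner ℂ e p.2) := by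
      push_cast
      rw [eq_div_iff hne, sub_mul, div_mul_cancel₀ _ hne]
      ring
    have h3 : ‖inner ℂ e p.2 - 1‖ ≤ 2 := by
      refine (norm_sub_le _ _).trans ?_
      rw [norm_one]; linarith
    have p1 : 0 < 1 - p.1 := by linarith [hap.2]
    rw [h2, norm_div, norm_mul, Complex.norm_real, Real.norm_of_nonneg p1.le]
    refine (div_le_self (by positivity) hp).trans ?_
    nlinarith
  have hk : Tendsto (fun p : ℝ × E => (2 * ρ / (1 + p.1 * inner ℂ e p.2)) • perp e (W p)) U
      (𝓝 0) := by
    rw [tendsto_zero_iff_norm_tendsto_zero]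
    have h1 : Tendsto (fun p : ℝ × E => 2 * ρ * ‖perp e (W p)‖) U (𝓝 0) := by
      simpa using hWp.norm.const_mul (2 * ρ)
    refine squeeze_zero' (Eventually.of_forall fun p => norm_nonneg _) ?_ h1
    filter_upwards [hden1] with p hp
    rw [norm_smul, norm_div]
    have h2 : ‖(2 * ρ : ℂ)‖ = 2 * ρ := by
      rw [norm_mul, Complex.norm_real, Real.norm_of_nonneg hρ0.le]; simp
    rw [h2]
    gcongr
    exact div_le_self (by positivity) hp
  have hfin := ((((hL1.sub hL2).add (hM.const_mul (ρ : ℂ))).add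
    (hW1.const_mul (ρ : ℂ))).smul_const e).add hk
  have hval : (0 - -(lam : ℂ) + ρ * 1 + ρ * (-1)) • e + 0 = (lam : ℂ) • e := by
    rw [add_zero]; congr 1; ring
  rw [hval] at hfin
  refine hclosed _ (hfin.congr' ?_) (hcore (Or.inr ⟨lam, ⟨by linarith, hl1⟩, rfl⟩))
  filter_upwards [habs, hUQ] with p hp hpQ
  rw [dumb_eq he ρ hp hpQ.1.le]

/-- The model: a ball embedded near two balls joined by a segment, almost filling both balls. -/
theorem exists_dumbbell (he : ‖e‖ = 1) {ρ ρ' : ℝ} (hρ0 : 0 < ρ) (hρ1 : ρ < 1) (hρ' : ρ' < ρ) {O : Set E}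
    (hO : IsOpen O) (hcore : core e ρ ⊆ O) :
    ∃ Ψ : E → E, DifferentiableOn ℂ Ψ (ball 0 1) ∧ InjOn Ψ (ball 0 1) ∧ MapsTo Ψ (ball 0 1) O ∧
      ball (-e) ρ' ⊆ Ψ '' ball 0 1 ∧ ball e ρ' ⊆ Ψ '' ball 0 1 := by
  have := FiniteDimensional.proper ℂ E
  have hρC : (ρ : ℂ) ≠ 0 := by exact_mod_cast hρ0.ne'
  have hO' : IsOpen (Neg.neg ⁻¹' O) := hO.preimage continuous_neg
  have hcore' : core e ρ ⊆ Neg.neg ⁻¹' O := fun z hz => hcore (neg_mem_core hz)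
  have ha01 : ∀ᶠ a in 𝓝[<] (1 : ℝ), 0 < a ∧ a < 1 :=
    Filter.Eventually.and (nhdsWithin_le_nhds (lt_mem_nhds zero_lt_one)) self_mem_nhdsWithin
  set r' := ρ' / ρ with hr'
  have hr'1 : r' < 1 := (div_lt_one hρ0).2 hρ'
  have hunif : TendstoUniformlyOn (fun a w => dumb e ρ a (aut e a w)) (fun w => e + (ρ : ℂ) • w)
      (𝓝[<] (1 : ℝ)) (closedBall 0 ((r' + 1) / 2)) := by
    refine tendstoUniformlyOn_of_tendsto (isCompact_closedBall _ _) (by fun_prop) ?_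
    intro w hw
    have hwn : ‖w‖ < 1 := by rw [mem_closedBall_zero_iff] at hw; linarith
    have hin : ∀ᶠ p : ℝ × E in 𝓝[<] (1 : ℝ) ×ˢ 𝓝[closedBall 0 ((r' + 1) / 2)] w,
        (0 < p.1 ∧ p.1 < 1) ∧ ‖p.2‖ < 1 := by
      refine Filter.Eventually.and (tendsto_fst.eventually ha01) ?_
      have h1 : ∀ᶠ x in 𝓝[closedBall 0 ((r' + 1) / 2)] w, ‖x‖ < 1 := by
        filter_upwards [self_mem_nhdsWithin] with x hx
        rw [mem_closedBall_zero_iff] at hx; linarith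
      exact tendsto_snd.eventually h1
    refine tendsto_dumb he ρ tendsto_fst ?_ ?_ ?_
    · filter_upwards [hin] with p hp
      exact aut_mem_ball he (by rw [abs_of_pos hp.1.1]; exact hp.1.2) hp.2
    · have h1 : Tendsto (fun p : ℝ × E => p.2) (𝓝[<] (1 : ℝ) ×ˢ 𝓝[closedBall 0 ((r' + 1) / 2)] w)
        (𝓝 w) := tendsto_snd.mono_right nhdsWithin_le_nhds
      refine h1.congr' ?_
      filter_upwards [hin] with p hp
      rw [aut_neg_aut he (by rw [abs_of_pos hp.1.1]; exact hp.1.2) hp.2.le]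
    · intro h
      have := norm_inner_le he w
      rw [h, norm_neg, norm_one] at this
      linarith
  have hcov := eventually_cover (l := 𝓝[<] (1 : ℝ)) (ρ' := r') (ρ := (r' + 1) / 2) (R := 1) rfl
    (by linarith) (by linarith) (F := fun w : E => e + (ρ : ℂ) • w) (by fun_prop)
    (fun x _ y _ hxy => smul_right_injective E hρC (add_left_cancel hxy))
    (by
      filter_upwards [ha01] with a ha
      have habs : |a| < 1 := by rw [abs_of_pos ha.1]; exact ha.2
      have hmaps : MapsTo (aut e a) (ball 0 1) (ball 0 1) := fun w hw =>
        mem_ball_zero_iff.2 (aut_mem_ball he habs (mem_ball_zero_iff.1 hw))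
      refine ⟨(differentiableOn_dumb he habs).comp (differentiableOn_aut he habs) hmaps, ?_⟩
      refine (injOn_dumb he hρ0 hρ1 ha.1 ha.2).comp ?_ hmaps
      intro x hx y hy hxy
      rw [← aut_neg_aut he habs (mem_ball_zero_iff.1 hx).le, hxy,
        aut_neg_aut he habs (mem_ball_zero_iff.1 hy).le]) hunif
  obtain ⟨a, ha, h1, h2, h3⟩ := (Filter.Eventually.and ha01 (Filter.Eventually.and
    (eventually_dumb_half he hρ0 hρ1 hO hcore) (Filter.Eventually.and
    (eventually_dumb_half he hρ0 hρ1 hO' hcore') hcov))).exists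
  have habs : |a| < 1 := by rw [abs_of_pos ha.1]; exact ha.2
  have hcovR : ball e ρ' ⊆ dumb e ρ a '' ball 0 1 := by
    intro x hx
    have hx' : x ∈ (fun w : E => e + (ρ : ℂ) • w) '' closedBall 0 r' := by
      refine ⟨(ρ : ℂ)⁻¹ • (x - e), ?_, ?_⟩
      · rw [mem_closedBall_zero_iff, norm_smul, norm_inv, Complex.norm_real,
          Real.norm_of_nonneg hρ0.le, hr', div_eq_inv_mul]
        rw [mem_ball, dist_eq_norm] at hx
        gcongr
      · simp only []
        rw [smul_smul, mul_inv_cancel₀ hρC, one_smul]; abel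
    obtain ⟨w, hw, rfl⟩ := h3 hx'
    exact ⟨_, mem_ball_zero_iff.2 (aut_mem_ball he habs
      ((mem_ball_zero_iff.1 hw).trans (by linarith))), rfl⟩
  refine ⟨dumb e ρ a, differentiableOn_dumb he habs, injOn_dumb he hρ0 hρ1 ha.1 ha.2, ?_, ?_, hcovR⟩
  · intro z hz
    rw [mem_ball_zero_iff] at hz
    rcases le_total 0 (inner ℂ e z).re with h | h
    · exact h1 z hz h
    · have := h2 (-z) (by rwa [norm_neg]) (by rw [inner_neg_right, Complex.neg_re]; linarith)
      rw [dumb_neg] at this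
      simpa using this
  · intro x hx
    have hx' : -x ∈ ball e ρ' := by
      rw [mem_ball, dist_eq_norm] at hx ⊢
      rwa [← norm_neg, show -(-x - e) = x - -e by abel]
    obtain ⟨z, hz, hzx⟩ := hcovR hx'
    refine ⟨-z, by simpa using hz, ?_⟩
    rw [dumb_neg, hzx, neg_neg]

end Dumb

/-! ### Transversality -/

section Alg
variable {E : Type*} [NormedAddCommGroup E] [InnerProductSpace ℂ E] [FiniteDimensional ℂ E]

/-- The quantitative transversality used near the contact point: no interpolation between the
(perturbed) differentials `A`, `B` with a large multiple of `d` in the direction `e` annihilates a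
unit vector. -/
def Transverse (e : E) (A B : E →L[ℂ] E) (d : E) (ε : ℝ) : Prop :=
  ∀ t ∈ Icc (0 : ℝ) 1, ∀ N : ℝ, 1 / ε ≤ N → ∀ v α β δ : E, ‖v‖ = 1 → ‖α - A v‖ ≤ ε →
    ‖β - B v‖ ≤ ε → ‖δ - d‖ ≤ ε →
    ((1 - t : ℝ) : ℂ) • α + (t : ℂ) • β + (((N * (t * (1 - t)) : ℝ) : ℂ) * inner ℂ e v) • δ ≠ 0

/-- Compactness upgrades three linear-algebra conditions to quantitative transversality: `hA` and
`hB` govern the two ends `t → 0`, `t → 1` of the interpolation, and `hAB` the case in which a large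
`N` forces `⟪e, v⟫` to be small. -/
theorem exists_transverse (e : E) (A B : E →L[ℂ] E) {d : E} (hd : d ≠ 0)
    (hA : ∀ (v : E) (b : ℂ), A v + b • d = 0 → 0 ≤ (b * (starRingEnd ℂ) (inner ℂ e v)).re → v = 0)
    (hB : ∀ (v : E) (b : ℂ), B v + b • d = 0 → 0 ≤ (b * (starRingEnd ℂ) (inner ℂ e v)).re → v = 0)
    (hAB : ∀ t ∈ Icc (0 : ℝ) 1, ∀ (v : E) (b : ℂ), inner ℂ e v = 0 →
      ((1 - t : ℝ) : ℂ) • A v + (t : ℂ) • B v + b • d = 0 → v = 0) :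
    ∃ ε > 0, Transverse e A B d ε := by
  have := FiniteDimensional.proper ℂ E
  have hdn : 0 < ‖d‖ := norm_pos_iff.2 hd
  set M : ℝ := (‖A‖ + ‖B‖ + 2) / (‖d‖ / 2) with hM
  have hM0 : 0 < M := by positivity
  set Q : Set (ℝ × E × ℂ) := (Icc (0 : ℝ) 1 ×ˢ (sphere (0 : E) 1 ×ˢ closedBall (0 : ℂ) M)) ∩
    {p | 0 ≤ (p.2.2 * (starRingEnd ℂ) (inner ℂ e p.2.1)).re} with hQ
  have hi : Continuous (fun z : E => inner ℂ e z) := (innerSL ℂ e).continuous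
  have hQc : IsCompact Q := by
    refine (isCompact_Icc.prod ((isCompact_sphere _ _).prod (isCompact_closedBall _ _))).inter_right ?_
    refine isClosed_le continuous_const ?_
    exact Complex.continuous_re.comp ((continuous_snd.comp continuous_snd).mul
      (Complex.continuous_conj.comp (hi.comp (continuous_fst.comp continuous_snd))))
  set φ : ℝ × E × ℂ → ℝ := fun p =>
    ‖((1 - p.1 : ℝ) : ℂ) • A p.2.1 + (p.1 : ℂ) • B p.2.1 + p.2.2 • d‖
      + ‖((p.1 * (1 - p.1) : ℝ) : ℂ) * inner ℂ e p.2.1‖ with hφ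
  have hφc : Continuous φ := by
    refine Continuous.add ?_ ?_
    · fun_prop
    · exact (Continuous.mul (by fun_prop) (hi.comp (continuous_fst.comp continuous_snd))).norm
  have hpos : ∀ p ∈ Q, 0 < φ p := by
    rintro ⟨t, v, b⟩ ⟨⟨ht, hv, hb⟩, hre⟩
    simp only [mem_sphere_zero_iff_norm] at hv
    by_contra hle
    have h0 : ‖((1 - t : ℝ) : ℂ) • A v + (t : ℂ) • B v + b • d‖ = 0 ∧
        ‖((t * (1 - t) : ℝ) : ℂ) * inner ℂ e v‖ = 0 := by
      simp only [hφ, not_lt] at hle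
      constructor
      · linarith [norm_nonneg (((1 - t : ℝ) : ℂ) • A v + (t : ℂ) • B v + b • d),
          norm_nonneg (((t * (1 - t) : ℝ) : ℂ) * inner ℂ e v)]
      · linarith [norm_nonneg (((1 - t : ℝ) : ℂ) • A v + (t : ℂ) • B v + b • d),
          norm_nonneg (((t * (1 - t) : ℝ) : ℂ) * inner ℂ e v)]
    rw [norm_eq_zero, norm_eq_zero, mul_eq_zero] at h0
    have hre' : 0 ≤ (b * (starRingEnd ℂ) (inner ℂ e v)).re := hre
    have hv0 : v = 0 := by
      rcases h0.2 with h | h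
      · have h' : t * (1 - t) = 0 := by exact_mod_cast h
        rcases mul_eq_zero.1 h' with h | h
        · refine hA v b ?_ hre'
          have := h0.1
          rw [h] at this
          simpa using this
        · refine hB v b ?_ hre'
          have := h0.1
          rw [h, show t = 1 by linarith] at this
          simpa using this
      · exact hAB t ht v b h h0.1
    rw [hv0, norm_zero] at hv
    exact zero_ne_one hv
  obtain ⟨c, hc0, hc⟩ := hQc.exists_forall_le' hφc.continuousOn hpos
  set ε : ℝ := min (min 1 (‖d‖ / 2)) (c / (2 * (2 + 2 * M))) with hε
  have hε0 : 0 < ε := by positivity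
  have hε1 : ε ≤ 1 := (min_le_left _ _).trans (min_le_left _ _)
  have hε2 : ε ≤ ‖d‖ / 2 := (min_le_left _ _).trans (min_le_right _ _)
  have hε3 : ε * (2 + 2 * M) < c := by
    have : ε ≤ c / (2 * (2 + 2 * M)) := min_le_right _ _
    rw [le_div_iff₀ (by positivity)] at this
    nlinarith
  refine ⟨ε, hε0, ?_⟩
  intro t ht N hN v α β δ hv hα hβ hδ heq
  have hN0 : 0 < N := lt_of_lt_of_le (by positivity) hN
  have ht1 : 0 ≤ 1 - t := by linarith [ht.2]
  set b : ℂ := ((N * (t * (1 - t)) : ℝ) : ℂ) * inner ℂ e v with hb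
  have hAv : ‖A v‖ ≤ ‖A‖ := by simpa [hv] using A.le_opNorm v
  have hBv : ‖B v‖ ≤ ‖B‖ := by simpa [hv] using B.le_opNorm v
  have hα' : ‖α‖ ≤ ‖A‖ + 1 := by
    have := norm_add_le (α - A v) (A v); rw [sub_add_cancel] at this; linarith
  have hβ' : ‖β‖ ≤ ‖B‖ + 1 := by
    have := norm_add_le (β - B v) (B v); rw [sub_add_cancel] at this; linarith
  have hδ' : ‖d‖ / 2 ≤ ‖δ‖ := by
    have := norm_sub_norm_le d (d - δ)
    rw [sub_sub_cancel, norm_sub_rev] at this; linarith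
  have nt : ‖(t : ℂ)‖ = t := by rw [Complex.norm_real, Real.norm_of_nonneg ht.1]
  have nt1 : ‖((1 - t : ℝ) : ℂ)‖ = 1 - t := by rw [Complex.norm_real, Real.norm_of_nonneg ht1]
  have hbM : ‖b‖ ≤ M := by
    have h1 : b • δ = -(((1 - t : ℝ) : ℂ) • α + (t : ℂ) • β) := by
      exact eq_neg_of_add_eq_zero_right heq
    have h2 : ‖b‖ * ‖δ‖ ≤ ‖A‖ + ‖B‖ + 2 := by
      rw [← norm_smul, h1, norm_neg]
      refine (norm_add_le _ _).trans ?_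
      rw [norm_smul, norm_smul, nt, nt1]
      nlinarith [norm_nonneg α, norm_nonneg β, ht.1, ht.2]
    rw [hM, le_div_iff₀ (by positivity)]
    nlinarith [norm_nonneg b]
  have hmem : (t, v, b) ∈ Q := by
    refine ⟨⟨ht, by simpa using hv, by simpa using hbM⟩, ?_⟩
    show 0 ≤ (b * (starRingEnd ℂ) (inner ℂ e v)).re
    rw [hb, mul_assoc, Complex.mul_conj, ← Complex.ofReal_mul, Complex.ofReal_re]
    exact mul_nonneg (mul_nonneg hN0.le (mul_nonneg ht.1 ht1)) (Complex.normSq_nonneg _)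
  have h1 := hc _ hmem
  have h2 : ‖((1 - t : ℝ) : ℂ) • A v + (t : ℂ) • B v + b • d‖ ≤ ε * (1 + M) := by
    have h3 : ((1 - t : ℝ) : ℂ) • A v + (t : ℂ) • B v + b • d
        = -(((1 - t : ℝ) : ℂ) • (α - A v) + (t : ℂ) • (β - B v) + b • (δ - d)) := by
      have h4 : ((1 - t : ℝ) : ℂ) • A v + (t : ℂ) • B v + b • d
        = ((1 - t : ℝ) : ℂ) • A v + (t : ℂ) • B v + b • d -
          (((1 - t : ℝ) : ℂ) • α + (t : ℂ) • β + b • δ) := by rw [heq, sub_zero]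
      rw [h4]
      module
    rw [h3, norm_neg]
    refine (norm_add_le _ _).trans ?_
    refine (add_le_add_left (norm_add_le _ _) _).trans ?_
    rw [norm_smul, norm_smul, norm_smul, nt, nt1]
    have h5 : ‖b‖ * ‖δ - d‖ ≤ M * ε := by gcongr
    nlinarith [ht.1, ht.2]
  have h3 : ‖((t * (1 - t) : ℝ) : ℂ) * inner ℂ e v‖ ≤ ε * M := by
    have h4 : N * ‖((t * (1 - t) : ℝ) : ℂ) * inner ℂ e v‖ = ‖b‖ := by
      rw [hb, Complex.ofReal_mul N, mul_assoc, norm_mul (N : ℂ), Complex.norm_real,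
        Real.norm_of_nonneg hN0.le]
    rw [div_le_iff₀ hε0] at hN
    have h5 := norm_nonneg (((t * (1 - t) : ℝ) : ℂ) * inner ℂ e v)
    nlinarith
  have h6 : φ (t, v, b) ≤ ε * (1 + M) + ε * M := add_le_add h2 h3
  nlinarith

end Alg

/-! ### Generic rotations -/

section Rot
variable {E : Type*} [NormedAddCommGroup E] [InnerProductSpace ℂ E] [FiniteDimensional ℂ E]

/-- The unitary map that fixes `e` and multiplies the orthogonal complement of `e` by a unimodular
scalar `μ`. -/
theorem exists_isometry_smul_perp {e : E} (he : ‖e‖ = 1) {μ : ℂ} (hμ : ‖μ‖ = 1) :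
    ∃ T : E ≃ₗᵢ[ℂ] E, T e = e ∧ ∀ v, inner ℂ e v = 0 → T v = μ • v := by
  set L : E →L[ℂ] E := (innerSL ℂ e).smulRight e
    + μ • (ContinuousLinearMap.id ℂ E - (innerSL ℂ e).smulRight e) with hL
  have hLv : ∀ v, L v = inner ℂ e v • e + μ • perp e v := fun v => by
    simp [hL, perp]
  have hn : ∀ v, ‖L v‖ = ‖v‖ := fun v => by
    rw [← sq_eq_sq₀ (norm_nonneg _) (norm_nonneg _), hLv, norm_sq_add_perp he, hμ,
      norm_sq_perp he v]
    ring
  refine ⟨LinearIsometry.toLinearIsometryEquiv ⟨L.toLinearMap, hn⟩ rfl, ?_, ?_⟩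
  · show L e = e
    rw [hLv, perp, inner_self_unit he]; simp
  · intro v hv
    show L v = _
    rw [hLv, perp, hv]; simp

/-- A generic choice of the rotation makes the interpolations between `A` and `B ∘ T` injective
modulo `d` on the orthogonal complement of `e`: the bad rotation parameters are the (finitely many)
opposite phases of eigenvalues of the compression of `A⁻¹ B`. -/
theorem exists_rotation {e : E} (he : ‖e‖ = 1) (A B : E ≃L[ℂ] E) {d : E}
    (hA : inner ℂ e (A.symm d) ≠ 0) (hB : inner ℂ e (B.symm d) ≠ 0) :
    ∃ T : E ≃ₗᵢ[ℂ] E, T e = e ∧ ∀ t ∈ Icc (0 : ℝ) 1, ∀ (v : E) (b : ℂ), inner ℂ e v = 0 →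
      ((1 - t : ℝ) : ℂ) • A v + (t : ℂ) • B (T v) + b • d = 0 → v = 0 := by
  set Q : E →L[ℂ] E := ContinuousLinearMap.id ℂ E
    - ((inner ℂ e (A.symm d))⁻¹ • innerSL ℂ e).smulRight (A.symm d) with hQ
  have hQv : ∀ v, Q v = v - ((inner ℂ e (A.symm d))⁻¹ * inner ℂ e v) • A.symm d := fun v => by
    simp [hQ]
  set S : E →ₗ[ℂ] E := Q.toLinearMap ∘ₗ A.symm.toLinearEquiv.toLinearMap ∘ₗ
    B.toLinearEquiv.toLinearMap with hS
  have hSv : ∀ v, S v = Q (A.symm (B v)) := fun v => rfl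
  have hfin : ((fun l : ℂ => -((‖l‖ : ℝ) : ℂ) / l) '' {l | Module.End.HasEigenvalue S l}).Finite :=
    (Module.End.finite_hasEigenvalue S).image _
  have hinf : (sphere (0 : ℂ) 1).Infinite := by
    refine (isPreconnected_sphere ?_ (0 : ℂ) 1).infinite_of_nontrivial ⟨1, by simp, -1, by simp, ?_⟩
    · rw [Complex.rank_real_complex]; norm_num
    · norm_num
  obtain ⟨μ, hμ, hμbad⟩ := hinf.exists_notMem_finite hfin
  have hμ1 : ‖μ‖ = 1 := by simpa using hμ
  have hμ0 : μ ≠ 0 := fun h => by simp [h] at hμ1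
  obtain ⟨T, hTe, hT⟩ := exists_isometry_smul_perp he hμ1
  refine ⟨T, hTe, ?_⟩
  intro t ht v b hv heq
  rw [hT v hv, map_smul] at heq
  rcases eq_or_ne t 1 with rfl | ht1
  · have h1 : μ • v = -(b • B.symm d) := by
      have := congrArg B.symm heq
      simp at this
      exact eq_neg_of_add_eq_zero_left this
    have h2 := congrArg (fun w => inner ℂ e w) h1
    simp only [inner_smul_right, hv, inner_neg_right, mul_zero] at h2
    have hb : b = 0 := by
      rcases mul_eq_zero.1 (neg_eq_zero.1 h2.symm) with h | h
      · exact h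
      · exact absurd h hB
    rw [hb, zero_smul, neg_zero] at h1
    exact (smul_eq_zero.1 h1).resolve_left hμ0
  have h1 : ((1 - t : ℝ) : ℂ) • v + ((t : ℂ) * μ) • A.symm (B v) + b • A.symm d = 0 := by
    have := congrArg A.symm heq
    rwa [map_add, map_add, map_smul, map_smul, map_smul, map_smul, map_zero, A.symm_apply_apply,
      smul_smul] at this
  have h2 : ((1 - t : ℝ) : ℂ) • v + ((t : ℂ) * μ) • S v = 0 := by
    have h3 := congrArg Q h1
    rw [map_add, map_add, map_smul, map_smul, map_smul, map_zero, ← hSv, hQv v, hQv (A.symm d), hv,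
      inv_mul_cancel₀ hA, one_smul, sub_self, smul_zero, add_zero, mul_zero, zero_smul,
      sub_zero] at h3
    exact h3
  have h1t : (0 : ℝ) < 1 - t := lt_of_le_of_ne (by linarith [ht.2]) (fun h => ht1 (by linarith))
  rcases eq_or_ne t 0 with rfl | ht0
  · simpa using h2
  by_contra hv0
  have htp : 0 < t := lt_of_le_of_ne ht.1 (Ne.symm ht0)
  have htc : (t : ℂ) ≠ 0 := by exact_mod_cast ht0
  set l : ℂ := -(((1 - t : ℝ) : ℂ) / ((t : ℂ) * μ)) with hl
  have hSl : S v = l • v := by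
    have h4 : ((t : ℂ) * μ) • S v = -(((1 - t : ℝ) : ℂ) • v) := eq_neg_of_add_eq_zero_right h2
    have h5 : S v = ((t : ℂ) * μ)⁻¹ • (((t : ℂ) * μ) • S v) := by
      rw [smul_smul, inv_mul_cancel₀ (mul_ne_zero htc hμ0), one_smul]
    rw [h5, h4, smul_neg, smul_smul, ← neg_smul, hl]
    congr 1
    field_simp
  have hev : Module.End.HasEigenvalue S l :=
    Module.End.hasEigenvalue_of_hasEigenvector
      (Module.End.hasEigenvector_iff.2 ⟨Module.End.mem_eigenspace_iff.2 hSl, hv0⟩)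
  refine hμbad ⟨l, hev, ?_⟩
  have hln : ‖l‖ = (1 - t) / t := by
    rw [hl, norm_neg, norm_div, norm_mul, hμ1, Complex.norm_real, Complex.norm_real,
      Real.norm_of_nonneg h1t.le, Real.norm_of_nonneg ht.1, mul_one]
  have h1tc : (1 - (t : ℂ)) ≠ 0 := by
    have : ((1 - t : ℝ) : ℂ) ≠ 0 := by exact_mod_cast h1t.ne'
    simpa using this
  show -((‖l‖ : ℝ) : ℂ) / l = μ
  rw [hln, hl]
  push_cast
  field_simp

/-- If `A⁻¹ d` has positive real component along `e`, then a nonnegative multiple of `d` in the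
direction `e` cannot cancel `A`. -/
theorem eq_zero_of_re_pos {e : E} (A : E ≃L[ℂ] E) {d : E} (hA : 0 < (inner ℂ e (A.symm d)).re)
    (v : E) (b : ℂ) (h : A v + b • d = 0)
    (hb : 0 ≤ (b * (starRingEnd ℂ) (inner ℂ e v)).re) : v = 0 := by
  have h1 : v = -(b • A.symm d) := by
    have := congrArg A.symm h
    simp at this
    exact eq_neg_of_add_eq_zero_left this
  have h2 : inner ℂ e v = -(b * inner ℂ e (A.symm d)) := by
    rw [h1, inner_neg_right, inner_smul_right]
  have h3 : (b * (starRingEnd ℂ) (inner ℂ e v)).re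
      = -(Complex.normSq b * (inner ℂ e (A.symm d)).re) := by
    rw [h2, map_neg, map_mul, mul_neg, ← mul_assoc, Complex.mul_conj, Complex.neg_re,
      Complex.re_ofReal_mul, Complex.conj_re]
  rw [h3] at hb
  have h4 : Complex.normSq b = 0 := by nlinarith [Complex.normSq_nonneg b]
  rw [Complex.normSq_eq_zero.1 h4, zero_smul, neg_zero] at h1
  exact h1

theorem exists_rotation_transverse {e : E} (he : ‖e‖ = 1) (A B : E ≃L[ℂ] E) {d : E}
    (hA : 0 < (inner ℂ e (A.symm d)).re) (hB : 0 < (inner ℂ e (B.symm d)).re) :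
    ∃ T : E ≃ₗᵢ[ℂ] E, T e = e ∧ ∃ ε > 0, Transverse e (A : E →L[ℂ] E)
      ((B : E →L[ℂ] E) ∘L (T.toContinuousLinearEquiv : E →L[ℂ] E)) d ε := by
  have hA0 : inner ℂ e (A.symm d) ≠ 0 := fun h => by simp [h] at hA
  have hB0 : inner ℂ e (B.symm d) ≠ 0 := fun h => by simp [h] at hB
  obtain ⟨T, hTe, hT⟩ := exists_rotation he A B hA0 hB0
  refine ⟨T, hTe, exists_transverse e _ _ (fun h => by simp [h] at hA) ?_ ?_ ?_⟩
  · exact fun v b h hb => eq_zero_of_re_pos A hA v b h hb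
  · intro v b h hb
    have := eq_zero_of_re_pos B hB (T v) b h (by rwa [← T.inner_map_map e v, hTe] at hb)
    simpa using this
  · exact fun t ht v b hv h => hT t ht v b hv h

end Rot

/-! ### Locally uniform convergence of maps and derivatives -/

section Conv
variable {E F : Type*} [NormedAddCommGroup E] [NormedSpace ℂ E]
  [NormedAddCommGroup F] [NormedSpace ℂ F]

/-- Locally uniform `C¹` convergence at a point: for `j → ∞` and `x → a`, the values `G j x` tend to
`y` and the derivatives of `G j` at `x` tend to `A`. -/
structure ConvAt (G : ℕ → E → F) (y : F) (A : E →L[ℂ] F) (a : E) : Prop where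
  tendsto : Tendsto (fun p : ℕ × E => G p.1 p.2) (atTop ×ˢ 𝓝 a) (𝓝 y)
  tendsto_fderiv : Tendsto (fun p : ℕ × E => fderiv ℂ (G p.1) p.2) (atTop ×ˢ 𝓝 a) (𝓝 A)
  differentiableAt : ∀ᶠ p : ℕ × E in atTop ×ˢ 𝓝 a, DifferentiableAt ℂ (G p.1) p.2

theorem convAt_of_tendstoUniformlyOn {G : ℕ → E → F} {H : E → F} {a : E} {δ : ℝ} (hδ : 0 < δ)
    (hH : DifferentiableOn ℂ H (ball a δ)) (hG : ∀ᶠ j in atTop, DifferentiableOn ℂ (G j) (ball a δ))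
    (h : TendstoUniformlyOn G H atTop (ball a δ)) : ConvAt G (H a) (fderiv ℂ H a) a := by
  have hpair : ∀ {P : ℕ → Prop} {r : ℝ}, 0 < r → (∀ᶠ j in atTop, P j) →
      ∀ᶠ p : ℕ × E in atTop ×ˢ 𝓝 a, P p.1 ∧ p.2 ∈ ball a r := fun hr hP =>
    hP.prod_mk (ball_mem_nhds a hr)
  have hHa : ContinuousAt H a :=
    (hH.differentiableAt (isOpen_ball.mem_nhds (mem_ball_self hδ))).continuousAt
  have hHf : ContinuousAt (fderiv ℂ H) a :=
    (continuousOn_fderiv isOpen_ball hH).continuousAt (isOpen_ball.mem_nhds (mem_ball_self hδ))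
  refine ⟨?_, ?_, ?_⟩
  · rw [Metric.tendsto_nhds]
    intro ε hε
    have h1 := (Metric.tendstoUniformlyOn_iff.1 h (ε / 2) (half_pos hε))
    have h2 : ∀ᶠ p : ℕ × E in atTop ×ˢ 𝓝 a, dist (H p.2) (H a) < ε / 2 :=
      tendsto_snd.eventually (Metric.tendsto_nhds.1 hHa _ (half_pos hε))
    filter_upwards [hpair hδ h1, h2] with p hp1 hp2
    have := dist_triangle_left (G p.1 p.2) (H a) (H p.2)
    linarith [hp1.1 p.2 hp1.2]
  · rw [Metric.tendsto_nhds]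
    intro ε hε
    have h1 := (Metric.tendstoUniformlyOn_iff.1 h (ε * δ / 16) (by positivity))
    have h2 : ∀ᶠ p : ℕ × E in atTop ×ˢ 𝓝 a, dist (fderiv ℂ H p.2) (fderiv ℂ H a) < ε / 2 :=
      tendsto_snd.eventually (Metric.tendsto_nhds.1 hHf _ (half_pos hε))
    filter_upwards [hpair (half_pos hδ) (h1.and hG), h2] with p hp1 hp2
    have hsub : ball p.2 (δ / 2) ⊆ ball a δ := ball_subset_ball' (by
      have := mem_ball.1 hp1.2; linarith)
    have hpa : ball a δ ∈ 𝓝 p.2 := isOpen_ball.mem_nhds (hsub (mem_ball_self (half_pos hδ)))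
    have h3 := norm_fderiv_le_of_bound (f := fun x => G p.1 x - H x) (c := p.2) (M := ε * δ / 16)
      (half_pos hδ) ((hp1.1.2.mono hsub).fun_sub (hH.mono hsub)) (fun z hz => by
        have := hp1.1.1 z (hsub hz)
        rw [dist_comm, dist_eq_norm] at this
        exact this.le)
    rw [fderiv_fun_sub (hp1.1.2.differentiableAt hpa) (hH.differentiableAt hpa)] at h3
    have h4 : 2 * (ε * δ / 16) / (δ / 2) = ε / 4 := by field_simp; norm_num
    rw [h4, ← dist_eq_norm] at h3
    have := dist_triangle (fderiv ℂ (G p.1) p.2) (fderiv ℂ H p.2) (fderiv ℂ H a)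
    linarith
  · filter_upwards [hpair hδ hG] with p hp
    exact hp.1.differentiableAt (isOpen_ball.mem_nhds hp.2)

/-- A uniform strict-differentiability estimate, from the mean value inequality. -/
theorem ConvAt.strict {G : ℕ → E → F} {y : F} {A : E →L[ℂ] F} {a : E} (h : ConvAt G y A a)
    {c : ℝ} (hc : 0 < c) : ∀ᶠ q : ℕ × (E × E) in atTop ×ˢ 𝓝 (a, a),
      ‖G q.1 q.2.1 - G q.1 q.2.2 - A (q.2.1 - q.2.2)‖ ≤ c * ‖q.2.1 - q.2.2‖ := by
  have h1 := (Metric.tendsto_nhds.1 h.tendsto_fderiv c hc).and h.differentiableAt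
  obtain ⟨pa, hpa, pb, hpb, h2⟩ := eventually_prod_iff.1 h1
  obtain ⟨r, hr, hb⟩ := Metric.eventually_nhds_iff_ball.1 hpb
  have hn : ball (a, a) r ∈ 𝓝 ((a, a) : E × E) := ball_mem_nhds _ hr
  filter_upwards [hpa.prod_mk hn] with q hq
  have hq2 : q.2.1 ∈ ball a r ∧ q.2.2 ∈ ball a r := max_lt_iff.1 hq.2
  refine (convex_ball a r).norm_image_sub_le_of_norm_fderiv_le' (𝕜 := ℂ) (f := G q.1) ?_ ?_ hq2.2 hq2.1
  · exact fun x hx => (h2 hq.1 (hb x hx)).2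
  · intro x hx
    have := (h2 hq.1 (hb x hx)).1
    rw [dist_eq_norm] at this
    exact this.le

variable [FiniteDimensional ℂ E]

theorem exists_pos_mul_norm_le {A : E →L[ℂ] F} (hA : Function.Injective A) :
    ∃ c > 0, ∀ v, c * ‖v‖ ≤ ‖A v‖ := by
  obtain ⟨K, hK, h⟩ := A.toLinearMap.exists_antilipschitzWith (LinearMap.ker_eq_bot.2 hA)
  refine ⟨(K : ℝ)⁻¹, by positivity, fun v => ?_⟩
  have h1 : ‖v‖ ≤ K * ‖A v‖ := by simpa using h.le_mul_dist v 0
  have hK' : (0 : ℝ) < K := hK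
  rw [inv_mul_le_iff₀ hK']
  exact h1

theorem ConvAt.eventually_inj {G : ℕ → E → F} {y : F} {A : E →L[ℂ] F} {a : E} (h : ConvAt G y A a)
    (hA : Function.Injective A) : ∀ᶠ q : ℕ × (E × E) in atTop ×ˢ 𝓝 (a, a),
      G q.1 q.2.1 = G q.1 q.2.2 → q.2.1 = q.2.2 := by
  obtain ⟨c, hc, hcA⟩ := exists_pos_mul_norm_le hA
  filter_upwards [h.strict (half_pos hc)] with q hq heq
  rw [heq, sub_self, zero_sub, norm_neg] at hq
  have := hcA (q.2.1 - q.2.2)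
  have h0 : ‖q.2.1 - q.2.2‖ = 0 := by nlinarith [norm_nonneg (q.2.1 - q.2.2)]
  exact sub_eq_zero.1 (norm_eq_zero.1 h0)

theorem ConvAt.eventually_fderiv_injective {G : ℕ → E → F} {y : F} {A : E →L[ℂ] F} {a : E}
    (h : ConvAt G y A a) (hA : Function.Injective A) : ∀ᶠ p : ℕ × E in atTop ×ˢ 𝓝 a,
      Function.Injective (fderiv ℂ (G p.1) p.2) := by
  obtain ⟨c, hc, hcA⟩ := exists_pos_mul_norm_le hA
  filter_upwards [Metric.tendsto_nhds.1 h.tendsto_fderiv (c / 2) (half_pos hc)] with p hp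
  rw [dist_eq_norm] at hp
  refine (injective_iff_map_eq_zero _).2 fun v hv => ?_
  have h1 := (fderiv ℂ (G p.1) p.2 - A).le_opNorm v
  rw [sub_apply, hv, zero_sub, norm_neg] at h1
  have := hcA v
  have h0 : ‖v‖ = 0 := by nlinarith [norm_nonneg v]
  exact norm_eq_zero.1 h0

end Conv

/-! ### Logistic interpolation -/

/-- The logistic function on the complex plane. -/
noncomputable def csig (ζ : ℂ) : ℂ := (1 + Complex.exp (-ζ))⁻¹

theorem csig_ofReal (x : ℝ) : csig (x : ℂ) = (Real.sigmoid x : ℂ) := by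
  rw [csig, Real.sigmoid_def]; push_cast; rfl

theorem one_add_exp_ne_zero_of_re {ζ : ℂ} (h : ζ.re ≠ 0) : 1 + Complex.exp (-ζ) ≠ 0 := fun h0 => by
  have h1 : Complex.exp (-ζ) = -1 := eq_neg_of_add_eq_zero_right h0
  have h2 := congrArg (fun z : ℂ => ‖z‖) h1
  simp [Complex.norm_exp] at h2
  exact h h2

theorem one_add_exp_ne_zero_of_real (x : ℝ) : 1 + Complex.exp (-(x : ℂ)) ≠ 0 := by
  have : (1 + Complex.exp (-(x : ℂ))) = ((1 + Real.exp (-x) : ℝ) : ℂ) := by push_cast; rfl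
  rw [this]
  exact_mod_cast (by positivity : (0 : ℝ) < 1 + Real.exp (-x)).ne'

theorem one_add_exp_neg {ζ : ℂ} (h : 1 + Complex.exp (-ζ) ≠ 0) : 1 + Complex.exp ζ ≠ 0 := by
  intro h0
  apply h
  have h2 : Complex.exp ζ = -1 := eq_neg_of_add_eq_zero_right h0
  rw [Complex.exp_neg, h2]; norm_num

theorem csig_neg {ζ : ℂ} (h : 1 + Complex.exp (-ζ) ≠ 0) : csig (-ζ) = 1 - csig ζ := by
  have h1 := one_add_exp_neg h
  have h1' : Complex.exp ζ + 1 ≠ 0 := by rwa [add_comm]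
  have h2 : Complex.exp ζ ≠ 0 := Complex.exp_ne_zero ζ
  rw [csig, csig, neg_neg]
  rw [Complex.exp_neg] at h ⊢
  field_simp
  ring

theorem hasDerivAt_csig {ζ : ℂ} (h : 1 + Complex.exp (-ζ) ≠ 0) :
    HasDerivAt csig (csig ζ * csig (-ζ)) ζ := by
  have h1 : HasDerivAt (fun ζ : ℂ => 1 + Complex.exp (-ζ)) (-Complex.exp (-ζ)) ζ := by
    have := ((Complex.hasDerivAt_exp (-ζ)).comp ζ (hasDerivAt_neg ζ)).const_add 1
    simpa using this
  have h2 := h1.inv h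
  have h3 : csig ζ * csig (-ζ) = - -Complex.exp (-ζ) / (1 + Complex.exp (-ζ)) ^ 2 := by
    have h4 := one_add_exp_neg h
    have h4' : Complex.exp ζ + 1 ≠ 0 := by rwa [add_comm]
    have h5 : Complex.exp ζ ≠ 0 := Complex.exp_ne_zero ζ
    rw [csig, csig, neg_neg]
    rw [Complex.exp_neg] at h ⊢
    field_simp
    ring
  rw [h3]
  exact h2

theorem norm_csig_le {ζ : ℂ} {c : ℝ} (hc : 0 < c) (h : ζ.re ≤ -c) :
    ‖csig ζ‖ ≤ (Real.exp c - 1)⁻¹ := by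
  have h1 : 0 < Real.exp c - 1 := by linarith [Real.add_one_lt_exp hc.ne']
  rw [csig, norm_inv]
  refine inv_anti₀ h1 ?_
  have h2 : Real.exp c ≤ ‖Complex.exp (-ζ)‖ := by
    rw [Complex.norm_exp]; exact Real.exp_le_exp.2 (by simp; linarith)
  have h3 := norm_sub_norm_le (Complex.exp (-ζ)) (-1)
  rw [norm_neg, norm_one, sub_neg_eq_add, add_comm _ (1 : ℂ)] at h3
  linarith

section Glue
variable {E : Type*} [NormedAddCommGroup E] [InnerProductSpace ℂ E]

/-- The interpolation between `P` (where `Re ⟪e, z⟫ < 0`) and `Q` (where `Re ⟪e, z⟫ > 0`) by the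
logistic function of `N ⟪e, z⟫`. -/
noncomputable def glue (e : E) (N : ℝ) (P Q : E → E) (z : E) : E :=
  csig (-(N * inner ℂ e z)) • P z + csig (N * inner ℂ e z) • Q z

theorem glue_symm (e : E) (N : ℝ) (P Q : E → E) : glue (-e) N Q P = glue e N P Q := by
  funext z
  simp only [glue, inner_neg_left, mul_neg, neg_neg]
  rw [add_comm]

theorem fderiv_glue {e : E} {N : ℝ} {P Q : E → E} {z : E} (hP : DifferentiableAt ℂ P z)
    (hQ : DifferentiableAt ℂ Q z) (h : 1 + Complex.exp (-(N * inner ℂ e z)) ≠ 0) :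
    DifferentiableAt ℂ (glue e N P Q) z ∧ ∀ v, fderiv ℂ (glue e N P Q) z v =
      csig (-(N * inner ℂ e z)) • fderiv ℂ P z v + csig (N * inner ℂ e z) • fderiv ℂ Q z v
        + (N * (csig (N * inner ℂ e z) * csig (-(N * inner ℂ e z))) * inner ℂ e v) • (Q z - P z) := by
  have hl : HasFDerivAt (fun z => (N : ℂ) * inner ℂ e z) ((N : ℂ) • innerSL ℂ e) z :=
    ((N : ℂ) • innerSL ℂ e).hasFDerivAt
  have h1 := (hasDerivAt_csig h).comp_hasFDerivAt z hl
  have h2 := (hasDerivAt_csig (ζ := -(N * inner ℂ e z))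
    (by rw [neg_neg]; exact one_add_exp_neg h)).comp_hasFDerivAt z hl.fun_neg
  have h3 := (h2.smul hP.hasFDerivAt).add (h1.smul hQ.hasFDerivAt)
  have h4 : HasFDerivAt (glue e N P Q) _ z := h3
  refine ⟨h4.differentiableAt, fun v => ?_⟩
  rw [h4.fderiv]
  simp
  module

/-- Entire approximants `EL j → FL` and `ER j → FR` on balls around `-e` and `e`, with interpolation
parameters `N j` so large that the logistic tails kill the growth of the approximants. -/
structure Approx (e : E) (R : ℝ) (FL FR : E → E) (EL ER : ℕ → E → E) (N : ℕ → ℝ) : Prop where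
  diffL : ∀ j, Differentiable ℂ (EL j)
  diffR : ∀ j, Differentiable ℂ (ER j)
  convL : ∀ r < R, TendstoUniformlyOn EL FL atTop (closedBall (-e) r)
  convR : ∀ r < R, TendstoUniformlyOn ER FR atTop (closedBall e r)
  le_N : ∀ j : ℕ, (j : ℝ) + 1 ≤ N j
  bound : ∀ j : ℕ, ∀ z ∈ closedBall (0 : E) (R + 1),
    ‖EL j z‖ + ‖ER j z‖ ≤ (Real.exp (N j / (j + 1)) - 1) / (j + 1)

theorem Approx.symm {e : E} {R : ℝ} {FL FR : E → E} {EL ER : ℕ → E → E} {N : ℕ → ℝ}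
    (h : Approx e R FL FR EL ER N) : Approx (-e) R FR FL ER EL N where
  diffL := h.diffR
  diffR := h.diffL
  convL := by rw [neg_neg]; exact h.convR
  convR := h.convL
  le_N := h.le_N
  bound j z hz := by rw [add_comm]; exact h.bound j z hz

theorem exists_approx [FiniteDimensional ℂ E] (e : E) {R : ℝ} (hR : 0 < R) {FL FR : E → E}
    (hL : DifferentiableOn ℂ FL (ball (-e) R)) (hFR : DifferentiableOn ℂ FR (ball e R)) :
    ∃ EL ER N, Approx e R FL FR EL ER N := by
  have := FiniteDimensional.proper ℂ E
  have key : ∀ (c : E) (f : E → E), DifferentiableOn ℂ f (ball c R) → ∃ P : ℕ → E → E,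
      (∀ n, Differentiable ℂ (P n)) ∧ ∀ r < R, TendstoUniformlyOn P f atTop (closedBall c r) := by
    intro c f hf
    obtain ⟨P, hP, hPc⟩ := exists_entire_approx (f := fun z => f (z + c)) hR (by
      refine hf.comp (by fun_prop) fun z hz => ?_
      simpa [dist_eq_norm] using hz)
    refine ⟨fun n z => P n (z - c), fun n => (hP n).comp (by fun_prop), fun r hr => ?_⟩
    have h1 := (hPc r hr).comp (fun z => z - c)
    have h2 : (fun z => z - c) ⁻¹' closedBall (0 : E) r = closedBall c r := by
      ext z; simp [dist_eq_norm]
    rw [h2] at h1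
    refine h1.congr_right fun z _ => ?_
    simp
  obtain ⟨EL, hEL, hELc⟩ := key _ _ hL
  obtain ⟨ER, hER, hERc⟩ := key _ _ hFR
  have hb : ∀ j : ℕ, ∃ N : ℝ, (j : ℝ) + 1 ≤ N ∧ ∀ z ∈ closedBall (0 : E) (R + 1),
      ‖EL j z‖ + ‖ER j z‖ ≤ (Real.exp (N / (j + 1)) - 1) / (j + 1) := by
    intro j
    have hc : Continuous fun z => ‖EL j z‖ + ‖ER j z‖ :=
      (hEL j).continuous.norm.add (hER j).continuous.norm
    obtain ⟨C, hC⟩ := (isCompact_closedBall (0 : E) (R + 1)).bddAbove_image hc.continuousOn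
    have hC' : ∀ z ∈ closedBall (0 : E) (R + 1), ‖EL j z‖ + ‖ER j z‖ ≤ C :=
      fun z hz => hC (mem_image_of_mem _ hz)
    have hj : (0 : ℝ) < j + 1 := by positivity
    have h1 : Tendsto (fun N : ℝ => Real.exp (N / (j + 1))) atTop atTop :=
      Real.tendsto_exp_atTop.comp (tendsto_id.atTop_div_const hj)
    obtain ⟨N, hN1, hN2⟩ := ((eventually_ge_atTop ((j : ℝ) + 1)).and
      (h1.eventually_ge_atTop (C * (j + 1) + 1))).exists
    refine ⟨N, hN1, fun z hz => (hC' z hz).trans ?_⟩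
    rw [le_div_iff₀ hj]
    linarith
  choose N hN hNb using hb
  exact ⟨EL, ER, N, hEL, hER, hELc, hERc, hN, hNb⟩

/-- On the left half-space the interpolated maps converge to `FL` with their derivatives. -/
theorem convAt_left {e : E} (he : ‖e‖ = 1) {R : ℝ} {FL FR : E → E}
    {EL ER : ℕ → E → E} {N : ℕ → ℝ} (h : Approx e R FL FR EL ER N)
    (hL : DifferentiableOn ℂ FL (ball (-e) R)) {a : E} (ha : (inner ℂ e a).re < 0)
    (haR : a ∈ ball (-e) R) :
    ConvAt (fun j => glue e (N j) (EL j) (ER j)) (FL a) (fderiv ℂ FL a) a := by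
  rw [mem_ball] at haR
  set c : ℝ := -(inner ℂ e a).re / 2 with hc
  have hc0 : 0 < c := by rw [hc]; linarith
  set δ : ℝ := min ((R - dist a (-e)) / 2) c with hδ
  have hδ0 : 0 < δ := lt_min (by linarith) hc0
  have hδ1 : δ ≤ (R - dist a (-e)) / 2 := min_le_left _ _
  have hδ2 : δ ≤ c := min_le_right _ _
  set r : ℝ := (dist a (-e) + R) / 2 with hr
  have hrR : r < R := by rw [hr]; linarith
  have hsub : ball a δ ⊆ closedBall (-e) r := fun z hz => by
    rw [mem_closedBall]
    have := dist_triangle z a (-e)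
    rw [mem_ball] at hz
    rw [hr]; linarith
  have hre : ∀ z ∈ ball a δ, (inner ℂ e z).re ≤ -c := fun z hz => by
    have h1 : (inner ℂ e z).re - (inner ℂ e a).re ≤ ‖z - a‖ := by
      rw [← Complex.sub_re, ← inner_sub_right]
      exact (Complex.re_le_norm _).trans (norm_inner_le he _)
    rw [mem_ball, dist_eq_norm] at hz
    linarith
  have hnorm : ∀ z ∈ ball a δ, z ∈ closedBall (0 : E) (R + 1) := fun z hz => by
    have h1 := hsub hz
    rw [mem_closedBall, dist_eq_norm, sub_neg_eq_add] at h1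
    have h2 := norm_sub_le (z + e) e
    rw [add_sub_cancel_right, he] at h2
    rw [mem_closedBall, dist_zero_right]; linarith
  have hNpos : ∀ j, 0 < N j := fun j => lt_of_lt_of_le (by positivity) (h.le_N j)
  have hne : ∀ j, ∀ z ∈ ball a δ, 1 + Complex.exp (-(N j * inner ℂ e z)) ≠ 0 := fun j z hz => by
    refine one_add_exp_ne_zero_of_re ?_
    rw [Complex.re_ofReal_mul]
    exact mul_ne_zero (hNpos j).ne' (by linarith [hre z hz])
  refine convAt_of_tendstoUniformlyOn hδ0 (hL.mono (hsub.trans (closedBall_subset_ball hrR))) ?_ ?_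
  · refine Eventually.of_forall fun j z hz => ?_
    exact (fderiv_glue ((h.diffL j) z) ((h.diffR j) z) (hne j z hz)).1.differentiableWithinAt
  · rw [Metric.tendstoUniformlyOn_iff]
    intro ε hε
    have h1 := Metric.tendstoUniformlyOn_iff.1 (h.convL r hrR) (ε / 2) (half_pos hε)
    have h2 : ∀ᶠ j : ℕ in atTop, 1 / ((j : ℝ) + 1) < min c (ε / 2) :=
      tendsto_one_div_add_atTop_nhds_zero_nat.eventually_lt_const (lt_min hc0 (half_pos hε))
    filter_upwards [h1, h2] with j hj1 hj2 z hz
    have hj : (0 : ℝ) < (j : ℝ) + 1 := by positivity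
    set D : ℝ := Real.exp (N j / (j + 1)) - 1 with hD
    have hNj : 0 < N j / (j + 1) := div_pos (hNpos j) hj
    have hD0 : 0 < D := by rw [hD]; linarith [Real.add_one_lt_exp hNj.ne']
    have h3 : ‖csig (N j * inner ℂ e z)‖ ≤ D⁻¹ := by
      refine norm_csig_le hNj ?_
      rw [Complex.re_ofReal_mul]
      have h4 : 1 / ((j : ℝ) + 1) ≤ c := hj2.le.trans (min_le_left _ _)
      have h5 : N j / (j + 1) ≤ N j * c := by
        rw [div_eq_mul_one_div]; exact mul_le_mul_of_nonneg_left h4 (hNpos j).le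
      nlinarith [hre z hz, hNpos j]
    have h4 : glue e (N j) (EL j) (ER j) z = EL j z + csig (N j * inner ℂ e z) • (ER j z - EL j z) := by
      rw [glue, csig_neg (hne j z hz)]; module
    have h5 : ‖ER j z - EL j z‖ ≤ D / (j + 1) := by
      refine (norm_sub_le _ _).trans ?_
      rw [add_comm]; exact h.bound j z (hnorm z hz)
    have h6 : dist (EL j z) (glue e (N j) (EL j) (ER j) z) ≤ 1 / (j + 1) := by
      rw [h4, dist_self_add_right, norm_smul]
      calc _ ≤ D⁻¹ * (D / (j + 1)) := by gcongr
        _ = 1 / (j + 1) := by field_simp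
    have h7 := dist_triangle (FL z) (EL j z) (glue e (N j) (EL j) (ER j) z)
    have h8 := hj1 z (hsub hz)
    have h9 : 1 / ((j : ℝ) + 1) < ε / 2 := hj2.trans_le (min_le_right _ _)
    linarith

theorem convAt_right {e : E} (he : ‖e‖ = 1) {R : ℝ} {FL FR : E → E}
    {EL ER : ℕ → E → E} {N : ℕ → ℝ} (h : Approx e R FL FR EL ER N)
    (hR : DifferentiableOn ℂ FR (ball e R)) {a : E} (ha : 0 < (inner ℂ e a).re)
    (haR : a ∈ ball e R) :
    ConvAt (fun j => glue e (N j) (EL j) (ER j)) (FR a) (fderiv ℂ FR a) a := by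
  have := convAt_left (e := -e) (by rwa [norm_neg]) h.symm (by rwa [neg_neg]) (a := a)
    (by rw [inner_neg_left]; simpa using ha) (by rwa [neg_neg])
  simpa only [glue_symm] using this

end Glue

/-! ### The interpolated maps near the contact point -/

section NearZero
variable {E : Type*} [NormedAddCommGroup E] [InnerProductSpace ℂ E]
  {e : E} {EL ER : ℕ → E → E} {N : ℕ → ℝ} {p q : E} {A B : E →L[ℂ] E}

theorem tendsto_prod_line (e : E) : Tendsto (fun w : ℕ × ℝ => (w.1, (w.2 : ℂ) • e))
    (atTop ×ˢ 𝓝 0) (atTop ×ˢ 𝓝 (0 : E)) := by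
  refine tendsto_fst.prodMk (Tendsto.comp (y := 𝓝 (0 : ℝ)) (g := fun x : ℝ => (x : ℂ) • e) ?_
    tendsto_snd)
  have : Continuous fun x : ℝ => (x : ℂ) • e := by fun_prop
  simpa using this.tendsto 0

theorem inner_line (he : ‖e‖ = 1) (x : ℝ) : inner ℂ e ((x : ℂ) • e) = (x : ℂ) := by
  rw [inner_smul_right, inner_self_unit he, mul_one]

theorem csig_line (he : ‖e‖ = 1) (M x : ℝ) :
    csig (M * inner ℂ e ((x : ℂ) • e)) = (Real.sigmoid (M * x) : ℂ) ∧
    csig (-(M * inner ℂ e ((x : ℂ) • e))) = ((1 - Real.sigmoid (M * x) : ℝ) : ℂ) := by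
  rw [inner_line he, ← Real.sigmoid_neg, ← csig_ofReal, ← csig_ofReal]
  push_cast
  exact ⟨rfl, rfl⟩

theorem glue_line (he : ‖e‖ = 1) (M x : ℝ) (P Q : E → E) :
    glue e M P Q ((x : ℂ) • e) = ((1 - Real.sigmoid (M * x) : ℝ) : ℂ) • P ((x : ℂ) • e)
      + (Real.sigmoid (M * x) : ℂ) • Q ((x : ℂ) • e) := by
  rw [glue, (csig_line he M x).1, (csig_line he M x).2]

/-- On the real line through the contact point the interpolation is real convex, so its values are
close to the segment `[p, q]`. -/
theorem line_mem_of_segment (he : ‖e‖ = 1) (CL : ConvAt EL p A 0) (CR : ConvAt ER q B 0)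
    {V : Set E} (hV : IsOpen V) (hseg : segment ℝ p q ⊆ V) :
    ∀ᶠ w : ℕ × ℝ in atTop ×ˢ 𝓝 0, glue e (N w.1) (EL w.1) (ER w.1) ((w.2 : ℂ) • e) ∈ V := by
  have hcomp : IsCompact (segment ℝ p q) := by
    rw [segment_eq_image_lineMap]
    exact isCompact_Icc.image AffineMap.lineMap_continuous
  obtain ⟨η, hη, hthick⟩ := hcomp.exists_thickening_subset_open hV hseg
  have h1 := (tendsto_prod_line e).eventually (Metric.tendsto_nhds.1 CL.tendsto η hη)
  have h2 := (tendsto_prod_line e).eventually (Metric.tendsto_nhds.1 CR.tendsto η hη)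
  filter_upwards [h1, h2] with w hw1 hw2
  apply hthick
  rw [glue_line he, mem_thickening_iff]
  set t := Real.sigmoid (N w.1 * w.2)
  have ht0 : 0 < t := Real.sigmoid_pos _
  have ht1 : t < 1 := Real.sigmoid_lt_one _
  refine ⟨(1 - t) • p + t • q, ⟨1 - t, t, by linarith, ht0.le, by ring, rfl⟩, ?_⟩
  rw [dist_eq_norm] at hw1 hw2 ⊢
  have h3 : ((1 - t : ℝ) : ℂ) • EL w.1 ((w.2 : ℂ) • e) + (t : ℂ) • ER w.1 ((w.2 : ℂ) • e)
      - ((1 - t) • p + t • q) = (1 - t) • (EL w.1 ((w.2 : ℂ) • e) - p)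
        + t • (ER w.1 ((w.2 : ℂ) • e) - q) := by
    rw [Complex.coe_smul, Complex.coe_smul]; module
  rw [h3]
  refine (norm_add_le _ _).trans_lt ?_
  rw [norm_smul, norm_smul, Real.norm_of_nonneg ht0.le, Real.norm_of_nonneg (by linarith)]
  nlinarith

/-- On the real line through the contact point, the differential of the interpolation is of the form
excluded from having a kernel by `Transverse`, with `t` the value of the sigmoid. -/
theorem line_fderiv_injective (he : ‖e‖ = 1) (hN : ∀ j : ℕ, (j : ℝ) + 1 ≤ N j)
    (CL : ConvAt EL p A 0) (CR : ConvAt ER q B 0)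
    {ε : ℝ} (hε : 0 < ε) (hT : Transverse e A B (q - p) ε) :
    ∀ᶠ w : ℕ × ℝ in atTop ×ˢ 𝓝 0,
      DifferentiableAt ℂ (glue e (N w.1) (EL w.1) (ER w.1)) ((w.2 : ℂ) • e) ∧
      Function.Injective (fderiv ℂ (glue e (N w.1) (EL w.1) (ER w.1)) ((w.2 : ℂ) • e)) := by
  have hl := tendsto_prod_line e
  have hD : Tendsto (fun w : ℕ × E => ER w.1 w.2 - EL w.1 w.2) (atTop ×ˢ 𝓝 0) (𝓝 (q - p)) :=
    CR.tendsto.sub CL.tendsto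
  have hNl : ∀ᶠ j : ℕ in atTop, 1 / ε ≤ N j := by
    filter_upwards [tendsto_natCast_atTop_atTop.eventually_ge_atTop (1 / ε)] with j hj
    linarith [hN j]
  filter_upwards [hl.eventually CL.differentiableAt, hl.eventually CR.differentiableAt,
    hl.eventually (Metric.tendsto_nhds.1 CL.tendsto_fderiv ε hε),
    hl.eventually (Metric.tendsto_nhds.1 CR.tendsto_fderiv ε hε),
    hl.eventually (Metric.tendsto_nhds.1 hD ε hε), tendsto_fst.eventually hNl]
    with w h1 h2 h3 h4 h5 h6
  obtain ⟨h7, h8⟩ := fderiv_glue (e := e) (N := N w.1) h1 h2 (by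
    rw [inner_line he, ← Complex.ofReal_mul]; exact one_add_exp_ne_zero_of_real _)
  refine ⟨h7, ?_⟩
  rw [dist_eq_norm] at h3 h4 h5
  refine (injective_iff_map_eq_zero _).2 fun v hv => ?_
  by_contra hv0
  set u : E := (((‖v‖⁻¹ : ℝ)) : ℂ) • v with hu
  have hun : ‖u‖ = 1 := by
    rw [hu, norm_smul, Complex.norm_real, norm_inv, norm_norm, inv_mul_cancel₀ (norm_ne_zero_iff.2 hv0)]
  have hu0 : fderiv ℂ (glue e (N w.1) (EL w.1) (ER w.1)) ((w.2 : ℂ) • e) u = 0 := by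
    rw [hu, map_smul, hv, smul_zero]
  rw [h8, (csig_line he _ _).1, (csig_line he _ _).2] at hu0
  set t := Real.sigmoid (N w.1 * w.2)
  refine hT t ⟨Real.sigmoid_nonneg _, Real.sigmoid_le_one _⟩ (N w.1) h6 u _ _ _ hun ?_ ?_ h5.le
    (by convert hu0 using 3; push_cast; ring)
  · rw [← sub_apply]
    exact ((_ : E →L[ℂ] E).le_opNorm u).trans (by rw [hun, mul_one]; exact h3.le)
  · rw [← sub_apply]
    exact ((_ : E →L[ℂ] E).le_opNorm u).trans (by rw [hun, mul_one]; exact h4.le)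

/-- Injectivity on the real line through the contact point: the difference quotient of the
interpolation is again of the form excluded from vanishing by `Transverse`, with the sigmoid taken
at a mean-value point. -/
theorem line_pair_lt (he : ‖e‖ = 1) (hN : ∀ j : ℕ, (j : ℝ) + 1 ≤ N j)
    (CL : ConvAt EL p A 0) (CR : ConvAt ER q B 0)
    {ε : ℝ} (hε : 0 < ε) (hT : Transverse e A B (q - p) ε) :
    ∀ᶠ w : ℕ × (ℝ × ℝ) in atTop ×ˢ 𝓝 (0, 0), w.2.1 < w.2.2 →
      glue e (N w.1) (EL w.1) (ER w.1) ((w.2.1 : ℂ) • e)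
        ≠ glue e (N w.1) (EL w.1) (ER w.1) ((w.2.2 : ℂ) • e) := by
  have hl1 : Tendsto (fun w : ℕ × (ℝ × ℝ) => (w.1, (w.2.1 : ℂ) • e)) (atTop ×ˢ 𝓝 (0, 0))
      (atTop ×ˢ 𝓝 (0 : E)) := by
    refine (tendsto_prod_line e).comp (tendsto_fst.prodMk ?_)
    exact (continuous_fst.tendsto ((0, 0) : ℝ × ℝ)).comp tendsto_snd
  have hl2 : Tendsto (fun w : ℕ × (ℝ × ℝ) => (w.1, (w.2.2 : ℂ) • e)) (atTop ×ˢ 𝓝 (0, 0))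
      (atTop ×ˢ 𝓝 (0 : E)) := by
    refine (tendsto_prod_line e).comp (tendsto_fst.prodMk ?_)
    exact (continuous_snd.tendsto ((0, 0) : ℝ × ℝ)).comp tendsto_snd
  have hl3 : Tendsto (fun w : ℕ × (ℝ × ℝ) => (w.1, ((w.2.2 : ℂ) • e, (w.2.1 : ℂ) • e)))
      (atTop ×ˢ 𝓝 (0, 0)) (atTop ×ˢ 𝓝 ((0 : E), (0 : E))) := by
    refine tendsto_fst.prodMk ?_
    exact Tendsto.prodMk_nhds (tendsto_snd.comp hl2) (tendsto_snd.comp hl1)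
  have hD : Tendsto (fun w : ℕ × E => ER w.1 w.2 - EL w.1 w.2) (atTop ×ˢ 𝓝 0) (𝓝 (q - p)) :=
    CR.tendsto.sub CL.tendsto
  have hNl : ∀ᶠ j : ℕ in atTop, 1 / ε ≤ N j := by
    filter_upwards [tendsto_natCast_atTop_atTop.eventually_ge_atTop (1 / ε)] with j hj
    linarith [hN j]
  filter_upwards [hl3.eventually (CL.strict hε), hl3.eventually (CR.strict hε),
    hl1.eventually (Metric.tendsto_nhds.1 hD ε hε), hl2.eventually (Metric.tendsto_nhds.1 hD ε hε),
    tendsto_fst.eventually hNl]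
  rintro ⟨j, x, y⟩ h1 h2 h3 h4 h5 hxy heq
  simp only at h1 h2 h3 h4 h5 hxy heq
  have hM : 0 < N j := lt_of_lt_of_le (by positivity) (hN j)
  set M := N j
  obtain ⟨c, hc, hcd⟩ := exists_hasDerivAt_eq_slope (fun x => Real.sigmoid (M * x))
    (fun x => Real.sigmoid (M * x) * (1 - Real.sigmoid (M * x)) * M) hxy
    (by
      have h6 : Continuous Real.sigmoid := continuous_iff_continuousAt.2 fun z => (Real.hasDerivAt_sigmoid z).continuousAt
      exact (h6.comp (continuous_const.mul continuous_id)).continuousOn)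
    (fun z _ => by
      have h6 := (Real.hasDerivAt_sigmoid (M * z)).comp z ((hasDerivAt_id z).const_mul M)
      simp only [id, mul_one] at h6
      exact h6)
  set t := Real.sigmoid (M * c) with ht
  set a := Real.sigmoid (M * x) with ha
  set b := Real.sigmoid (M * y) with hb
  have hat : a < t := Real.sigmoid_lt (by nlinarith [hc.1])
  have htb : t < b := Real.sigmoid_lt (by nlinarith [hc.2])
  have hh : 0 < y - x := by linarith
  rw [eq_div_iff hh.ne'] at hcd
  rw [glue_line he, glue_line he] at heq
  set L := EL j ((x : ℂ) • e)
  set L' := EL j ((y : ℂ) • e)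
  set Q := ER j ((x : ℂ) • e)
  set Q' := ER j ((y : ℂ) • e)
  rw [dist_eq_norm] at h3 h4
  have hba : 0 < b - a := by linarith
  set κ : ℝ := (b - t) / (b - a) with hκ
  have hκ0 : 0 ≤ κ := div_nonneg (by linarith) hba.le
  have hκ1 : κ ≤ 1 := (div_le_one hba).2 (by linarith)
  have hκ2 : (b - a) * κ = b - t := by rw [hκ]; field_simp
  have hye : (y : ℂ) • e - (x : ℂ) • e = ((y - x : ℝ) : ℂ) • e := by push_cast; module
  have hyn : ‖(y : ℂ) • e - (x : ℂ) • e‖ = y - x := by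
    rw [hye, norm_smul, he, Complex.norm_real, Real.norm_of_nonneg hh.le, mul_one]
  have hhc : ((y - x : ℝ) : ℂ) ≠ 0 := by exact_mod_cast hh.ne'
  have hdiv : ∀ (C : E →L[ℂ] E) (u : E), ‖u - C ((y : ℂ) • e - (x : ℂ) • e)‖
      ≤ ε * ‖(y : ℂ) • e - (x : ℂ) • e‖ → ‖((y - x : ℝ) : ℂ)⁻¹ • u - C e‖ ≤ ε := by
    intro C u hu
    rw [hyn, hye, map_smul] at hu
    have h6 : ((y - x : ℝ) : ℂ)⁻¹ • u - C e
        = ((y - x : ℝ) : ℂ)⁻¹ • (u - ((y - x : ℝ) : ℂ) • C e) := by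
      rw [smul_sub, smul_smul, inv_mul_cancel₀ hhc, one_smul]
    rw [h6, norm_smul, norm_inv, Complex.norm_real, Real.norm_of_nonneg hh.le,
      inv_mul_le_iff₀ hh]
    linarith
  refine hT t ⟨Real.sigmoid_nonneg _, Real.sigmoid_le_one _⟩ M h5 e
    (((y - x : ℝ) : ℂ)⁻¹ • (L' - L)) (((y - x : ℝ) : ℂ)⁻¹ • (Q' - Q))
    ((κ : ℂ) • (Q' - L') + ((1 - κ : ℝ) : ℂ) • (Q - L)) he (hdiv A _ h1) (hdiv B _ h2) ?_ ?_
  · have h6 : (κ : ℂ) • (Q' - L') + ((1 - κ : ℝ) : ℂ) • (Q - L) - (q - p)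
        = (κ : ℂ) • (Q' - L' - (q - p)) + ((1 - κ : ℝ) : ℂ) • (Q - L - (q - p)) := by
      push_cast; module
    rw [h6]
    refine (norm_add_le _ _).trans ?_
    rw [norm_smul, norm_smul, Complex.norm_real, Complex.norm_real, Real.norm_of_nonneg hκ0,
      Real.norm_of_nonneg (by linarith : (0 : ℝ) ≤ 1 - κ)]
    nlinarith
  · rw [inner_self_unit he, mul_one]
    have h6 : ((M * (t * (1 - t)) : ℝ) : ℂ) = ((y - x : ℝ) : ℂ)⁻¹ * ((b - a : ℝ) : ℂ) := by
      rw [← hcd]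
      field_simp
      push_cast
      ring
    have hκ2c : ((b - a : ℝ) : ℂ) * (κ : ℂ) = ((b - t : ℝ) : ℂ) := by
      rw [← Complex.ofReal_mul, hκ2]
    have hκ3c : ((b - a : ℝ) : ℂ) * ((1 - κ : ℝ) : ℂ) = ((t - a : ℝ) : ℂ) := by
      rw [← Complex.ofReal_mul]; congr 1; linarith
    have h7 : ((1 - t : ℝ) : ℂ) • (L' - L) + (t : ℂ) • (Q' - Q)
        + (((b - t : ℝ) : ℂ) • (Q' - L') + ((t - a : ℝ) : ℂ) • (Q - L)) = 0 := by
      have h8 := sub_eq_zero.2 heq.symm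
      rw [← h8]
      push_cast
      module
    have h9 : ((1 - t : ℝ) : ℂ) • ((y - x : ℝ) : ℂ)⁻¹ • (L' - L) + (t : ℂ) • ((y - x : ℝ) : ℂ)⁻¹ • (Q' - Q)
        + (((y - x : ℝ) : ℂ)⁻¹ * ((b - a : ℝ) : ℂ)) • ((κ : ℂ) • (Q' - L') + ((1 - κ : ℝ) : ℂ) • (Q - L))
        = ((y - x : ℝ) : ℂ)⁻¹ • (((1 - t : ℝ) : ℂ) • (L' - L) + (t : ℂ) • (Q' - Q)
        + (((b - t : ℝ) : ℂ) • (Q' - L') + ((t - a : ℝ) : ℂ) • (Q - L))) := by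
      rw [← hκ2c, ← hκ3c]
      module
    rw [h6, h9, h7, smul_zero]

theorem line_pair (he : ‖e‖ = 1) (hN : ∀ j : ℕ, (j : ℝ) + 1 ≤ N j)
    (CL : ConvAt EL p A 0) (CR : ConvAt ER q B 0)
    {ε : ℝ} (hε : 0 < ε) (hT : Transverse e A B (q - p) ε) :
    ∀ᶠ w : ℕ × (ℝ × ℝ) in atTop ×ˢ 𝓝 (0, 0),
      glue e (N w.1) (EL w.1) (ER w.1) ((w.2.1 : ℂ) • e)
        = glue e (N w.1) (EL w.1) (ER w.1) ((w.2.2 : ℂ) • e) → w.2.1 = w.2.2 := by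
  have h := line_pair_lt he hN CL CR hε hT
  have hswap : Tendsto (fun w : ℕ × (ℝ × ℝ) => (w.1, w.2.swap)) (atTop ×ˢ 𝓝 (0, 0))
      (atTop ×ˢ 𝓝 (0, 0)) :=
    tendsto_fst.prodMk ((continuous_swap.tendsto ((0, 0) : ℝ × ℝ)).comp tendsto_snd)
  filter_upwards [h, hswap.eventually h] with w h1 h2 heq
  rcases lt_trichotomy w.2.1 w.2.2 with h3 | h3 | h3
  · exact absurd heq (h1 h3)
  · exact h3
  · exact absurd heq.symm (h2 h3)

end NearZero

/-! ### Localization along the dumbbell core -/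

/-- A property that holds eventually near each point of a compact set holds eventually on it. -/
theorem eventually_forall_mem_of_compact {X : Type*} [TopologicalSpace X] {K : Set X}
    (hK : IsCompact K) {P : ℕ → X → Prop}
    (h : ∀ a ∈ K, ∀ᶠ p : ℕ × X in atTop ×ˢ 𝓝 a, p.2 ∈ K → P p.1 p.2) :
    ∀ᶠ j in atTop, ∀ a ∈ K, P j a := by
  have h1 : {p : ℕ × X | p.2 ∈ K → P p.1 p.2} ∈ atTop ×ˢ 𝓝ˢ K :=
    hK.mem_prod_nhdsSet_of_forall h
  obtain ⟨t, ht, u, hu, htu⟩ := mem_prod_iff.1 h1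
  filter_upwards [ht] with j hj a ha
  have : (j, a) ∈ {p : ℕ × X | p.2 ∈ K → P p.1 p.2} := htu ⟨hj, subset_of_mem_nhdsSet hu ha⟩
  exact this ha

section Main
variable {E : Type*} [NormedAddCommGroup E] [InnerProductSpace ℂ E] [FiniteDimensional ℂ E]

theorem exists_injOn_nhds {f : E → E} {f' : E →L[ℂ] E} {a : E} (hf : HasStrictFDerivAt f f' a)
    (hinj : Function.Injective f') : ∃ u ∈ 𝓝 a, InjOn f u := by
  obtain ⟨c, hc, hcA⟩ := exists_pos_mul_norm_le hinj
  have h1 := hf.isLittleO.def (half_pos hc)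
  rw [nhds_prod_eq] at h1
  obtain ⟨u, hu, h2⟩ := eventually_prod_self_iff'.1 h1
  refine ⟨u, hu, fun x hx y hy hxy => ?_⟩
  have h3 := h2 x hx y hy
  simp only [hxy, sub_self, zero_sub, norm_neg] at h3
  have := hcA (x - y)
  have h0 : ‖x - y‖ = 0 := by nlinarith [norm_nonneg (x - y)]
  exact sub_eq_zero.1 (norm_eq_zero.1 h0)

/-- Apart from the origin, the core lies in the union of the two open half-spaces, where the
interpolated maps converge to `FL` and `FR` respectively. -/
theorem core_cases {e : E} (he : ‖e‖ = 1) {ρ : ℝ} (hρ0 : 0 < ρ) (hρ1 : ρ < 1) {a : E}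
    (ha : a ∈ core e ρ) : a = 0 ∨ ((inner ℂ e a).re < 0 ∧ a ∈ closedBall (-e) 1) ∨
      (0 < (inner ℂ e a).re ∧ a ∈ closedBall e 1) := by
  rcases ha with (ha | ha) | ⟨x, hx, rfl⟩
  · right; left
    refine ⟨?_, closedBall_subset_closedBall hρ1.le ha⟩
    rw [mem_closedBall, dist_eq_norm, sub_neg_eq_add] at ha
    have h1 : (inner ℂ e (a + e)).re ≤ ‖a + e‖ :=
      (Complex.re_le_norm _).trans (norm_inner_le he _)
    rw [inner_add_right, inner_self_unit he, Complex.add_re, Complex.one_re] at h1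
    linarith
  · right; right
    refine ⟨?_, closedBall_subset_closedBall hρ1.le ha⟩
    rw [mem_closedBall, dist_comm, dist_eq_norm] at ha
    have h1 : (inner ℂ e (e - a)).re ≤ ‖e - a‖ :=
      (Complex.re_le_norm _).trans (norm_inner_le he _)
    rw [inner_sub_right, inner_self_unit he, Complex.sub_re, Complex.one_re] at h1
    linarith
  · simp only [inner_line he, Complex.ofReal_re]
    rcases lt_trichotomy x 0 with h | h | h
    · right; left
      refine ⟨h, ?_⟩
      rw [mem_closedBall, dist_eq_norm, sub_neg_eq_add,
        show (x : ℂ) • e + e = ((x + 1 : ℝ) : ℂ) • e by push_cast; module, norm_smul, he,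
        Complex.norm_real, mul_one, Real.norm_eq_abs, abs_le]
      constructor <;> linarith [hx.1]
    · left; rw [h]; simp
    · right; right
      refine ⟨h, ?_⟩
      rw [mem_closedBall, dist_eq_norm,
        show (x : ℂ) • e - e = ((x - 1 : ℝ) : ℂ) • e by push_cast; module, norm_smul, he,
        Complex.norm_real, mul_one, Real.norm_eq_abs, abs_le]
      constructor <;> linarith [hx.2]

/-- Near the origin the core is just the segment. -/
theorem core_near_zero {e : E} (he : ‖e‖ = 1) {ρ : ℝ} {a : E}
    (ha : a ∈ core e ρ) (han : ‖a‖ < 1 - ρ) : a = ((inner ℂ e a).re : ℂ) • e := by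
  rcases ha with (ha | ha) | ⟨x, hx, rfl⟩
  · rw [mem_closedBall, dist_eq_norm, sub_neg_eq_add] at ha
    have := norm_sub_le (a + e) a
    rw [add_sub_cancel_left, he] at this
    linarith
  · rw [mem_closedBall, dist_comm, dist_eq_norm] at ha
    have := norm_add_le (e - a) a
    rw [sub_add_cancel, he] at this
    linarith
  · simp only [inner_line he, Complex.ofReal_re]

theorem eventually_zero_of_line {e : E} (he : ‖e‖ = 1) {ρ : ℝ} (hρ1 : ρ < 1) {P : ℕ → E → Prop}
    (h : ∀ᶠ w : ℕ × ℝ in atTop ×ˢ 𝓝 0, P w.1 ((w.2 : ℂ) • e)) :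
    ∀ᶠ p : ℕ × E in atTop ×ˢ 𝓝 0, p.2 ∈ core e ρ → P p.1 p.2 := by
  have hc : Continuous fun z : E => (inner ℂ e z).re :=
    Complex.continuous_re.comp (innerSL ℂ e).continuous
  have h0 : Tendsto (fun z : E => (inner ℂ e z).re) (𝓝 0) (𝓝 0) := by
    simpa using hc.tendsto (0 : E)
  have ht : Tendsto (fun p : ℕ × E => (p.1, (inner ℂ e p.2).re)) (atTop ×ˢ 𝓝 0) (atTop ×ˢ 𝓝 0) :=
    tendsto_fst.prodMk (h0.comp tendsto_snd)
  have hn : ∀ᶠ z in 𝓝 (0 : E), ‖z‖ < 1 - ρ := by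
    have := ball_mem_nhds (0 : E) (show 0 < 1 - ρ by linarith)
    filter_upwards [this] with z hz
    simpa using hz
  filter_upwards [ht.eventually h, tendsto_snd.eventually hn] with p hp hpn hpc
  rw [core_near_zero he hpc hpn]
  exact hp

theorem eventually_zero_of_line_pair {e : E} (he : ‖e‖ = 1) {ρ : ℝ} (hρ1 : ρ < 1)
    {P : ℕ → E → E → Prop}
    (h : ∀ᶠ w : ℕ × (ℝ × ℝ) in atTop ×ˢ 𝓝 (0, 0), P w.1 ((w.2.1 : ℂ) • e) ((w.2.2 : ℂ) • e)) :
    ∀ᶠ p : ℕ × (E × E) in atTop ×ˢ 𝓝 (0, 0), p.2.1 ∈ core e ρ → p.2.2 ∈ core e ρ →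
      P p.1 p.2.1 p.2.2 := by
  have hc : Continuous fun z : E × E => ((inner ℂ e z.1).re, (inner ℂ e z.2).re) :=
    (Complex.continuous_re.comp ((innerSL ℂ e).continuous.comp continuous_fst)).prodMk
      (Complex.continuous_re.comp ((innerSL ℂ e).continuous.comp continuous_snd))
  have ht : Tendsto (fun p : ℕ × (E × E) => (p.1, ((inner ℂ e p.2.1).re, (inner ℂ e p.2.2).re)))
      (atTop ×ˢ 𝓝 (0, 0)) (atTop ×ˢ 𝓝 (0, 0)) :=
    tendsto_fst.prodMk (Tendsto.comp (by simpa using hc.tendsto ((0, 0) : E × E)) tendsto_snd)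
  have hn : ∀ᶠ z in 𝓝 ((0, 0) : E × E), ‖z‖ < 1 - ρ := by
    have := ball_mem_nhds ((0, 0) : E × E) (show 0 < 1 - ρ by linarith)
    filter_upwards [this] with z hz
    rw [← Prod.zero_eq_mk] at hz
    exact mem_ball_zero_iff.1 hz
  filter_upwards [ht.eventually h, tendsto_snd.eventually hn] with p hp hpn hpc hpc'
  rw [core_near_zero he hpc ((norm_fst_le p.2).trans_lt hpn),
    core_near_zero he hpc' ((norm_snd_le p.2).trans_lt hpn)]
  exact hp

end Main

/-! ### Gluing two balls at a contact point -/

section Main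
variable {E : Type*} [NormedAddCommGroup E] [InnerProductSpace ℂ E] [FiniteDimensional ℂ E]

/-- Two balls touching (in the model) at the origin, whose images are joined by a transverse segment,
can be glued into one embedded ball near the union of the images and the segment. -/
theorem glue_balls {e : E} (he : ‖e‖ = 1) {R : ℝ} (hR : 1 < R) {FL FR : E → E}
    (hL : DifferentiableOn ℂ FL (ball (-e) R)) (hLi : InjOn FL (ball (-e) R))
    (hFR : DifferentiableOn ℂ FR (ball e R)) (hRi : InjOn FR (ball e R))
    (hdisj : Disjoint (FL '' closedBall (-e) 1) (FR '' closedBall e 1))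
    (hsegL : Disjoint (openSegment ℝ (FL 0) (FR 0)) (FL '' closedBall (-e) 1))
    (hsegR : Disjoint (openSegment ℝ (FL 0) (FR 0)) (FR '' closedBall e 1))
    {ε : ℝ} (hε : 0 < ε) (hT : Transverse e (fderiv ℂ FL 0) (fderiv ℂ FR 0) (FR 0 - FL 0) ε)
    {W : Set E} (hW : IsOpen W) (hWL : FL '' closedBall (-e) 1 ⊆ W)
    (hWR : FR '' closedBall e 1 ⊆ W) (hWs : segment ℝ (FL 0) (FR 0) ⊆ W) {ρ' : ℝ} (hρ' : ρ' < 1) :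
    ∃ F₀ : E → E, DifferentiableOn ℂ F₀ (ball 0 1) ∧ InjOn F₀ (ball 0 1) ∧ F₀ '' ball 0 1 ⊆ W ∧
      FL '' closedBall (-e) ρ' ⊆ F₀ '' ball 0 1 ∧ FR '' closedBall e ρ' ⊆ F₀ '' ball 0 1 := by
  have := FiniteDimensional.proper ℂ E
  obtain ⟨ρ₁, hρ₁', hρ₁1⟩ := exists_between (max_lt hρ' zero_lt_one)
  obtain ⟨ρ, hρ, hρ1⟩ := exists_between hρ₁1
  have hρ₁ : ρ' < ρ₁ := (le_max_left _ _).trans_lt hρ₁'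
  have hρ0 : 0 < ρ := ((le_max_right ρ' 0).trans_lt hρ₁').trans hρ
  set K := core e ρ with hKdef
  have hK : IsCompact K := isCompact_core e ρ
  obtain ⟨EL, ER, N, hA⟩ := exists_approx e (zero_lt_one.trans hR) hL hFR
  set G : ℕ → E → E := fun j => glue e (N j) (EL j) (ER j) with hG
  have hNpos : ∀ j, 0 < N j := fun j => lt_of_lt_of_le (by positivity) (hA.le_N j)
  have h0L : (0 : E) ∈ closedBall (-e) 1 := by simp [he]
  have h0R : (0 : E) ∈ closedBall e 1 := by simp [he]
  have hsubL : closedBall (-e) 1 ⊆ ball (-e) R := closedBall_subset_ball hR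
  have hsubR : closedBall e 1 ⊆ ball e R := closedBall_subset_ball hR
  -- convergence of the approximants themselves at the contact point
  obtain ⟨r, hr1, hrR⟩ := exists_between hR
  have key : ∀ (c : E) (f : E → E) (P : ℕ → E → E), ‖c‖ = 1 → DifferentiableOn ℂ f (ball c R) →
      (∀ j, Differentiable ℂ (P j)) → TendstoUniformlyOn P f atTop (closedBall c r) →
      ConvAt P (f 0) (fderiv ℂ f 0) 0 := by
    intro c f P hc hf hP hPf
    have hs : ball (0 : E) (r - 1) ⊆ closedBall c r := by
      intro z hz
      rw [mem_ball_zero_iff] at hz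
      rw [mem_closedBall, dist_eq_norm]
      have := norm_sub_le z c
      linarith
    exact convAt_of_tendstoUniformlyOn (by linarith) (hf.mono (hs.trans (closedBall_subset_ball hrR)))
      (Eventually.of_forall fun j => (hP j).differentiableOn) (hPf.mono hs)
  have CL := key (-e) FL EL (by rwa [norm_neg]) hL hA.diffL (hA.convL r hrR)
  have CR := key e FR ER he hFR hA.diffR (hA.convR r hrR)
  -- the limit map away from the contact point
  set val : E → E := fun a => if (inner ℂ e a).re < 0 then FL a else FR a with hval
  have hsegc : IsClosed (segment ℝ (FL 0) (FR 0)) := by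
    rw [segment_eq_image_lineMap]
    exact (isCompact_Icc.image AffineMap.lineMap_continuous).isClosed
  have hnotseg : ∀ y, y ≠ FL 0 → y ≠ FR 0 → y ∉ openSegment ℝ (FL 0) (FR 0) →
      y ∉ segment ℝ (FL 0) (FR 0) := by
    intro y h1 h2 h3 h4
    rw [← insert_endpoints_openSegment] at h4
    rcases h4 with h | h | h
    · exact h1 h
    · exact h2 h
    · exact h3 h
  have hfr : Module.finrank ℂ E = Module.finrank ℂ E := rfl
  have claimC : ∀ a ∈ K, a ≠ 0 → ∃ A : E →L[ℂ] E, ConvAt G (val a) A a ∧ Function.Injective A ∧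
      val a ∈ W ∧ val a ∉ segment ℝ (FL 0) (FR 0) := by
    intro a ha ha0
    rcases (core_cases he hρ0 hρ1 ha).resolve_left ha0 with ⟨h1, h2⟩ | ⟨h1, h2⟩
    · have hv : val a = FL a := if_pos h1
      refine ⟨fderiv ℂ FL a, ?_, fderiv_injective hfr isOpen_ball hL hLi (hsubL h2), ?_, ?_⟩
      · rw [hv]; exact convAt_left he hA hL h1 (hsubL h2)
      · rw [hv]; exact hWL (mem_image_of_mem _ h2)
      · rw [hv]
        refine hnotseg _ (fun h => ha0 (hLi (hsubL h2) (hsubL h0L) h)) (fun h => ?_) (fun h => ?_)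
        · exact disjoint_left.1 hdisj (mem_image_of_mem FL h2) (h ▸ mem_image_of_mem FR h0R)
        · exact disjoint_left.1 hsegL h (mem_image_of_mem FL h2)
    · have hv : val a = FR a := if_neg (not_lt.2 h1.le)
      refine ⟨fderiv ℂ FR a, ?_, fderiv_injective hfr isOpen_ball hFR hRi (hsubR h2), ?_, ?_⟩
      · rw [hv]; exact convAt_right he hA hFR h1 (hsubR h2)
      · rw [hv]; exact hWR (mem_image_of_mem _ h2)
      · rw [hv]
        refine hnotseg _ (fun h => ?_) (fun h => ha0 (hRi (hsubR h2) (hsubR h0R) h)) (fun h => ?_)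
        · exact disjoint_left.1 hdisj (mem_image_of_mem FL h0L) (h ▸ mem_image_of_mem FR h2)
        · exact disjoint_left.1 hsegR h (mem_image_of_mem FR h2)
  have claimD : ∀ a ∈ K, a ≠ 0 → ∀ b ∈ K, b ≠ 0 → a ≠ b → val a ≠ val b := by
    intro a ha ha0 b hb hb0 hab
    rcases (core_cases he hρ0 hρ1 ha).resolve_left ha0 with ⟨h1, h2⟩ | ⟨h1, h2⟩ <;>
    rcases (core_cases he hρ0 hρ1 hb).resolve_left hb0 with ⟨h3, h4⟩ | ⟨h3, h4⟩
    · simp only [hval, if_pos h1, if_pos h3]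
      exact fun h => hab (hLi (hsubL h2) (hsubL h4) h)
    · simp only [hval, if_pos h1, if_neg (not_lt.2 h3.le)]
      exact hdisj.ne_of_mem (mem_image_of_mem _ h2) (mem_image_of_mem _ h4)
    · simp only [hval, if_neg (not_lt.2 h1.le), if_pos h3]
      exact (hdisj.ne_of_mem (mem_image_of_mem _ h4) (mem_image_of_mem _ h2)).symm
    · simp only [hval, if_neg (not_lt.2 h1.le), if_neg (not_lt.2 h3.le)]
      exact fun h => hab (hRi (hsubR h2) (hsubR h4) h)
  have ev1 : ∀ᶠ j in atTop, ∀ a ∈ K, G j a ∈ W ∧ Function.Injective (fderiv ℂ (G j) a) := by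
    refine eventually_forall_mem_of_compact hK fun a ha => ?_
    rcases eq_or_ne a 0 with rfl | ha0
    · refine eventually_zero_of_line he hρ1 (P := fun j a => G j a ∈ W ∧
        Function.Injective (fderiv ℂ (G j) a)) ?_
      filter_upwards [line_mem_of_segment (N := N) he CL CR hW hWs,
        line_fderiv_injective he hA.le_N CL CR hε hT] with w h1 h2
      exact ⟨h1, h2.2⟩
    · obtain ⟨A, hC, hAi, haW, -⟩ := claimC a ha ha0
      filter_upwards [hC.tendsto.eventually (hW.mem_nhds haW), hC.eventually_fderiv_injective hAi]
        with p h1 h2 _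
      exact ⟨h1, h2⟩
  have hfstE : ∀ a b : E, Tendsto (fun w : ℕ × (E × E) => (w.1, w.2.1)) (atTop ×ˢ 𝓝 (a, b))
      (atTop ×ˢ 𝓝 a) := fun a b =>
    tendsto_fst.prodMk ((continuous_fst.tendsto (a, b)).comp tendsto_snd)
  have hsndE : ∀ a b : E, Tendsto (fun w : ℕ × (E × E) => (w.1, w.2.2)) (atTop ×ˢ 𝓝 (a, b))
      (atTop ×ˢ 𝓝 b) := fun a b =>
    tendsto_fst.prodMk ((continuous_snd.tendsto (a, b)).comp tendsto_snd)
  have hmixed : ∀ b ∈ K, b ≠ 0 → ∀ᶠ w : ℕ × (E × E) in atTop ×ˢ 𝓝 (0, b), w.2.1 ∈ K →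
      G w.1 w.2.1 ≠ G w.1 w.2.2 := by
    intro b hb hb0
    obtain ⟨A, hC, -, -, hbs⟩ := claimC b hb hb0
    obtain ⟨η, hη, hηs⟩ := Metric.nhds_basis_closedBall.mem_iff.1 (hsegc.isOpen_compl.mem_nhds hbs)
    have h1 := eventually_zero_of_line he hρ1 (P := fun j a => G j a ∈ (closedBall (val b) η)ᶜ)
      (line_mem_of_segment (N := N) he CL CR isClosed_closedBall.isOpen_compl
        (fun y hy hyc => hηs hyc hy))
    filter_upwards [(hfstE 0 b).eventually h1, (hsndE 0 b).eventually
      (hC.tendsto.eventually (closedBall_mem_nhds _ hη))] with w h2 h3 hwK heq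
    exact h2 hwK (heq ▸ h3)
  have ev2 : ∀ᶠ j in atTop, ∀ ab ∈ K ×ˢ K, G j ab.1 = G j ab.2 → ab.1 = ab.2 := by
    refine eventually_forall_mem_of_compact (hK.prod hK) ?_
    rintro ⟨a, b⟩ ⟨ha, hb⟩
    simp only at ha hb
    rcases eq_or_ne a 0 with rfl | ha0
    · rcases eq_or_ne b 0 with rfl | hb0
      · have h1 := eventually_zero_of_line_pair he hρ1 (P := fun j x y => G j x = G j y → x = y) (by
          filter_upwards [line_pair he hA.le_N CL CR hε hT] with w hw heq
          rw [hw heq])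
        filter_upwards [h1] with w hw hwK
        exact hw hwK.1 hwK.2
      · filter_upwards [hmixed b hb hb0] with w hw hwK heq
        exact absurd heq (hw hwK.1)
    · obtain ⟨A, hC, hAi, -, -⟩ := claimC a ha ha0
      rcases eq_or_ne b 0 with rfl | hb0
      · have hswap : Tendsto (fun w : ℕ × (E × E) => (w.1, w.2.swap)) (atTop ×ˢ 𝓝 (a, 0))
            (atTop ×ˢ 𝓝 (0, a)) :=
          tendsto_fst.prodMk ((continuous_swap.tendsto ((a, 0) : E × E)).comp tendsto_snd)
        filter_upwards [hswap.eventually (hmixed a ha ha0)] with w hw hwK heq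
        exact absurd heq.symm (hw hwK.2)
      · rcases eq_or_ne a b with rfl | hab
        · filter_upwards [hC.eventually_inj hAi] with w hw _ heq
          exact hw heq
        · obtain ⟨B, hD, -⟩ := claimC b hb hb0
          have h1 := Tendsto.prodMk_nhds (hC.tendsto.comp (hfstE a b)) (hD.tendsto.comp (hsndE a b))
          have h2 : (diagonal E)ᶜ ∈ 𝓝 (val a, val b) :=
            isClosed_diagonal.isOpen_compl.mem_nhds (claimD a ha ha0 b hb hb0 hab)
          filter_upwards [h1.eventually h2] with w hw _ heq
          exact absurd heq hw
  -- the domain of holomorphy of the glued maps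
  set O₁ : ℕ → Set E := fun j => {z | 1 + Complex.exp (-(N j * inner ℂ e z)) ≠ 0} with hO₁
  have hO₁o : ∀ j, IsOpen (O₁ j) := fun j => by
    have hi : Continuous fun z : E => inner ℂ e z := (innerSL ℂ e).continuous
    exact isOpen_ne_fun (continuous_const.add (Complex.continuous_exp.comp
      (continuous_const.mul hi).neg)) continuous_const
  have hKO₁ : ∀ j, K ⊆ O₁ j := fun j a ha => by
    show 1 + Complex.exp (-(N j * inner ℂ e a)) ≠ 0
    rcases core_cases he hρ0 hρ1 ha with h | ⟨h, -⟩ | ⟨h, -⟩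
    · rw [h, inner_zero_right, mul_zero]; norm_num
    · refine one_add_exp_ne_zero_of_re ?_
      rw [Complex.re_ofReal_mul]
      exact mul_ne_zero (hNpos j).ne' h.ne
    · refine one_add_exp_ne_zero_of_re ?_
      rw [Complex.re_ofReal_mul]
      exact mul_ne_zero (hNpos j).ne' h.ne'
  have hGd : ∀ j, DifferentiableOn ℂ (G j) (O₁ j) := fun j z hz =>
    (fderiv_glue (hA.diffL j z) (hA.diffR j z) hz).1.differentiableWithinAt
  have hbL : ball (-e) ρ ⊆ K := fun z hz => Or.inl (Or.inl (ball_subset_closedBall hz))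
  have hbR : ball e ρ ⊆ K := fun z hz => Or.inl (Or.inr (ball_subset_closedBall hz))
  have ev2' : ∀ᶠ j in atTop, InjOn (G j) K := by
    filter_upwards [ev2] with j hj x hx y hy hxy
    exact hj (x, y) ⟨hx, hy⟩ hxy
  have evL : ∀ᶠ j in atTop, FL '' closedBall (-e) ρ' ⊆ G j '' ball (-e) ρ₁ := by
    refine eventually_cover hfr hρ₁ hρ (hL.mono (ball_subset_ball (by linarith)))
      (hLi.mono (ball_subset_ball (by linarith))) ?_ ?_
    · filter_upwards [ev2'] with j hj
      exact ⟨(hGd j).mono (hbL.trans (hKO₁ j)), hj.mono hbL⟩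
    · refine tendstoUniformlyOn_of_tendsto (isCompact_closedBall _ _)
        (hL.continuousOn.mono (closedBall_subset_ball (by linarith))) fun a ha => ?_
      have haK : a ∈ closedBall (-e) ρ := closedBall_subset_closedBall hρ.le ha
      have hre : (inner ℂ e a).re < 0 := by
        rw [mem_closedBall, dist_eq_norm, sub_neg_eq_add] at haK
        have h1 : (inner ℂ e (a + e)).re ≤ ‖a + e‖ :=
          (Complex.re_le_norm _).trans (norm_inner_le he _)
        rw [inner_add_right, inner_self_unit he, Complex.add_re, Complex.one_re] at h1
        linarith
      exact (convAt_left he hA hL hre (closedBall_subset_ball (by linarith) haK)).tendsto.mono_left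
        (Filter.prod_mono le_rfl nhdsWithin_le_nhds)
  have evR : ∀ᶠ j in atTop, FR '' closedBall e ρ' ⊆ G j '' ball e ρ₁ := by
    refine eventually_cover hfr hρ₁ hρ (hFR.mono (ball_subset_ball (by linarith)))
      (hRi.mono (ball_subset_ball (by linarith))) ?_ ?_
    · filter_upwards [ev2'] with j hj
      exact ⟨(hGd j).mono (hbR.trans (hKO₁ j)), hj.mono hbR⟩
    · refine tendstoUniformlyOn_of_tendsto (isCompact_closedBall _ _)
        (hFR.continuousOn.mono (closedBall_subset_ball (by linarith))) fun a ha => ?_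
      have haK : a ∈ closedBall e ρ := closedBall_subset_closedBall hρ.le ha
      have hre : 0 < (inner ℂ e a).re := by
        rw [mem_closedBall, dist_comm, dist_eq_norm] at haK
        have h1 : (inner ℂ e (e - a)).re ≤ ‖e - a‖ :=
          (Complex.re_le_norm _).trans (norm_inner_le he _)
        rw [inner_sub_right, inner_self_unit he, Complex.sub_re, Complex.one_re] at h1
        linarith
      exact (convAt_right he hA hFR hre (closedBall_subset_ball (by linarith) haK)).tendsto.mono_left
        (Filter.prod_mono le_rfl nhdsWithin_le_nhds)
  obtain ⟨j, hj1, hj2, hjL, hjR⟩ := (ev1.and (ev2'.and (evL.and evR))).exists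
  have hda : ∀ x ∈ K, DifferentiableAt ℂ (G j) x := fun x hx =>
    (hGd j).differentiableAt ((hO₁o j).mem_nhds (hKO₁ j hx))
  obtain ⟨O₂, hO₂o, hKO₂, hO₂i⟩ := hj2.exists_isOpen_superset hK
    (fun x hx => (hda x hx).continuousAt) (fun x hx => exists_injOn_nhds
      ((contDiffAt_one (hO₁o j) (hGd j) (hKO₁ j hx)).hasStrictFDerivAt one_ne_zero) (hj1 x hx).2)
  obtain ⟨Ψ, hΨd, hΨi, hΨm, hΨL, hΨR⟩ := exists_dumbbell he hρ0 hρ1 hρ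
    (((hGd j).continuousOn.isOpen_inter_preimage (hO₁o j) hW).inter hO₂o)
    (fun x hx => ⟨⟨hKO₁ j hx, (hj1 x hx).1⟩, hKO₂ hx⟩)
  refine ⟨G j ∘ Ψ, (hGd j).comp hΨd fun z hz => (hΨm hz).1.1,
    hO₂i.comp hΨi fun z hz => (hΨm hz).2, ?_, ?_, ?_⟩
  · rintro _ ⟨z, hz, rfl⟩
    exact (hΨm hz).1.2
  · rw [image_comp]; exact hjL.trans (image_mono hΨL)
  · rw [image_comp]; exact hjR.trans (image_mono hΨR)

end Main

/-! ### Gluing along a shortest segment -/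

section Dist
variable {E : Type*} [NormedAddCommGroup E] [InnerProductSpace ℂ E]

/-- A curve whose velocity makes an obtuse angle with its position initially gets shorter. -/
lemma eventually_norm_lt {γ : ℝ → E} {v : E} (hγ : HasDerivAt γ v 0)
    (hv : (inner ℂ (γ 0) v).re < 0) : ∀ᶠ τ in 𝓝[>] (0 : ℝ), ‖γ τ‖ < ‖γ 0‖ := by
  let _ : InnerProductSpace ℝ E := InnerProductSpace.complexToReal
  have h := hγ.norm_sq
  have hneg : 2 * inner ℝ (γ 0) v < 0 := by
    have : inner ℝ (γ 0) v = (inner ℂ (γ 0) v).re := rfl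
    rw [this]; linarith
  have hs := (hasDerivAt_iff_tendsto_slope.1 h).mono_left
    (nhdsWithin_mono (0 : ℝ) (fun x (hx : 0 < x) => hx.ne'))
  filter_upwards [hs.eventually (gt_mem_nhds hneg), self_mem_nhdsWithin] with τ h1 h2
  have h2 : 0 < τ := h2
  rw [slope_def_field] at h1
  simp only [sub_zero] at h1
  have h3 := (div_neg_iff.1 h1).resolve_left (fun h => by linarith [h.2])
  exact lt_of_pow_lt_pow_left₀ 2 (norm_nonneg _) (by linarith [h3.1])

/-- At a point `u` of the closed unit ball where the distance from `F u` to an outside point `q` is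
minimal, `u` lies on the sphere and the pulled back direction to `q` points out of the ball. -/
lemma contact {F : E → E} {u q : E} {A : E ≃L[ℂ] E} (hA : HasFDerivAt F (A : E →L[ℂ] E) u)
    (hu : u ∈ closedBall (0 : E) 1) (hmin : ∀ u' ∈ closedBall (0 : E) 1, dist (F u) q ≤ dist (F u') q)
    (hq : F u ≠ q) : ‖u‖ = 1 ∧ 0 < (inner ℂ u (A.symm (q - F u))).re := by
  set d := q - F u with hd
  have hd0 : d ≠ 0 := sub_ne_zero.2 hq.symm
  have key : ∀ w : E, 0 < (inner ℂ d (A w)).re → (‖u‖ < 1 ∨ (inner ℂ u w).re < 0) → False := by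
    intro w hw hor
    have hline : HasDerivAt (fun τ : ℝ => u + τ • w) w 0 := by
      simpa using ((hasDerivAt_id (0 : ℝ)).smul_const w).const_add u
    have hA' : HasFDerivAt F ((A : E →L[ℂ] E).restrictScalars ℝ) (u + (0 : ℝ) • w) := by
      simpa using hA.restrictScalars ℝ
    have hcomp : HasDerivAt (fun τ : ℝ => q - F (u + τ • w)) (-(A w)) 0 := by
      have := (hA'.comp_hasDerivAt (0 : ℝ) hline).const_sub q
      simpa using this
    have h1 := eventually_norm_lt hcomp (by simpa [← hd] using hw)
    have h2 : ∀ᶠ τ in 𝓝[>] (0 : ℝ), ‖u + τ • w‖ < 1 := by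
      rcases hor with h | h
      · have := hline.continuousAt.norm.eventually_lt_const (u := 1) (by simpa using h)
        exact this.filter_mono nhdsWithin_le_nhds
      · have := eventually_norm_lt hline (by simpa using h)
        filter_upwards [this] with τ hτ
        refine hτ.trans_le ?_
        simpa using hu
    obtain ⟨τ, h3, h4⟩ := (h1.and h2).exists
    have h5 := hmin (u + τ • w) (by simpa using h4.le)
    rw [dist_comm, dist_comm _ q, dist_eq_norm, dist_eq_norm] at h5
    simp at h3
    linarith
  have hdd : (inner ℂ d d).re = ‖d‖ ^ 2 := by
    simpa using inner_self_eq_norm_sq (𝕜 := ℂ) d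
  have hdpos : 0 < ‖d‖ ^ 2 := by positivity
  have hu1 : ‖u‖ = 1 := by
    by_contra h
    have hlt : ‖u‖ < 1 := lt_of_le_of_ne (by simpa using hu) h
    exact key (A.symm d) (by rw [A.apply_symm_apply, hdd]; exact hdpos) (Or.inl hlt)
  refine ⟨hu1, ?_⟩
  by_contra hneg
  push Not at hneg
  set c := (inner ℂ d (A u)).re with hc
  set l : ℝ := ‖d‖ ^ 2 / (2 * (1 + |c|)) with hl
  have hl0 : 0 < l := by positivity
  have hlc : l * c < ‖d‖ ^ 2 := by
    have h1 : l * (2 * (1 + |c|)) = ‖d‖ ^ 2 := by rw [hl]; field_simp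
    nlinarith [le_abs_self c, abs_nonneg c]
  have huu : (inner ℂ u u).re = 1 := by
    have := inner_self_eq_norm_sq (𝕜 := ℂ) u
    rw [hu1, one_pow] at this; exact this
  refine key (A.symm d - (l : ℂ) • u) ?_ (Or.inr ?_)
  · rw [map_sub, map_smul, inner_sub_right, inner_smul_right, Complex.sub_re, Complex.re_ofReal_mul,
      A.apply_symm_apply, hdd]
    linarith
  · rw [inner_sub_right, inner_smul_right, Complex.sub_re, Complex.re_ofReal_mul, huu]
    linarith

/-- The unitary group acts transitively on the unit sphere. -/
lemma exists_unitary [FiniteDimensional ℂ E] {a b : E} (ha : ‖a‖ = 1) (hb : ‖b‖ = 1) :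
    ∃ T : E ≃ₗᵢ[ℂ] E, T a = b := by
  let L : (ℂ ∙ a) →ₗᵢ[ℂ] E :=
    ((ℂ ∙ b).subtypeₗᵢ.comp (LinearIsometryEquiv.toSpanUnitSingleton b hb).toLinearIsometry).comp
      (LinearIsometryEquiv.toSpanUnitSingleton a ha).symm.toLinearIsometry
  refine ⟨L.extend.toLinearIsometryEquiv rfl, ?_⟩
  have h1 := L.extend_apply ⟨a, Submodule.mem_span_singleton_self a⟩
  have h2 : (LinearIsometryEquiv.toSpanUnitSingleton a ha).symm
      ⟨a, Submodule.mem_span_singleton_self a⟩ = (1 : ℂ) := by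
    rw [LinearIsometryEquiv.symm_apply_eq]
    simp
  simp only [LinearIsometry.coe_toLinearIsometryEquiv]
  rw [h1]
  simp [L, h2]

/-- Along a shortest segment between two disjoint sets, interior points lie in neither of them. -/
lemma disjoint_openSegment_of_min {K L : Set E} {p q : E} (hp : p ∈ K) (hq : q ∈ L) (hpq : p ≠ q)
    (hmin : ∀ x ∈ K, ∀ y ∈ L, dist p q ≤ dist x y) :
    Disjoint (openSegment ℝ p q) K ∧ Disjoint (openSegment ℝ p q) L := by
  have hpos : 0 < dist p q := dist_pos.2 hpq
  constructor
  · rw [Set.disjoint_left]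
    rintro y hy hyK
    rw [openSegment_eq_image_lineMap] at hy
    obtain ⟨t, ht, rfl⟩ := hy
    have h := hmin _ hyK _ hq
    rw [dist_lineMap_right, Real.norm_eq_abs, abs_of_pos (by linarith [ht.2])] at h
    nlinarith [ht.1]
  · rw [Set.disjoint_left]
    rintro y hy hyL
    rw [openSegment_eq_image_lineMap] at hy
    obtain ⟨t, ht, rfl⟩ := hy
    have h := hmin _ hp _ hyL
    rw [dist_left_lineMap, Real.norm_eq_abs, abs_of_pos ht.1] at h
    nlinarith [ht.2]

/-- Gluing of two disjoint embedded balls along a shortest segment between them. -/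
theorem glue_of_dist [FiniteDimensional ℂ E] {R : ℝ} (hR : 1 < R) {F G : E → E}
    (hF : DifferentiableOn ℂ F (ball 0 R)) (hFi : InjOn F (ball 0 R))
    (hG : DifferentiableOn ℂ G (ball 0 R)) (hGi : InjOn G (ball 0 R))
    (hdisj : Disjoint (F '' closedBall 0 1) (G '' closedBall 0 1))
    {W : Set E} (hW : IsOpen W) (hWF : F '' closedBall 0 1 ⊆ W) (hWG : G '' closedBall 0 1 ⊆ W)
    (hseg : ∀ p ∈ F '' closedBall 0 1, ∀ q ∈ G '' closedBall 0 1,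
      (∀ p' ∈ F '' closedBall 0 1, ∀ q' ∈ G '' closedBall 0 1, dist p q ≤ dist p' q') →
      segment ℝ p q ⊆ W)
    {ρ' : ℝ} (hρ' : ρ' < 1) :
    ∃ F₀ : E → E, DifferentiableOn ℂ F₀ (ball 0 1) ∧ InjOn F₀ (ball 0 1) ∧ F₀ '' ball 0 1 ⊆ W ∧
      F '' closedBall 0 ρ' ⊆ F₀ '' ball 0 1 ∧ G '' closedBall 0 ρ' ⊆ F₀ '' ball 0 1 := by
  have hsub : closedBall (0 : E) 1 ⊆ ball 0 R := closedBall_subset_ball hR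
  have _ : ProperSpace E := FiniteDimensional.proper ℂ E
  have hcF : IsCompact (F '' closedBall 0 1) :=
    (isCompact_closedBall 0 1).image_of_continuousOn (hF.continuousOn.mono hsub)
  have hcG : IsCompact (G '' closedBall 0 1) :=
    (isCompact_closedBall 0 1).image_of_continuousOn (hG.continuousOn.mono hsub)
  have hne : (closedBall (0 : E) 1).Nonempty := ⟨0, by simp⟩
  obtain ⟨⟨p, q⟩, ⟨hp, hq⟩, hmin⟩ := (hcF.prod hcG).exists_isMinOn
    ((hne.image F).prod (hne.image G)) (continuous_dist.continuousOn)
  have hmin' : ∀ p' ∈ F '' closedBall 0 1, ∀ q' ∈ G '' closedBall 0 1, dist p q ≤ dist p' q' :=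
    fun p' hp' q' hq' => hmin (show (p', q') ∈ _ from ⟨hp', hq'⟩)
  replace hp : p ∈ F '' closedBall 0 1 := hp
  replace hq : q ∈ G '' closedBall 0 1 := hq
  have hpq : p ≠ q := fun h => Set.disjoint_left.1 hdisj hp (h ▸ hq)
  have hsegW := hseg p hp q hq hmin'
  obtain ⟨hs1, hs2⟩ := disjoint_openSegment_of_min hp hq hpq hmin'
  obtain ⟨u, hu, hup⟩ := hp
  obtain ⟨v, hv, hvq⟩ := hq
  obtain ⟨A, hA⟩ := fderiv_isInvertible (rfl : Module.finrank ℂ E = Module.finrank ℂ E)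
    isOpen_ball hF hFi (hsub hu)
  obtain ⟨B, hB⟩ := fderiv_isInvertible (rfl : Module.finrank ℂ E = Module.finrank ℂ E)
    isOpen_ball hG hGi (hsub hv)
  obtain ⟨hu1, huA⟩ := contact (q := q) hA.hasFDerivAt hu
    (fun u' hu' => hup ▸ hmin' _ (mem_image_of_mem F hu') q (hvq ▸ mem_image_of_mem G hv))
    (hup ▸ hpq)
  obtain ⟨hv1, hvB⟩ := contact (q := p) hB.hasFDerivAt hv
    (fun v' hv' => by
      rw [dist_comm, dist_comm _ p, hvq]
      exact hmin' p (hup ▸ mem_image_of_mem F hu) _ (mem_image_of_mem G hv'))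
    (hvq ▸ hpq.symm)
  rw [hup] at huA
  rw [hvq] at hvB
  obtain ⟨T, hT⟩ := exists_unitary hu1 (b := -v) (by simpa using hv1)
  let B' : E ≃L[ℂ] E := T.toContinuousLinearEquiv.trans B
  have hB'pos : 0 < (inner ℂ u (B'.symm (q - p))).re := by
    have h1 : B'.symm (q - p) = T.symm (B.symm (q - p)) := rfl
    have h2 : inner ℂ u (T.symm (B.symm (q - p))) = inner ℂ (-v) (B.symm (q - p)) := by
      rw [← hT, ← T.inner_map_map, T.apply_symm_apply]
    rw [h1, h2, inner_neg_left, ← inner_neg_right, ← map_neg, neg_sub]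
    exact hvB
  obtain ⟨S, hS, ε, hε, htr⟩ := exists_rotation_transverse hu1 A B' huA hB'pos
  let FL : E → E := fun z => F (z + u)
  let FR : E → E := fun z => G (T (S (z - u)))
  have hFL0 : FL 0 = p := by simp [FL, hup]
  have hTS : T (S (0 - u)) = v := by simp [hS, hT]
  have hFR0 : FR 0 = q := by simp only [FR]; rw [hTS, hvq]
  have hLd : fderiv ℂ FL 0 = A := by
    have h1 : HasFDerivAt (fun z : E => z + u) (ContinuousLinearMap.id ℂ E) 0 :=
      (hasFDerivAt_id (0 : E)).add_const u
    have h2 : HasFDerivAt F (A : E →L[ℂ] E) (0 + u) := by simpa using hA.hasFDerivAt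
    have h3 := (h2.comp (0 : E) h1).fderiv
    rw [ContinuousLinearMap.comp_id] at h3
    exact h3
  have hin : ∀ z : E, HasFDerivAt (fun z : E => T (S (z - u)))
      ((T.toContinuousLinearEquiv : E →L[ℂ] E) ∘L (S.toContinuousLinearEquiv : E →L[ℂ] E)) z := by
    intro z
    have h1 : HasFDerivAt (fun z : E => z - u) (ContinuousLinearMap.id ℂ E) z :=
      (hasFDerivAt_id z).sub_const u
    have h2 := ((T.toContinuousLinearEquiv : E →L[ℂ] E) ∘L
      (S.toContinuousLinearEquiv : E →L[ℂ] E)).hasFDerivAt (x := z - u)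
    have h3 := h2.comp z h1
    rw [ContinuousLinearMap.comp_id] at h3
    exact h3
  have hRd : fderiv ℂ FR 0 = (B' : E →L[ℂ] E) ∘L (S.toContinuousLinearEquiv : E →L[ℂ] E) := by
    have h2 : HasFDerivAt G (B : E →L[ℂ] E) (T (S (0 - u))) := by
      rw [hTS]; exact hB.hasFDerivAt
    exact (h2.comp (0 : E) (hin 0)).fderiv
  -- the reparametrizations are isometries, so they match up balls
  have mL : ∀ z : E, dist (z + u) 0 = dist z (-u) := by
    intro z; simp [dist_eq_norm]
  have mR : ∀ z : E, dist (T (S (z - u))) 0 = dist z u := by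
    intro z; rw [dist_zero_right, T.norm_map, S.norm_map, dist_eq_norm]
  have imL : ∀ r : ℝ, FL '' closedBall (-u) r = F '' closedBall 0 r := by
    intro r
    ext y
    constructor
    · rintro ⟨z, hz, rfl⟩
      exact ⟨z + u, by rw [mem_closedBall, mL]; exact hz, rfl⟩
    · rintro ⟨z, hz, rfl⟩
      refine ⟨z - u, ?_, by simp [FL]⟩
      rw [mem_closedBall, ← mL]; simpa using hz
  have imR : ∀ r : ℝ, FR '' closedBall u r = G '' closedBall 0 r := by
    intro r
    ext y
    constructor
    · rintro ⟨z, hz, rfl⟩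
      exact ⟨T (S (z - u)), by rw [mem_closedBall, mR]; exact hz, rfl⟩
    · rintro ⟨z, hz, rfl⟩
      refine ⟨S.symm (T.symm z) + u, ?_, by simp [FR]⟩
      rw [mem_closedBall, ← mR]; simpa using hz
  have bL : MapsTo (fun z : E => z + u) (ball (-u) R) (ball 0 R) := fun z hz => by
    rw [mem_ball, mL]; exact hz
  have bR : MapsTo (fun z : E => T (S (z - u))) (ball u R) (ball 0 R) := fun z hz => by
    rw [mem_ball, mR]; exact hz
  obtain ⟨F₀, h1, h2, h3, h4, h5⟩ := glue_balls hu1 hR (FL := FL) (FR := FR)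
    (hF.comp (differentiableOn_id.add_const u) bL)
    (hFi.comp (fun a _ b _ h => by simpa using h) bL)
    (hG.comp (fun z _ => (hin z).differentiableAt.differentiableWithinAt) bR)
    (hGi.comp (fun a _ b _ h => by simpa using h) bR)
    (by rw [imL, imR]; exact hdisj)
    (by rw [imL, hFL0, hFR0]; exact hs1) (by rw [imR, hFL0, hFR0]; exact hs2)
    hε (by rw [hLd, hRd, hFL0, hFR0]; exact htr) hW (by rw [imL]; exact hWF)
    (by rw [imR]; exact hWG) (by rw [hFL0, hFR0]; exact hsegW) hρ'
  rw [imL] at h4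
  rw [imR] at h5
  exact ⟨F₀, h1, h2, h3, h4, h5⟩

end Dist

/-! ### Reachable points and connectedness -/

section Final
variable {E : Type*} [NormedAddCommGroup E] [InnerProductSpace ℂ E]

lemma image_scale_closedBall (F : E → E) {a : ℝ} (ha : 0 < a) (r : ℝ) :
    (fun z : E => F (a • z)) '' closedBall 0 r = F '' closedBall 0 (a * r) := by
  ext y
  constructor
  · rintro ⟨z, hz, rfl⟩
    refine ⟨a • z, ?_, rfl⟩
    rw [mem_closedBall_zero_iff] at hz ⊢
    rw [norm_smul, Real.norm_eq_abs, abs_of_pos ha]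
    gcongr
  · rintro ⟨z, hz, rfl⟩
    refine ⟨a⁻¹ • z, ?_, by simp [smul_smul, ha.ne']⟩
    rw [mem_closedBall_zero_iff] at hz ⊢
    rw [norm_smul, Real.norm_eq_abs, abs_of_pos (by positivity), inv_mul_le_iff₀ ha]
    exact hz

lemma mapsTo_scale_ball {a R b : ℝ} (ha : 0 < a) (h : a * R ≤ b) :
    MapsTo (fun z : E => a • z) (ball 0 R) (ball 0 b) := fun z hz => by
  rw [mem_ball_zero_iff] at hz ⊢
  rw [norm_smul, Real.norm_eq_abs, abs_of_pos ha]
  exact (mul_lt_mul_of_pos_left hz ha).trans_le h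

lemma scale_differentiableOn {F : E → E} {a R b : ℝ} (ha : 0 < a) (h : a * R ≤ b)
    (hF : DifferentiableOn ℂ F (ball 0 b)) :
    DifferentiableOn ℂ (fun z : E => F (a • z)) (ball 0 R) := by
  refine hF.comp (f := fun z : E => a • z) ?_ (mapsTo_scale_ball ha h)
  exact (differentiable_id.const_smul a).differentiableOn

lemma scale_injOn {F : E → E} {a R b : ℝ} (ha : 0 < a) (h : a * R ≤ b)
    (hF : InjOn F (ball 0 b)) : InjOn (fun z : E => F (a • z)) (ball 0 R) :=
  hF.comp (f := fun z : E => a • z) (fun x _ y _ hxy => smul_right_injective E ha.ne' hxy)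
    (mapsTo_scale_ball ha h)

variable [FiniteDimensional ℂ E]

/-- Two disjoint embedded balls, some points of which are closer than `ε`, can be glued inside any
open set containing both and the `ε`-neighbourhood of the second. -/
theorem join {a b σ τ σ' τ' : ℝ} (hσ : 0 < σ) (hσa : σ < a) (hτ : 0 < τ) (hτb : τ < b)
    (hσ' : σ' < σ) (hτ' : τ' < τ) {F G : E → E}
    (hF : DifferentiableOn ℂ F (ball 0 a)) (hFi : InjOn F (ball 0 a))
    (hG : DifferentiableOn ℂ G (ball 0 b)) (hGi : InjOn G (ball 0 b))
    (hdisj : Disjoint (F '' closedBall 0 σ) (G '' closedBall 0 τ))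
    {W : Set E} (hW : IsOpen W) (hWF : F '' closedBall 0 σ ⊆ W) {ε : ℝ}
    (hWG : ∀ y ∈ G '' closedBall 0 τ, ball y ε ⊆ W)
    {p q : E} (hp : p ∈ F '' closedBall 0 σ) (hq : q ∈ G '' closedBall 0 τ) (hpq : dist p q < ε) :
    ∃ F₀ : E → E, DifferentiableOn ℂ F₀ (ball 0 1) ∧ InjOn F₀ (ball 0 1) ∧ F₀ '' ball 0 1 ⊆ W ∧
      F '' closedBall 0 σ' ⊆ F₀ '' ball 0 1 ∧ G '' closedBall 0 τ' ⊆ F₀ '' ball 0 1 := by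
  have hε : 0 < ε := dist_nonneg.trans_lt hpq
  have hRa : σ * min (a / σ) (b / τ) ≤ a := by
    calc σ * min (a / σ) (b / τ) ≤ σ * (a / σ) := by gcongr; exact min_le_left _ _
      _ = a := by field_simp
  have hRb : τ * min (a / σ) (b / τ) ≤ b := by
    calc τ * min (a / σ) (b / τ) ≤ τ * (b / τ) := by gcongr; exact min_le_right _ _
      _ = b := by field_simp
  have hR : 1 < min (a / σ) (b / τ) := lt_min ((one_lt_div hσ).2 hσa) ((one_lt_div hτ).2 hτb)
  have hρ : max (σ' / σ) (τ' / τ) < 1 := max_lt ((div_lt_one hσ).2 hσ') ((div_lt_one hτ).2 hτ')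
  have h1σ : σ' ≤ σ * max (σ' / σ) (τ' / τ) := by
    calc σ' = σ * (σ' / σ) := by field_simp
      _ ≤ _ := by gcongr; exact le_max_left _ _
  have h1τ : τ' ≤ τ * max (σ' / σ) (τ' / τ) := by
    calc τ' = τ * (τ' / τ) := by field_simp
      _ ≤ _ := by gcongr; exact le_max_right _ _
  obtain ⟨F₀, h1, h2, h3, h4, h5⟩ := glue_of_dist hR
    (scale_differentiableOn hσ hRa hF) (scale_injOn hσ hRa hFi)
    (scale_differentiableOn hτ hRb hG) (scale_injOn hτ hRb hGi)
    (by simpa only [image_scale_closedBall F hσ, image_scale_closedBall G hτ, mul_one] using hdisj)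
    hW (by simpa only [image_scale_closedBall F hσ, mul_one] using hWF)
    (by
      rw [image_scale_closedBall G hτ, mul_one]
      exact fun y hy => hWG y hy (mem_ball_self hε))
    (by
      rw [image_scale_closedBall F hσ, image_scale_closedBall G hτ, mul_one, mul_one]
      intro p' hp' q' hq' hmin
      refine Subset.trans ?_ (hWG q' hq')
      exact (convex_ball q' ε).segment_subset ((hmin p hp q hq).trans_lt hpq) (mem_ball_self hε))
    hρ
  rw [image_scale_closedBall F hσ] at h4
  rw [image_scale_closedBall G hτ] at h5
  exact ⟨F₀, h1, h2, h3, (image_mono (closedBall_subset_closedBall h1σ)).trans h4,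
    (image_mono (closedBall_subset_closedBall h1τ)).trans h5⟩

/-- A compact set in the image of the open unit ball lies in the image of a smaller closed ball. -/
lemma exists_radius {F : E → E} (hF : DifferentiableOn ℂ F (ball 0 1)) (hFi : InjOn F (ball 0 1))
    {K : Set E} (hK : IsCompact K) (hKF : K ⊆ F '' ball 0 1) :
    ∃ σ, 0 < σ ∧ σ < 1 ∧ K ⊆ F '' closedBall 0 σ := by
  have hcov : K ⊆ ⋃ t : Ioo (0 : ℝ) 1, F '' ball 0 t.1 := by
    intro y hy
    obtain ⟨z, hz, rfl⟩ := hKF hy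
    rw [mem_ball_zero_iff] at hz
    refine mem_iUnion.2 ⟨⟨(‖z‖ + 1) / 2, by constructor <;> linarith [norm_nonneg z]⟩, z, ?_, rfl⟩
    rw [mem_ball_zero_iff]
    show ‖z‖ < (‖z‖ + 1) / 2
    linarith
  have hopen : ∀ t : Ioo (0 : ℝ) 1, IsOpen (F '' ball 0 t.1) := fun t =>
    isOpen_image (rfl : Module.finrank ℂ E = Module.finrank ℂ E) isOpen_ball
      (hF.mono (ball_subset_ball t.2.2.le)) (hFi.mono (ball_subset_ball t.2.2.le))
  have : Nonempty (Ioo (0 : ℝ) 1) := ⟨⟨1 / 2, by constructor <;> norm_num⟩⟩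
  obtain ⟨t, ht⟩ := hK.elim_directed_cover _ hopen hcov
    (Monotone.directed_le fun s t hst => image_mono (ball_subset_ball hst))
  exact ⟨t.1, t.2.1, t.2.2, ht.trans (image_mono ball_subset_closedBall)⟩

/-- `Reach V K` is the set of points that lie, together with all of `K`, in the image of some
injective holomorphic map from the unit ball into `V`. -/
def Reach (V K : Set E) : Set E :=
  {x | ∃ F : E → E, DifferentiableOn ℂ F (ball 0 1) ∧ InjOn F (ball 0 1) ∧ F '' ball 0 1 ⊆ V ∧
    K ⊆ F '' ball 0 1 ∧ x ∈ F '' ball 0 1}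

lemma isOpen_reach (V K : Set E) : IsOpen (Reach V K) := by
  rw [isOpen_iff_mem_nhds]
  rintro x ⟨F, h1, h2, h3, h4, h5⟩
  have ho := isOpen_image (rfl : Module.finrank ℂ E = Module.finrank ℂ E) isOpen_ball h1 h2
  filter_upwards [ho.mem_nhds h5] with y hy
  exact ⟨F, h1, h2, h3, h4, hy⟩

lemma reach_subset (V K : Set E) : Reach V K ⊆ V := by
  rintro x ⟨F, _, _, h3, _, h5⟩
  exact h3 h5

/-- `Reach V K` is relatively closed in `V`: an embedded ball coming close to `x ∈ V` can be glued
with a tiny round ball about `x`. -/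
lemma closure_reach_inter {V K : Set E} (hV : IsOpen V) (hK : IsCompact K) :
    closure (Reach V K) ∩ V ⊆ Reach V K := by
  rintro x ⟨hx, hxV⟩
  obtain ⟨δ, hδ, hδV⟩ := Metric.isOpen_iff.1 hV x hxV
  obtain ⟨y, ⟨F, h1, h2, h3, h4, h5⟩, hxy⟩ := Metric.mem_closure_iff.1 hx (δ / 2) (half_pos hδ)
  by_cases hxF : x ∈ F '' ball 0 1
  · exact ⟨F, h1, h2, h3, h4, hxF⟩
  obtain ⟨σ', hσ'0, hσ'1, hKσ⟩ := exists_radius h1 h2 (hK.insert y) (insert_subset h5 h4)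
  set σ := (σ' + 1) / 2 with hσ
  have hσσ' : σ' < σ := by rw [hσ]; linarith
  have hσ1 : σ < 1 := by rw [hσ]; linarith
  have hsub : closedBall (0 : E) σ ⊆ ball 0 1 := closedBall_subset_ball hσ1
  have _ : ProperSpace E := FiniteDimensional.proper ℂ E
  have hcl : IsClosed (F '' closedBall 0 σ) :=
    ((isCompact_closedBall 0 σ).image_of_continuousOn (h1.continuousOn.mono hsub)).isClosed
  have hxσ : x ∈ (F '' closedBall 0 σ)ᶜ := fun h => hxF (image_mono hsub h)
  obtain ⟨κ, hκ, hκF⟩ := Metric.isOpen_iff.1 hcl.isOpen_compl x hxσ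
  set k := min κ δ / 2 with hk
  have hk0 : 0 < k := by rw [hk]; have := lt_min hκ hδ; linarith
  have hkκ : k < κ := by rw [hk]; have := min_le_left κ δ; linarith [lt_min hκ hδ]
  have hkδ : k ≤ δ / 2 := by rw [hk]; have := min_le_right κ δ; linarith
  have hG : ∀ w ∈ (fun z : E => x + z) '' closedBall 0 k, dist w x ≤ k := by
    rintro w ⟨z, hz, rfl⟩
    simpa using hz
  have hx0 : ∀ r : ℝ, 0 ≤ r → x ∈ (fun z : E => x + z) '' closedBall 0 r :=
    fun r hr => ⟨0, by simpa using hr, by simp⟩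
  obtain ⟨F₀, g1, g2, g3, g4, g5⟩ := join (a := 1) (b := 2 * k) (σ := σ) (τ := k) (σ' := σ')
    (τ' := k / 2) (hσ'0.trans hσσ') hσ1 hk0 (by linarith) hσσ' (by linarith) h1 h2
    (G := fun z => x + z) (differentiable_id.const_add x).differentiableOn
    (fun u _ v _ h => by simpa using h)
    (by
      rw [Set.disjoint_left]
      intro w hwF hwG
      exact hκF (show w ∈ ball x κ from (hG w hwG).trans_lt hkκ) hwF)
    hV ((image_mono hsub).trans h3) (ε := δ / 2)
    (by
      intro w hw v hv
      refine hδV ?_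
      rw [mem_ball] at hv ⊢
      linarith [dist_triangle v w x, hG w hw])
    (p := y) (q := x) (image_mono (closedBall_subset_closedBall hσσ'.le) (hKσ (mem_insert y K)))
    (hx0 k hk0.le) (by rw [dist_comm]; exact hxy)
  exact ⟨F₀, g1, g2, g3, ((subset_insert y K).trans hKσ).trans g4, g5 (hx0 _ (by linarith))⟩

/-- The gluing theorem with independent radii. The set of points reachable together with
`K = F₁(B̄(s₁))` inside `V = U \ F₂(B̄(t))` is open and closed in `V`; as `U` is connected it
accumulates at `F₂(B̄(t))`, and a last gluing adds `F₂(B̄(t'))`. -/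
theorem main {U : Set E} (hUopen : IsOpen U) (hUconn : IsConnected U)
    {r₁ r₂ : ℝ} (hr₁ : 0 < r₁) (hr₂ : 0 < r₂) {F₁ F₂ : E → E}
    (hF₁ : DifferentiableOn ℂ F₁ (ball 0 r₁)) (hF₁inj : Set.InjOn F₁ (ball 0 r₁))
    (hF₁U : F₁ '' ball 0 r₁ ⊆ U)
    (hF₂ : DifferentiableOn ℂ F₂ (ball 0 r₂)) (hF₂inj : Set.InjOn F₂ (ball 0 r₂))
    (hF₂U : F₂ '' ball 0 r₂ ⊆ U)
    (hdisj : Disjoint (F₁ '' ball 0 r₁) (F₂ '' ball 0 r₂))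
    {s₁ t' t : ℝ} (hs₁ : 0 ≤ s₁) (hs₁r : s₁ < r₁) (ht0 : 0 < t) (ht' : t' < t) (htr : t < r₂) :
    ∃ F₀ : E → E, DifferentiableOn ℂ F₀ (ball 0 1) ∧ InjOn F₀ (ball 0 1) ∧ F₀ '' ball 0 1 ⊆ U ∧
      F₁ '' closedBall 0 s₁ ∪ F₂ '' closedBall 0 t' ⊆ F₀ '' ball 0 1 := by
  have _ : ProperSpace E := FiniteDimensional.proper ℂ E
  have hsub1 : closedBall (0 : E) s₁ ⊆ ball 0 r₁ := closedBall_subset_ball hs₁r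
  have hsub2 : closedBall (0 : E) t ⊆ ball 0 r₂ := closedBall_subset_ball htr
  set K := F₁ '' closedBall 0 s₁ with hKdef
  set C := F₂ '' closedBall 0 t with hCdef
  have hK : IsCompact K :=
    (isCompact_closedBall 0 s₁).image_of_continuousOn (hF₁.continuousOn.mono hsub1)
  have hC : IsCompact C :=
    (isCompact_closedBall 0 t).image_of_continuousOn (hF₂.continuousOn.mono hsub2)
  have hCU : C ⊆ U := (image_mono hsub2).trans hF₂U
  set V := U \ C with hVdef
  have hV : IsOpen V := hUopen.sdiff hC.isClosed
  -- `F₁` itself shows that the reachable set is nonempty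
  have hstart : F₁ 0 ∈ Reach V K := by
    have him : (fun z : E => F₁ (r₁ • z)) '' ball 0 1 ⊆ F₁ '' ball 0 r₁ := by
      rintro _ ⟨z, hz, rfl⟩
      exact mem_image_of_mem F₁ (mapsTo_scale_ball hr₁ (mul_one r₁).le hz)
    have hK' : K ⊆ (fun z : E => F₁ (r₁ • z)) '' ball 0 1 := by
      have h := image_scale_closedBall F₁ hr₁ (s₁ / r₁)
      rw [mul_div_cancel₀ _ hr₁.ne'] at h
      rw [hKdef, ← h]
      exact image_mono (closedBall_subset_ball ((div_lt_one hr₁).2 hs₁r))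
    refine ⟨fun z => F₁ (r₁ • z), scale_differentiableOn hr₁ (mul_one r₁).le hF₁,
      scale_injOn hr₁ (mul_one r₁).le hF₁inj, ?_, hK', hK' ⟨0, by simpa using hs₁, rfl⟩⟩
    intro w hw
    exact ⟨hF₁U (him hw), fun hwC =>
      Set.disjoint_left.1 hdisj (him hw) (image_mono hsub2 hwC)⟩
  -- connectedness of `U` forces the reachable set to accumulate at `C`
  have hmeet : ∃ c ∈ C, c ∈ closure (Reach V K) := by
    by_contra hno
    push Not at hno
    have hUR : U ⊆ Reach V K := by
      refine hUconn.isPreconnected.subset_of_closure_inter_subset (isOpen_reach V K)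
        ⟨F₁ 0, (reach_subset V K hstart).1, hstart⟩ ?_
      rintro x ⟨hx, hxU⟩
      exact closure_reach_inter hV hK ⟨hx, hxU, fun hxC => hno x hxC hx⟩
    have h0 : F₂ 0 ∈ C := ⟨0, by simpa using ht0.le, rfl⟩
    exact (reach_subset V K (hUR (hCU h0))).2 h0
  obtain ⟨c, hcC, hc⟩ := hmeet
  obtain ⟨ε, hε, hεU⟩ := hC.exists_thickening_subset_open hUopen hCU
  obtain ⟨y, ⟨F, h1, h2, h3, h4, h5⟩, hcy⟩ := Metric.mem_closure_iff.1 hc ε hε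
  obtain ⟨σ', hσ'0, hσ'1, hKσ⟩ := exists_radius h1 h2 (hK.insert y) (insert_subset h5 h4)
  have hsub : closedBall (0 : E) ((σ' + 1) / 2) ⊆ ball 0 1 :=
    closedBall_subset_ball (by linarith)
  obtain ⟨F₀, g1, g2, g3, g4, g5⟩ := join (σ := (σ' + 1) / 2) (σ' := σ') (by linarith)
    (by linarith) ht0 htr (by linarith) ht' h1 h2 hF₂ hF₂inj
    (by
      rw [Set.disjoint_left]
      exact fun w hwF hwC => (h3 (image_mono hsub hwF)).2 hwC)
    hUopen (fun w hw => (h3 (image_mono hsub hw)).1) (ε := ε)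
    (fun w hw => (ball_subset_thickening hw ε).trans hεU)
    (p := y) (q := c)
    (image_mono (closedBall_subset_closedBall (by linarith)) (hKσ (mem_insert y K))) hcC
    (by rw [dist_comm]; exact hcy)
  exact ⟨F₀, g1, g2, g3, union_subset (((subset_insert y K).trans hKσ).trans g4) g5⟩

end Final

end BallGlue

/-- **Lemma 2.1.** Given two injective holomorphic maps `F₁ : B^m(0,r₁) → U`,
`F₂ : B^m(0,r₂) → U` into a connected open set `U ⊆ ℂ^m` with disjoint images, and
`0 < s < 1`, there is an injective holomorphic map `F₀ : B^m(0,1) → U` whose image contains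
`F₁(B^m(0, s·r₁)) ∪ F₂(B^m(0, s·r₂/32))`. -/
theorem exists_injective_holomorphic_ball_containing_two {m : ℕ}
    (U : Set (EuclideanSpace ℂ (Fin m))) (hUopen : IsOpen U) (hUconn : IsConnected U)
    (r₁ r₂ : ℝ) (hr₁ : 0 < r₁) (hr₂ : 0 < r₂)
    (F₁ F₂ : EuclideanSpace ℂ (Fin m) → EuclideanSpace ℂ (Fin m))
    (hF₁ : DifferentiableOn ℂ F₁ (ball 0 r₁)) (hF₁inj : Set.InjOn F₁ (ball 0 r₁))
    (hF₁U : F₁ '' ball 0 r₁ ⊆ U)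
    (hF₂ : DifferentiableOn ℂ F₂ (ball 0 r₂)) (hF₂inj : Set.InjOn F₂ (ball 0 r₂))
    (hF₂U : F₂ '' ball 0 r₂ ⊆ U)
    (hdisj : Disjoint (F₁ '' ball 0 r₁) (F₂ '' ball 0 r₂))
    (s : ℝ) (hs0 : 0 < s) (hs1 : s < 1) :
    ∃ F₀ : EuclideanSpace ℂ (Fin m) → EuclideanSpace ℂ (Fin m),
      DifferentiableOn ℂ F₀ (ball 0 1) ∧ Set.InjOn F₀ (ball 0 1) ∧
      F₀ '' ball 0 1 ⊆ U ∧
      F₁ '' ball 0 (s * r₁) ∪ F₂ '' ball 0 (s * r₂ / 32) ⊆ F₀ '' ball 0 1 := by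
  have hsr : 0 < s * r₂ := mul_pos hs0 hr₂
  obtain ⟨F₀, h1, h2, h3, h4⟩ := BallGlue.main hUopen hUconn hr₁ hr₂ hF₁ hF₁inj hF₁U hF₂ hF₂inj hF₂U
    hdisj (s₁ := s * r₁) (t := s * r₂) (t' := s * r₂ / 32) (mul_pos hs0 hr₁).le (by nlinarith)
    hsr (by linarith) (by nlinarith)
  exact ⟨F₀, h1, h2, h3, (Set.union_subset_union (Set.image_mono ball_subset_closedBall)
    (Set.image_mono ball_subset_closedBall)).trans h4⟩
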